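/- Suppose α ∈ 𝕋 ∖ ℚ is Diophantine, i.e., there exist C > 0 and τ > 0 such that |α − p/q| ≥ C q^{−τ} for all integers p and all q ∈ ℤ₊. Then for every ω ∈ 𝕋 and every γ ∈ (0, 1/2), the set of γ-Hölder continuous functions f ∈ C^γ(𝕋,ℝ) for which the discrete Schrödinger operator on ℓ²(ℤ) with potential V(n) = f(ω + nα) has pure point spectrum is dense in C^γ(𝕋,ℝ) with respect to the Hölder norm. -/

import Mathlib

open MeasureTheory

noncomputable section

/-- `ψ ∈ ℓ²(ℤ)` is an eigenfunction of the discrete Schrödinger operator with potential `V`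
corresponding to the eigenvalue `E`: `ψ ≠ 0` and `ψ(n+1) + ψ(n-1) + V(n)ψ(n) = Eψ(n)`. -/
def IsEigenfunction (V : ℤ → ℝ) (E : ℝ) (ψ : lp (fun _ : ℤ => ℝ) 2) : Prop :=
  ψ ≠ 0 ∧ ∀ n : ℤ, (ψ : ∀ _ : ℤ, ℝ) (n + 1) + (ψ : ∀ _ : ℤ, ℝ) (n - 1)
    + V n * (ψ : ∀ _ : ℤ, ℝ) n = E * (ψ : ∀ _ : ℤ, ℝ) n

/-- The discrete Schrödinger operator with potential `V` has pure point spectrum: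
its eigenfunctions span a dense subspace of `ℓ²(ℤ)`. -/
def HasPurePointSpectrum (V : ℤ → ℝ) : Prop :=
  (Submodule.span ℝ
    {ψ : lp (fun _ : ℤ => ℝ) 2 | ∃ E : ℝ, IsEigenfunction V E ψ}).topologicalClosure = ⊤

/-- `f : 𝕋 → ℝ` is `γ`-Hölder continuous. -/
def IsHolder (γ : ℝ) (f : AddCircle (1:ℝ) → ℝ) : Prop :=
  ∃ C : ℝ, 0 ≤ C ∧ ∀ x y : AddCircle (1:ℝ), |f x - f y| ≤ C * dist x y ^ γ

/-- The horizontal shear of the plane. -/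
def shear (e : ℝ) (v : ℝ × ℝ) : ℝ × ℝ := (v.1 + e * v.2, v.2)

/-- Rotation of the plane by a quarter turn. -/
def quarter (v : ℝ × ℝ) : ℝ × ℝ := (-v.2, v.1)

lemma measurePreserving_shear (e : ℝ) :
    MeasurePreserving (shear e) (volume : Measure (ℝ × ℝ)) volume := by
  have h : MeasurePreserving (fun v : ℝ × ℝ => (v.1, v.2 + e * v.1))
      ((volume : Measure ℝ).prod volume) ((volume : Measure ℝ).prod volume) := by
    refine MeasurePreserving.skew_product (f := id) (g := fun x y => y + e * x)
      (MeasurePreserving.id _) (by fun_prop) ?_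
    exact Filter.Eventually.of_forall fun a => (measurePreserving_add_right volume (e * a)).map_eq
  have hs : MeasurePreserving (Prod.swap : ℝ × ℝ → ℝ × ℝ)
      ((volume : Measure ℝ).prod volume) ((volume : Measure ℝ).prod volume) :=
    Measure.measurePreserving_swap
  exact hs.comp (h.comp hs)

lemma measurePreserving_quarter :
    MeasurePreserving quarter (volume : Measure (ℝ × ℝ)) volume := by
  have hs : MeasurePreserving (Prod.swap : ℝ × ℝ → ℝ × ℝ)
      ((volume : Measure ℝ).prod volume) ((volume : Measure ℝ).prod volume) :=
    Measure.measurePreserving_swap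
  have h : MeasurePreserving (Prod.map Neg.neg id : ℝ × ℝ → ℝ × ℝ)
      ((volume : Measure ℝ).prod volume) ((volume : Measure ℝ).prod volume) :=
    (Measure.measurePreserving_neg volume).prod (MeasurePreserving.id _)
  exact h.comp hs

/-- Square integrable functions on the plane. -/
abbrev PlaneL2 := Lp ℝ 2 (volume : Measure (ℝ × ℝ))

/-- Composition with a shear. -/
def shearU (e : ℝ) : PlaneL2 →ₗᵢ[ℝ] PlaneL2 :=
  Lp.compMeasurePreservingₗᵢ ℝ (shear e) (measurePreserving_shear e)

/-- Composition with the quarter turn. -/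
def quarterU : PlaneL2 →ₗᵢ[ℝ] PlaneL2 :=
  Lp.compMeasurePreservingₗᵢ ℝ quarter measurePreserving_quarter

lemma coeFn_shearU (e : ℝ) (f : PlaneL2) : shearU e f =ᵐ[volume] f ∘ shear e :=
  Lp.coeFn_compMeasurePreserving f (measurePreserving_shear e)

lemma coeFn_quarterU (f : PlaneL2) : quarterU f =ᵐ[volume] f ∘ quarter :=
  Lp.coeFn_compMeasurePreserving f measurePreserving_quarter

lemma PlaneL2.norm_sq (f : PlaneL2) : ‖f‖ ^ 2 = ∫ v, (f v) ^ 2 := by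
  rw [← real_inner_self_eq_norm_sq, L2.inner_def]
  congr 1; ext v; simp [sq]

lemma PlaneL2.integrable_sq (f : PlaneL2) : Integrable (fun v => (f v) ^ 2) :=
  (Lp.memLp f).integrable_sq

/-- The truncated inverse slope of a vector. -/
def clampSlope (v : ℝ × ℝ) : ℝ := max (-2) (min 2 (v.1 / v.2))

lemma measurable_clampSlope : Measurable clampSlope := by
  unfold clampSlope; fun_prop

lemma abs_clampSlope_le (v : ℝ × ℝ) : |clampSlope v| ≤ 2 := by
  unfold clampSlope
  rw [abs_le]
  exact ⟨le_max_left _ _, max_le (by norm_num) (min_le_left _ _)⟩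

/-- The set of vectors that are closer to the vertical axis. -/
def cone : Set (ℝ × ℝ) := {v | |v.1| ≤ |v.2| ∧ v.2 ≠ 0}

lemma clampSlope_le_shear {e : ℝ} (he : 0 ≤ e) (v : ℝ × ℝ) :
    clampSlope v ≤ clampSlope (shear e v) := by
  unfold clampSlope shear
  rcases eq_or_ne v.2 0 with h | h
  · simp [h]
  · have : v.1 / v.2 ≤ (v.1 + e * v.2) / v.2 := by
      rw [add_div, mul_div_cancel_right₀ _ h]; linarith
    exact max_le_max le_rfl (min_le_min le_rfl this)

lemma clampSlope_shear_of_mem_cone {e : ℝ} (he : 0 ≤ e) (he1 : e ≤ 1) {v : ℝ × ℝ} (hv : v ∈ cone) :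
    clampSlope (shear e v) = clampSlope v + e := by
  obtain ⟨h1, h⟩ := hv
  have h2 : |v.1 / v.2| ≤ 1 := by
    rw [abs_div]; exact div_le_one_of_le₀ h1 (abs_nonneg _)
  rw [abs_le] at h2
  unfold clampSlope shear
  have : (v.1 + e * v.2) / v.2 = v.1 / v.2 + e := by rw [add_div, mul_div_cancel_right₀ _ h]
  simp only [this]
  rw [min_eq_right (by linarith), min_eq_right (by linarith), max_eq_right (by linarith),
    max_eq_right (by linarith)]

lemma measurableSet_cone : MeasurableSet cone := by
  have h1 : MeasurableSet {v : ℝ × ℝ | |v.1| ≤ |v.2|} :=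
    measurableSet_le (by fun_prop) (by fun_prop)
  have h2 : MeasurableSet {v : ℝ × ℝ | v.2 ≠ 0} :=
    (measurableSet_eq_fun (by fun_prop) (by fun_prop)).compl
  exact h1.inter h2

lemma cone_inequality {e t : ℝ} (he : 0 ≤ e) (he1 : e ≤ 1) (ht : 0 < t) (g : PlaneL2) :
    e * ∫ v in cone, (g v) ^ 2 ≤ t * ‖g - shearU e g‖ ^ 2 + 4 / t * ‖g‖ ^ 2 := by
  have hS := measurePreserving_shear e
  set u : PlaneL2 := shearU e g with hu
  have hau : u =ᵐ[volume] g ∘ shear e := coeFn_shearU e g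
  have hnu : ‖u‖ = ‖g‖ := (shearU e).norm_map g
  have hi := PlaneL2.integrable_sq g
  have hiu := PlaneL2.integrable_sq u
  have hid := PlaneL2.integrable_sq (g - u)
  have hG : Integrable (fun v => clampSlope v * (g v) ^ 2) :=
    hi.bdd_mul (c := 2) measurable_clampSlope.aestronglyMeasurable
      (Filter.Eventually.of_forall fun v => by simpa using abs_clampSlope_le v)
  have hGS : Integrable (fun v => clampSlope (shear e v) * (g (shear e v)) ^ 2) :=
    (hS.integrable_comp hG.aestronglyMeasurable).2 hG
  have hGint : ∫ v, clampSlope (shear e v) * (g (shear e v)) ^ 2 =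
        ∫ v, clampSlope v * (g v) ^ 2 := by
    have := integral_map hS.measurable.aemeasurable (f := fun v => clampSlope v * (g v) ^ 2)
      (by rw [hS.map_eq]; exact hG.aestronglyMeasurable)
    rw [hS.map_eq] at this
    exact this.symm
  have key : ∫ v, cone.indicator (fun v => e * (g v) ^ 2) v ≤
      ∫ v, ((clampSlope (shear e v) * (g (shear e v)) ^ 2 - clampSlope v * (g v) ^ 2)
        + t * ((g - u : PlaneL2) v) ^ 2 + (2 / t * (g v) ^ 2 + 2 / t * (u v) ^ 2)) := by
    refine integral_mono_ae ((hi.const_mul e).indicator measurableSet_cone)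
      (((hGS.sub hG).add (hid.const_mul t)).add ((hi.const_mul _).add (hiu.const_mul _))) ?_
    filter_upwards [hau, Lp.coeFn_sub g u] with v hv hv2
    have hw := abs_le.1 (abs_clampSlope_le (shear e v))
    have e1 : cone.indicator (fun v => e * (g v) ^ 2) v
        ≤ (clampSlope (shear e v) - clampSlope v) * (g v) ^ 2 := by
      by_cases hc : v ∈ cone
      · rw [Set.indicator_of_mem hc, clampSlope_shear_of_mem_cone he he1 hc]
        apply le_of_eq; ring
      · rw [Set.indicator_of_notMem hc]
        exact mul_nonneg (sub_nonneg.2 (clampSlope_le_shear he v)) (sq_nonneg _)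
    refine e1.trans ?_
    simp only [Function.comp] at hv
    rw [hv2, Pi.sub_apply, ← hv]
    set a := g v
    set b := u v
    set w := clampSlope (shear e v)
    have h3 : w * (a ^ 2 - b ^ 2) ≤ t * (a - b) ^ 2 + (2 / t * a ^ 2 + 2 / t * b ^ 2) := by
      have h4 : w * (a ^ 2 - b ^ 2) ≤ 2 * |(a - b) * (a + b)| := by
        have : w * (a ^ 2 - b ^ 2) = w * ((a - b) * (a + b)) := by ring
        rw [this]
        calc _ ≤ |w * ((a - b) * (a + b))| := le_abs_self _
          _ = |w| * |(a - b) * (a + b)| := abs_mul _ _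
          _ ≤ _ := mul_le_mul_of_nonneg_right (abs_clampSlope_le _) (abs_nonneg _)
      have h5 : 2 * |(a - b) * (a + b)| ≤ t * (a - b) ^ 2 + 1 / t * (a + b) ^ 2 := by
        rw [abs_mul]
        have h6 : 0 ≤ (t * |a - b| - |a + b|) ^ 2 / t := by positivity
        have h7 : (t * |a - b| - |a + b|) ^ 2 / t
            = t * |a - b| ^ 2 + 1 / t * |a + b| ^ 2 - 2 * (|a - b| * |a + b|) := by
          field_simp; ring
        rw [h7, sq_abs, sq_abs] at h6
        linarith
      have h8 : 1 / t * (a + b) ^ 2 ≤ 2 / t * a ^ 2 + 2 / t * b ^ 2 := by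
        have : 2 / t * a ^ 2 + 2 / t * b ^ 2 - 1 / t * (a + b) ^ 2 = (a - b) ^ 2 / t := by
          field_simp; ring
        have : 0 ≤ (a - b) ^ 2 / t := by positivity
        linarith
      linarith
    linarith
  rw [integral_indicator measurableSet_cone, integral_const_mul] at key
  rw [integral_add, integral_add, integral_sub hGS hG, hGint, sub_self, integral_const_mul,
    integral_add (hi.const_mul _) (hiu.const_mul _), integral_const_mul, integral_const_mul,
    ← PlaneL2.norm_sq, ← PlaneL2.norm_sq, ← PlaneL2.norm_sq, hnu] at key
  · calc _ ≤ _ := key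
      _ = _ := by ring
  · exact hGS.sub hG
  · exact hid.const_mul t
  · exact (hGS.sub hG).add (hid.const_mul t)
  · exact (hi.const_mul _).add (hiu.const_mul _)

/-- The vectors that are closer to the horizontal axis. -/
def coneCompl : Set (ℝ × ℝ) := {v | |v.2| ≤ |v.1| ∧ v.1 ≠ 0}

lemma measurableSet_coneCompl : MeasurableSet coneCompl := by
  have h1 : MeasurableSet {v : ℝ × ℝ | |v.2| ≤ |v.1|} :=
    measurableSet_le (by fun_prop) (by fun_prop)
  have h2 : MeasurableSet {v : ℝ × ℝ | v.1 ≠ 0} :=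
    (measurableSet_eq_fun (by fun_prop) (by fun_prop)).compl
  exact h1.inter h2

lemma setIntegral_cone_quarterU (g : PlaneL2) :
    ∫ v in cone, (quarterU g v) ^ 2 = ∫ v in coneCompl, (g v) ^ 2 := by
  have hJ := measurePreserving_quarter
  rw [← integral_indicator measurableSet_cone, ← integral_indicator measurableSet_coneCompl]
  have hm : AEStronglyMeasurable (coneCompl.indicator fun v => (g v) ^ 2) volume :=
    ((PlaneL2.integrable_sq g).indicator measurableSet_coneCompl).aestronglyMeasurable
  have h := integral_map hJ.measurable.aemeasurable
    (f := coneCompl.indicator fun v => (g v) ^ 2) (by rw [hJ.map_eq]; exact hm)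
  rw [hJ.map_eq] at h
  rw [h]
  refine integral_congr_ae ?_
  filter_upwards [coeFn_quarterU g] with v hv
  have hiff : quarter v ∈ coneCompl ↔ v ∈ cone := by
    simp [quarter, cone, coneCompl]
  by_cases hc : v ∈ cone
  · rw [Set.indicator_of_mem hc, Set.indicator_of_mem (hiff.2 hc), hv]; rfl
  · rw [Set.indicator_of_notMem hc, Set.indicator_of_notMem (fun h => hc (hiff.1 h))]

lemma norm_sq_le_cone_add (g : PlaneL2) :
    ‖g‖ ^ 2 ≤ (∫ v in cone, (g v) ^ 2) + ∫ v in coneCompl, (g v) ^ 2 := by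
  have hi := PlaneL2.integrable_sq g
  rw [PlaneL2.norm_sq, ← integral_indicator measurableSet_cone,
    ← integral_indicator measurableSet_coneCompl,
    ← integral_add (hi.indicator measurableSet_cone) (hi.indicator measurableSet_coneCompl)]
  refine integral_mono_ae hi
    ((hi.indicator measurableSet_cone).add (hi.indicator measurableSet_coneCompl)) ?_
  have h0 : ∀ᵐ v : ℝ × ℝ, v ∈ ({(0, 0)} : Set (ℝ × ℝ))ᶜ := by
    exact compl_mem_ae_iff.2 (measure_singleton _)
  filter_upwards [h0] with v hv
  have hn1 := Set.indicator_nonneg (s := cone) (f := fun v => (g v) ^ 2)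
    (fun _ _ => sq_nonneg _) v
  have hn2 := Set.indicator_nonneg (s := coneCompl) (f := fun v => (g v) ^ 2)
    (fun _ _ => sq_nonneg _) v
  by_cases hc : v ∈ cone
  · rw [Set.indicator_of_mem hc]; linarith
  · have hc' : v ∈ coneCompl := by
      simp only [cone, coneCompl, Set.mem_ofPred_eq, not_and_or, not_le, not_not] at hc ⊢
      rcases hc with h | h
      · exact ⟨h.le, fun h1 => by simp [h1] at h; exact absurd h (not_lt.2 (abs_nonneg _))⟩
      · refine ⟨by simp [h], fun h1 => hv ?_⟩
        exact Prod.ext h1 h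
    rw [Set.indicator_of_mem hc']; linarith

lemma shear_gap {e : ℝ} (he : 0 < e) (he1 : e ≤ 1) (g : PlaneL2) :
    e ^ 2 / 32 * ‖g‖ ^ 2 ≤
      ‖g - shearU e g‖ ^ 2 + ‖quarterU g - shearU e (quarterU g)‖ ^ 2 := by
  have h1 := cone_inequality he.le he1 (t := 16 / e) (by positivity) g
  have h2 := cone_inequality he.le he1 (t := 16 / e) (by positivity) (quarterU g)
  rw [setIntegral_cone_quarterU, quarterU.norm_map] at h2
  have h3 := mul_le_mul_of_nonneg_left (norm_sq_le_cone_add g) he.le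
  set D := ‖g - shearU e g‖ ^ 2
  set D' := ‖quarterU g - shearU e (quarterU g)‖ ^ 2
  set N := ‖g‖ ^ 2
  have h4 : e * N ≤ 16 / e * (D + D') + 2 * (4 / (16 / e) * N) := by linarith
  have h5 : 4 / (16 / e) = e / 4 := by field_simp; norm_num
  rw [h5] at h4
  have h6 : e / 2 * N ≤ 16 / e * (D + D') := by linarith
  have h7 := mul_le_mul_of_nonneg_left h6 (show 0 ≤ e / 16 by positivity)
  have h8 : e / 16 * (16 / e * (D + D')) = D + D' := by field_simp
  have h9 : e / 16 * (e / 2 * N) = e ^ 2 / 32 * N := by ring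
  linarith

/-- The average of the identity and a shear. -/
def shearAvg (l : ℝ) (f : PlaneL2) : PlaneL2 := (2⁻¹ : ℝ) • (f + shearU (-l) f)

lemma shearU_shearU (a b : ℝ) (f : PlaneL2) : shearU a (shearU b f) = shearU (a + b) f := by
  refine Lp.ext ?_
  have h1 := coeFn_shearU a (shearU b f)
  have h2 := (measurePreserving_shear a).quasiMeasurePreserving.ae_eq_comp (coeFn_shearU b f)
  refine (h1.trans h2).trans ((coeFn_shearU (a + b) f).trans ?_).symm
  refine Filter.Eventually.of_forall fun v => ?_
  simp only [Function.comp, shear]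
  congr 2; ring

lemma shearU_zero (f : PlaneL2) : shearU 0 f = f := by
  refine Lp.ext ((coeFn_shearU 0 f).trans ?_)
  refine Filter.Eventually.of_forall fun v => ?_
  simp [Function.comp, shear]

lemma norm_sub_shearU_neg (l : ℝ) (f : PlaneL2) : ‖f - shearU (-l) f‖ = ‖f - shearU l f‖ := by
  rw [← (shearU l).norm_map (f - shearU (-l) f), map_sub, shearU_shearU, add_neg_cancel,
    shearU_zero, norm_sub_rev]

lemma norm_shearAvg_sq (l : ℝ) (f : PlaneL2) :
    ‖shearAvg l f‖ ^ 2 = ‖f‖ ^ 2 - 1 / 4 * ‖f - shearU l f‖ ^ 2 := by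
  rw [← norm_sub_shearU_neg, shearAvg, norm_smul, mul_pow]
  have h := parallelogram_law_with_norm ℝ f (shearU (-l) f)
  rw [(shearU (-l)).norm_map] at h
  have : ‖(2⁻¹ : ℝ)‖ ^ 2 = 1 / 4 := by norm_num
  rw [this]
  linarith

lemma shearU_shearAvg (a l : ℝ) (f : PlaneL2) :
    shearU a (shearAvg l f) = shearAvg l (shearU a f) := by
  simp only [shearAvg, map_smul, map_add, shearU_shearU]
  rw [add_comm a]

lemma shearAvg_sub (l : ℝ) (f g : PlaneL2) :
    shearAvg l (f - g) = shearAvg l f - shearAvg l g := by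
  simp only [shearAvg, map_sub, ← smul_sub]
  congr 1; abel

lemma norm_shearAvg_le (l : ℝ) (f : PlaneL2) : ‖shearAvg l f‖ ≤ ‖f‖ := by
  refine le_of_sq_le_sq ?_ (norm_nonneg _)
  rw [norm_shearAvg_sq]
  have := sq_nonneg ‖f - shearU l f‖
  linarith

lemma norm_shearAvg_quarterU_shearAvg {l : ℝ} (hl : 0 < l) (hl1 : l ≤ 1) (f : PlaneL2) :
    (1 + l ^ 2 / 128) * ‖shearAvg l (quarterU (shearAvg l f))‖ ^ 2 ≤ ‖f‖ ^ 2 := by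
  set g := shearAvg l f with hg
  have h1 := shear_gap hl hl1 g
  have h2 := norm_shearAvg_sq l (quarterU g)
  have h3 := norm_shearAvg_sq l f
  rw [← hg] at h3
  rw [quarterU.norm_map] at h2
  have h4 : ‖g - shearU l g‖ ≤ ‖f - shearU l f‖ := by
    rw [hg, shearU_shearAvg, ← shearAvg_sub]
    exact norm_shearAvg_le _ _
  have h5 : ‖g - shearU l g‖ ^ 2 ≤ ‖f - shearU l f‖ ^ 2 := by gcongr
  have h6 : ‖shearAvg l (quarterU g)‖ ^ 2 ≤ ‖g‖ ^ 2 := by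
    rw [h2]
    have := sq_nonneg ‖quarterU g - shearU l (quarterU g)‖
    linarith
  have h7 := mul_le_mul_of_nonneg_left h6 (show 0 ≤ l ^ 2 / 128 by positivity)
  have h8 : l ^ 2 / 128 * ‖g‖ ^ 2 = 1 / 4 * (l ^ 2 / 32 * ‖g‖ ^ 2) := by ring
  linarith

/-- Composition with one step of the transfer map `(x, y) ↦ (e x - y, x)`. -/
def stepU (e : ℝ) : PlaneL2 →ₗ[ℝ] PlaneL2 := (quarterU.comp (shearU e)).toLinearMap

lemma stepU_apply (e : ℝ) (f : PlaneL2) : stepU e f = quarterU (shearU e f) := rfl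

/-- Composition with a product of transfer maps. -/
def transU : (ℕ → ℝ) → ℕ → PlaneL2 → PlaneL2
  | _, 0, f => f
  | e, n + 1, f => stepU (e 0) (transU (fun i => e (i + 1)) n f)

/-- The average over independent bits of the composition with a product of transfer maps. -/
def avgTransU (l : ℝ) : (ℕ → ℝ) → ℕ → PlaneL2 → PlaneL2
  | _, 0, f => f
  | e, n + 1, f => (2⁻¹ : ℝ) • (stepU (e 0) (avgTransU l (fun i => e (i + 1)) n f)
      + stepU (e 0 - l) (avgTransU l (fun i => e (i + 1)) n f))

lemma avg_stepU (l e : ℝ) (f : PlaneL2) :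
    (2⁻¹ : ℝ) • (stepU e f + stepU (e - l) f) = quarterU (shearAvg l (shearU e f)) := by
  simp only [stepU_apply, shearAvg, map_smul, map_add, shearU_shearU]
  rw [neg_add_eq_sub]

lemma norm_avgTransU {l : ℝ} (hl : 0 < l) (hl1 : l ≤ 1) (k : ℕ) :
    ∀ (e : ℕ → ℝ) (f : PlaneL2),
      (1 + l ^ 2 / 128) ^ k * ‖avgTransU l e (2 * k) f‖ ^ 2 ≤ ‖f‖ ^ 2 := by
  induction k with
  | zero => intro e f; simp [avgTransU]
  | succ k ih =>
    intro e f
    rw [show 2 * (k + 1) = (2 * k) + 1 + 1 by ring, avgTransU, avg_stepU, avgTransU, avg_stepU,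
      quarterU.norm_map, ← shearU_shearAvg (e 0)]
    set F := avgTransU l (fun i => e (i + 1 + 1)) (2 * k) f
    rw [(shearU (e 0)).norm_map]
    have h1 := norm_shearAvg_quarterU_shearAvg hl hl1 (shearU (e (0 + 1)) F)
    rw [(shearU (e (0 + 1))).norm_map] at h1
    have h2 := ih (fun i => e (i + 1 + 1)) f
    calc _ = (1 + l ^ 2 / 128) ^ k * ((1 + l ^ 2 / 128)
          * ‖shearAvg l (quarterU (shearAvg l (shearU (e (0 + 1)) F)))‖ ^ 2) := by ring
      _ ≤ (1 + l ^ 2 / 128) ^ k * ‖F‖ ^ 2 := by gcongr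
      _ ≤ _ := h2

lemma exists_bits_le {ι : Type*} (s : Finset ι) (l : ℝ) (f : PlaneL2) (n : ℕ) :
    ∀ (e : ι → ℕ → ℝ) (L : ι → PlaneL2 →ₗ[ℝ] ℝ), ∃ b : ℕ → ℝ, (∀ i, b i = 0 ∨ b i = 1) ∧
      ∑ i ∈ s, L i (transU (fun m => e i m - l * b m) n f) ≤
        ∑ i ∈ s, L i (avgTransU l (e i) n f) := by
  induction n with
  | zero => intro e L; exact ⟨fun _ => 0, fun _ => Or.inl rfl, by simp [transU, avgTransU]⟩
  | succ n ih =>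
    intro e L
    have hx : ∃ c : ℝ, (c = 0 ∨ c = 1) ∧
        ∑ i ∈ s, L i (stepU (e i 0 - l * c) (avgTransU l (fun m => e i (m + 1)) n f)) ≤
          ∑ i ∈ s, L i (avgTransU l (e i) (n + 1) f) := by
      have h : ∑ i ∈ s, L i (avgTransU l (e i) (n + 1) f)
          = 2⁻¹ * (∑ i ∈ s, L i (stepU (e i 0) (avgTransU l (fun m => e i (m + 1)) n f))
            + ∑ i ∈ s, L i (stepU (e i 0 - l) (avgTransU l (fun m => e i (m + 1)) n f))) := by
        simp only [avgTransU, map_smul, map_add, smul_eq_mul, ← Finset.mul_sum,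
          Finset.sum_add_distrib]
      rw [h]
      rcases le_total
        (∑ i ∈ s, L i (stepU (e i 0) (avgTransU l (fun m => e i (m + 1)) n f)))
        (∑ i ∈ s, L i (stepU (e i 0 - l) (avgTransU l (fun m => e i (m + 1)) n f))) with h' | h'
      · exact ⟨0, Or.inl rfl, by simp only [mul_zero, sub_zero]; linarith⟩
      · exact ⟨1, Or.inr rfl, by simp only [mul_one]; linarith⟩
    obtain ⟨c, hc, hcle⟩ := hx
    obtain ⟨b, hb, hble⟩ := ih (fun i m => e i (m + 1))
      (fun i => (L i).comp (stepU (e i 0 - l * c)))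
    refine ⟨fun m => Nat.casesOn m c b, fun i => ?_, ?_⟩
    · cases i with
      | zero => exact hc
      | succ i => exact hb i
    · exact hble.trans hcle

/-- A product of transfer maps. -/
def transfer : (ℕ → ℝ) → ℕ → ℝ × ℝ → ℝ × ℝ
  | _, 0, v => v
  | e, n + 1, v => transfer (fun i => e (i + 1)) n (shear (e 0) (quarter v))

lemma transfer_smul_add (n : ℕ) : ∀ (e : ℕ → ℝ) (a b : ℝ) (v w : ℝ × ℝ),
    transfer e n (a • v + b • w) = a • transfer e n v + b • transfer e n w := by
  induction n with
  | zero => intro e a b v w; rfl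
  | succ n ih =>
    intro e a b v w
    simp only [transfer, ← ih]
    congr 1
    ext
    · simp only [shear, quarter, Prod.smul_fst, Prod.smul_snd, Prod.fst_add, Prod.snd_add,
      smul_eq_mul]
      ring
    · rfl

lemma measurable_transfer (n : ℕ) : ∀ e : ℕ → ℝ, Measurable (transfer e n) := by
  induction n with
  | zero => intro e; exact measurable_id
  | succ n ih =>
    intro e
    exact (ih _).comp ((measurePreserving_shear (e 0)).measurable.comp
      measurePreserving_quarter.measurable)

lemma coeFn_transU (f : PlaneL2) (n : ℕ) :
    ∀ e : ℕ → ℝ, transU e n f =ᵐ[volume] f ∘ transfer e n := by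
  induction n with
  | zero => intro e; exact Filter.EventuallyEq.rfl
  | succ n ih =>
    intro e
    simp only [transU, stepU_apply]
    refine (coeFn_quarterU _).trans ?_
    have h1 := (coeFn_shearU (e 0) (transU (fun i => e (i + 1)) n f)).trans
      ((measurePreserving_shear (e 0)).quasiMeasurePreserving.ae_eq_comp
        (ih (fun i => e (i + 1))))
    exact measurePreserving_quarter.quasiMeasurePreserving.ae_eq_comp h1

/-- The closed square of side length `2 r` centred at the origin. -/
def square (r : ℝ) : Set (ℝ × ℝ) := Set.Icc (-r) r ×ˢ Set.Icc (-r) r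

lemma measurableSet_square (r : ℝ) : MeasurableSet (square r) :=
  measurableSet_Icc.prod measurableSet_Icc

lemma volume_square (r : ℝ) (hr : 0 ≤ r) : volume (square r) = ENNReal.ofReal (4 * r ^ 2) := by
  rw [square, Measure.volume_eq_prod, Measure.prod_prod, Real.volume_Icc,
    ← ENNReal.ofReal_mul (by linarith)]
  congr 1; ring

/-- The indicator function of the square of side length `2`. -/
def squareInd : PlaneL2 :=
  indicatorConstLp 2 (measurableSet_square 1) (by rw [volume_square _ zero_le_one]; simp) 1

lemma norm_squareInd_sq : ‖squareInd‖ ^ 2 = 4 := by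
  rw [squareInd, norm_indicatorConstLp (by norm_num) (by norm_num), measureReal_def,
    volume_square _ zero_le_one]
  rw [ENNReal.toReal_ofReal (by norm_num)]
  simp only [norm_one, one_mul, one_pow, mul_one, ENNReal.toReal_ofNat]
  rw [← Real.sqrt_eq_rpow, Real.sq_sqrt (by norm_num)]

lemma coeFn_squareInd : squareInd =ᵐ[volume] (square 1).indicator fun _ => (1 : ℝ) :=
  indicatorConstLp_coeFn

lemma inner_squareInd_transU (e : ℕ → ℝ) (n : ℕ) :
    0 ≤ inner ℝ squareInd (transU e n squareInd) ∧
    ∀ r : ℝ, 0 ≤ r → square r ⊆ square 1 ∩ transfer e n ⁻¹' square 1 →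
      4 * r ^ 2 ≤ inner ℝ squareInd (transU e n squareInd) := by
  set A : Set (ℝ × ℝ) := square 1 ∩ transfer e n ⁻¹' square 1 with hA
  have hAm : MeasurableSet A :=
    (measurableSet_square 1).inter (measurable_transfer n e (measurableSet_square 1))
  have hfin : volume A ≠ ⊤ := by
    refine ne_top_of_le_ne_top ?_ (measure_mono Set.inter_subset_left)
    rw [volume_square _ zero_le_one]; simp
  have hin : inner ℝ squareInd (transU e n squareInd) = (volume A).toReal := by
    rw [L2.inner_def]
    have : ∀ᵐ v : ℝ × ℝ, inner ℝ (squareInd v) (transU e n squareInd v)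
        = A.indicator (fun _ => (1 : ℝ)) v := by
      have h2 : (fun v => transU e n squareInd v) =ᵐ[volume]
          fun v => (square 1).indicator (fun _ => (1 : ℝ)) (transfer e n v) := by
        refine (coeFn_transU squareInd n e).trans ?_
        have hq : Measure.QuasiMeasurePreserving (transfer e n) volume volume := by
          clear hfin hAm hA A
          induction n generalizing e with
          | zero => exact Measure.QuasiMeasurePreserving.id _
          | succ n ih =>
            exact (ih (fun i => e (i + 1))).comp
              ((measurePreserving_shear (e 0)).quasiMeasurePreserving.comp
                measurePreserving_quarter.quasiMeasurePreserving)
        exact hq.ae_eq_comp coeFn_squareInd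
      filter_upwards [coeFn_squareInd, h2] with v h1 h2
      rw [h1, h2, hA]
      by_cases hv : v ∈ square 1 <;> by_cases hv' : transfer e n v ∈ square 1 <;>
        simp [Set.indicator, hv, hv']
    rw [integral_congr_ae this, integral_indicator hAm]
    simp [measureReal_def]
  rw [hin]
  refine ⟨ENNReal.toReal_nonneg, fun r hr hsub => ?_⟩
  have h1 := ENNReal.toReal_mono hfin (measure_mono hsub)
  rwa [volume_square _ hr, ENNReal.toReal_ofReal (by positivity)] at h1

lemma square_subset_of_entries {e : ℕ → ℝ} {n : ℕ} {β : ℝ} (hβ : 1 ≤ β)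
    (h : |(transfer e n (1, 0)).1| < β ∧ |(transfer e n (1, 0)).2| < β ∧
      |(transfer e n (0, 1)).1| < β ∧ |(transfer e n (0, 1)).2| < β) :
    square (1 / (2 * β)) ⊆ square 1 ∩ transfer e n ⁻¹' square 1 := by
  have hb : 0 < β := by linarith
  have hr : 1 / (2 * β) ≤ 1 := by
    rw [div_le_one (by linarith)]; linarith
  rintro ⟨x, y⟩ ⟨⟨hx1, hx2⟩, hy1, hy2⟩
  simp only at hx1 hx2 hy1 hy2
  have hx : |x| ≤ 1 / (2 * β) := abs_le.2 ⟨hx1, hx2⟩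
  have hy : |y| ≤ 1 / (2 * β) := abs_le.2 ⟨hy1, hy2⟩
  have aux : ∀ p q : ℝ, |p| < β → |q| < β → |x * p + y * q| ≤ 1 := by
    intro p q hp hq
    calc |x * p + y * q| ≤ |x| * |p| + |y| * |q| := by
          rw [← abs_mul, ← abs_mul]; exact abs_add_le _ _
      _ ≤ 1 / (2 * β) * β + 1 / (2 * β) * β := by gcongr
      _ = 1 := by field_simp; norm_num
  have hv : ((x, y) : ℝ × ℝ) = x • ((1, 0) : ℝ × ℝ) + y • ((0, 1) : ℝ × ℝ) := by
    ext <;> simp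
  refine ⟨⟨⟨by simp only; linarith, by simp only; linarith⟩,
    by simp only; linarith, by simp only; linarith⟩, ?_⟩
  show transfer e n (x, y) ∈ square 1
  rw [hv, transfer_smul_add]
  exact ⟨abs_le.1 (aux _ _ h.1 h.2.2.1), abs_le.1 (aux _ _ h.2.1 h.2.2.2)⟩

/-- For a finite family of energies, bits can be chosen such that all transfer matrices have a
large entry. -/
lemma exists_bits_large {ι : Type*} (s : Finset ι) (e : ι → ℕ → ℝ) {l β : ℝ} (hl : 0 < l)
    (hl1 : l ≤ 1) (hβ : 1 ≤ β) (k : ℕ)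
    (hk : (s.card * 4 * β ^ 2) ^ 2 < (1 + l ^ 2 / 128) ^ k) :
    ∃ b : ℕ → ℝ, (∀ i, b i = 0 ∨ b i = 1) ∧ ∀ i ∈ s, ∃ v : ℝ × ℝ, (v = (1, 0) ∨ v = (0, 1)) ∧
      (β ≤ |(transfer (fun m => e i m - l * b m) (2 * k) v).1| ∨
        β ≤ |(transfer (fun m => e i m - l * b m) (2 * k) v).2|) := by
  obtain ⟨b, hb, hle⟩ := exists_bits_le s l squareInd (2 * k) e
    (fun _ => (innerSL ℝ squareInd).toLinearMap)
  refine ⟨b, hb, fun i hi => ?_⟩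
  by_contra hcon
  have hb0 : 0 < β := by linarith
  have hsmall : |(transfer (fun m => e i m - l * b m) (2 * k) (1, 0)).1| < β ∧
      |(transfer (fun m => e i m - l * b m) (2 * k) (1, 0)).2| < β ∧
      |(transfer (fun m => e i m - l * b m) (2 * k) (0, 1)).1| < β ∧
      |(transfer (fun m => e i m - l * b m) (2 * k) (0, 1)).2| < β := by
    refine ⟨?_, ?_, ?_, ?_⟩ <;> by_contra h <;> rw [not_lt] at h
    · exact hcon ⟨_, Or.inl rfl, Or.inl h⟩
    · exact hcon ⟨_, Or.inl rfl, Or.inr h⟩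
    · exact hcon ⟨_, Or.inr rfl, Or.inl h⟩
    · exact hcon ⟨_, Or.inr rfl, Or.inr h⟩
  have h1 := (inner_squareInd_transU (fun m => e i m - l * b m) (2 * k)).2 (1 / (2 * β))
    (by positivity) (square_subset_of_entries hβ hsmall)
  have h2 : inner ℝ squareInd (transU (fun m => e i m - l * b m) (2 * k) squareInd) ≤
      ∑ i ∈ s, inner ℝ squareInd (transU (fun m => e i m - l * b m) (2 * k) squareInd) :=
    Finset.single_le_sum (f := fun i =>
      inner ℝ squareInd (transU (fun m => e i m - l * b m) (2 * k) squareInd))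
      (fun i _ => (inner_squareInd_transU _ _).1) hi
  have h3 : ∀ i ∈ s, inner ℝ squareInd (avgTransU l (e i) (2 * k) squareInd) ≤
      4 / Real.sqrt ((1 + l ^ 2 / 128) ^ k) := by
    intro i _
    have hp : 0 < (1 + l ^ 2 / 128) ^ k := by positivity
    have h4 := norm_avgTransU hl hl1 k (e i) squareInd
    have h5 : ‖avgTransU l (e i) (2 * k) squareInd‖ ≤
        ‖squareInd‖ / Real.sqrt ((1 + l ^ 2 / 128) ^ k) := by
      rw [le_div_iff₀ (Real.sqrt_pos.2 hp)]
      refine le_of_sq_le_sq ?_ (norm_nonneg _)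
      rw [mul_pow, Real.sq_sqrt hp.le]
      linarith
    calc _ ≤ ‖squareInd‖ * ‖avgTransU l (e i) (2 * k) squareInd‖ := real_inner_le_norm _ _
      _ ≤ ‖squareInd‖ * (‖squareInd‖ / Real.sqrt ((1 + l ^ 2 / 128) ^ k)) := by gcongr
      _ = _ := by rw [← mul_div_assoc, ← sq, norm_squareInd_sq]
  have h4 := (h1.trans h2).trans (hle.trans (Finset.sum_le_sum h3))
  rw [Finset.sum_const, nsmul_eq_mul] at h4
  have h5 : s.card * 4 * β ^ 2 < Real.sqrt ((1 + l ^ 2 / 128) ^ k) :=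
    Real.lt_sqrt_of_sq_lt hk
  have h6 : 0 < Real.sqrt ((1 + l ^ 2 / 128) ^ k) := lt_of_le_of_lt (by positivity) h5
  have h7 : 4 * (1 / (2 * β)) ^ 2 = 1 / β ^ 2 := by field_simp; norm_num
  rw [h7, ← mul_div_assoc, div_le_div_iff₀ (by positivity) h6, one_mul] at h4
  linarith

/-- The discrete Schrödinger operator acting on sequences with values in a real vector space. -/
def schr {F : Type*} [AddCommGroup F] [Module ℝ F] (V : ℤ → ℝ) (x : ℤ → F) (n : ℤ) : F :=
  x (n + 1) + x (n - 1) + V n • x n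

/-- The sequence `w` solves the difference equation `H w = E w`. -/
def IsSol (V : ℤ → ℝ) (E : ℝ) (w : ℤ → ℝ) : Prop := ∀ n, schr V w n = E * w n

lemma exists_isSol (V : ℤ → ℝ) (E : ℝ) (p : ℤ) (c d : ℝ) :
    ∃ w, IsSol V E w ∧ w p = c ∧ w (p - 1) = d := by
  let R : ℕ → ℝ × ℝ := fun k => Nat.rec (c, d)
    (fun k v => ((E - V (p + k)) * v.1 - v.2, v.1)) k
  let L : ℕ → ℝ × ℝ := fun k => Nat.rec (c, d)
    (fun k v => (v.2, (E - V (p - 1 - k)) * v.2 - v.1)) k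
  have hR : ∀ k, R (k + 1) = ((E - V (p + k)) * (R k).1 - (R k).2, (R k).1) := fun k => rfl
  have hL : ∀ k, L (k + 1) = ((L k).2, (E - V (p - 1 - k)) * (L k).2 - (L k).1) := fun k => rfl
  let w : ℤ → ℝ := fun n => if p ≤ n then (R (n - p).toNat).1 else (L (p - n).toNat).1
  have hw1 : ∀ k : ℕ, w (p + k) = (R k).1 := by
    intro k
    simp only [w]
    rw [if_pos (by omega)]
    congr 2; omega
  have hw2 : ∀ k : ℕ, w (p - k) = (L k).1 := by
    intro k
    simp only [w]
    rcases Nat.eq_zero_or_pos k with rfl | hk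
    · simp; rfl
    · rw [if_neg (by omega)]
      congr 2; omega
  refine ⟨w, fun n => ?_, (congrArg w (by simp)).trans (hw1 0), hw2 1⟩
  simp only [schr, smul_eq_mul]
  rcases le_or_gt p n with h | h
  · obtain ⟨k, rfl⟩ := Int.le.dest h
    rcases k with _ | k
    · have h1 := hw1 0
      have h2 := hw1 1
      have h3 := hw2 1
      simp only [Nat.cast_zero, Nat.cast_one, add_zero] at h1 h2 h3 ⊢
      rw [h1, h2, h3, show (1 : ℕ) = 0 + 1 from rfl, hR, hL]
      simp only [Nat.cast_zero, add_zero]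
      show (E - V p) * c - d + d + V p * c = E * c
      ring
    · have h1 := hw1 (k + 1)
      have h2 := hw1 (k + 1 + 1)
      have h3 := hw1 k
      rw [show p + ((k + 1 : ℕ) : ℤ) + 1 = p + ((k + 1 + 1 : ℕ) : ℤ) by push_cast; ring,
        show p + ((k + 1 : ℕ) : ℤ) - 1 = p + (k : ℤ) by push_cast; ring, h1, h2, h3,
        hR (k + 1), hR k]
      push_cast
      ring
  · obtain ⟨k, hk⟩ := Int.le.dest (show n + 1 ≤ p by omega)
    obtain rfl : n = p - ((k + 1 : ℕ) : ℤ) := by push_cast; omega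
    have h1 := hw2 (k + 1)
    have h2 := hw2 (k + 1 + 1)
    have h3 := hw2 k
    rw [show p - ((k + 1 : ℕ) : ℤ) + 1 = p - (k : ℤ) by push_cast; ring,
      show p - ((k + 1 : ℕ) : ℤ) - 1 = p - ((k + 1 + 1 : ℕ) : ℤ) by push_cast; ring, h1, h2, h3,
      hL (k + 1), hL k, show p - ((k + 1 : ℕ) : ℤ) = p - 1 - k by push_cast; ring]
    push_cast
    ring

lemma transfer_isSol {V : ℤ → ℝ} {E : ℝ} {w : ℤ → ℝ} (hw : IsSol V E w) (n : ℕ) :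
    ∀ a : ℤ, transfer (fun i => E - V (a + i)) n (w a, w (a - 1)) = (w (a + n), w (a + n - 1)) := by
  induction n with
  | zero => intro a; simp [transfer]
  | succ n ih =>
    intro a
    have h := ih (a + 1)
    simp only [transfer]
    have h1 : shear (E - V (a + (0 : ℕ))) (quarter (w a, w (a - 1))) =
        (w (a + 1), w (a + 1 - 1)) := by
      have := hw a
      simp only [schr, smul_eq_mul] at this
      simp only [shear, quarter, Nat.cast_zero, add_zero, add_sub_cancel_right]
      ext
      · simp only; linarith
      · rfl
    rw [h1]
    have h2 : (fun i : ℕ => E - V (a + ((i + 1 : ℕ) : ℤ))) = fun i : ℕ => E - V (a + 1 + i) := by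
      ext i; push_cast; congr 2; ring
    rw [h2, h]
    push_cast
    congr 2 <;> ring

lemma transfer_congr (n : ℕ) : ∀ {e e' : ℕ → ℝ} (v : ℝ × ℝ), (∀ i < n, e i = e' i) →
    transfer e n v = transfer e' n v := by
  induction n with
  | zero => intro e e' v _; rfl
  | succ n ih =>
    intro e e' v h
    simp only [transfer]
    rw [h 0 (by omega), ih _ (fun i hi => h (i + 1) (by omega))]

/-- The Dirichlet solution from the right end `q` of an interval `[p, q]` is large at
the left end. -/
def Barrier (U : ℤ → ℝ) (E β : ℝ) (p q : ℤ) : Prop :=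
  ∃ w, IsSol U E w ∧ w q = 1 ∧ w (q + 1) = 0 ∧ β ≤ |w (p - 1)|

lemma IsSol.wronskian_step {V : ℤ → ℝ} {E : ℝ} {w u : ℤ → ℝ} (hw : IsSol V E w)
    (hu : IsSol V E u) (n : ℤ) :
    w (n + 1) * u n - w n * u (n + 1) = w n * u (n - 1) - w (n - 1) * u n := by
  have h1 := hw n
  have h2 := hu n
  simp only [schr, smul_eq_mul] at h1 h2
  linear_combination u n * h1 - w n * h2

lemma IsSol.wronskian {V : ℤ → ℝ} {E : ℝ} {w u : ℤ → ℝ} (hw : IsSol V E w)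
    (hu : IsSol V E u) (p : ℤ) (k : ℕ) :
    w (p + k) * u (p + k - 1) - w (p + k - 1) * u (p + k) = w p * u (p - 1) - w (p - 1) * u p := by
  induction k with
  | zero => simp
  | succ k ih =>
    rw [← ih, ← hw.wronskian_step hu (p + k)]
    push_cast
    ring_nf

lemma barrier_of_isSol {U : ℤ → ℝ} {E β : ℝ} {p q : ℤ} (hpq : p ≤ q + 1) {w : ℤ → ℝ}
    (hw : IsSol U E w) (h1 : w p = 1) (h0 : w (p - 1) = 0) (hβ : β ≤ |w (q + 1)|) :
    Barrier U E β p q := by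
  obtain ⟨u, hu, hu0, hu1⟩ := exists_isSol U E (q + 1) 0 1
  rw [add_sub_cancel_right] at hu1
  refine ⟨u, hu, hu1, hu0, ?_⟩
  obtain ⟨k, hk⟩ := Int.le.dest hpq
  have := hw.wronskian hu p k
  rw [hk, add_sub_cancel_right, hu0, hu1, h1, h0] at this
  have h2 : u (p - 1) = w (q + 1) := by linarith
  rwa [h2]

lemma exists_barrier_bits (S : Finset ℝ) (V : ℤ → ℝ) (a : ℤ) {l β : ℝ} (hl : 0 < l)
    (hl1 : l ≤ 1) (hβ : 1 ≤ β) (k : ℕ) (hk0 : 0 < k)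
    (hk : (S.card * 4 * β ^ 2) ^ 2 < (1 + l ^ 2 / 128) ^ k) :
    ∃ b : ℕ → ℝ, (∀ i, b i = 0 ∨ b i = 1) ∧ ∀ U : ℤ → ℝ,
      (∀ i : ℕ, i < 2 * k → U (a + i) = V (a + i) + l * b i) → ∀ E ∈ S,
      ∃ p q : ℤ, (p = a ∨ p = a + 1) ∧ (q = a + 2 * k - 2 ∨ q = a + 2 * k - 1) ∧
        Barrier U E β p q := by
  obtain ⟨b, hb, h⟩ := exists_bits_large S (fun E i => E - V (a + i)) hl hl1 hβ k hk
  refine ⟨b, hb, fun U hU E hE => ?_⟩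
  obtain ⟨v, hv, hlarge⟩ := h E hE
  have hc : transfer (fun m => E - V (a + m) - l * b m) (2 * k) v =
      transfer (fun m => E - U (a + m)) (2 * k) v :=
    transfer_congr _ _ fun i hi => by rw [hU i hi]; ring
  rw [hc] at hlarge
  rcases hv with rfl | rfl
  · obtain ⟨w, hw, h1, h0⟩ := exists_isSol U E a 1 0
    have ht := transfer_isSol hw (2 * k) a
    rw [h1, h0] at ht
    rw [ht] at hlarge
    push_cast at hlarge
    rcases hlarge with hl | hl
    · exact ⟨a, a + 2 * k - 1, Or.inl rfl, Or.inr rfl, barrier_of_isSol (by omega) hw h1 h0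
        (by rwa [sub_add_cancel])⟩
    · exact ⟨a, a + 2 * k - 2, Or.inl rfl, Or.inl rfl, barrier_of_isSol (by omega) hw h1 h0
        (by rwa [show a + 2 * (k : ℤ) - 2 + 1 = a + 2 * k - 1 by ring])⟩
  · obtain ⟨w, hw, h1, h0⟩ := exists_isSol U E (a + 1) 1 0
    rw [add_sub_cancel_right] at h0
    have hm : w (a - 1) = -1 := by
      have := hw a
      simp only [schr, smul_eq_mul, h1, h0] at this
      linarith
    have ht := transfer_isSol hw (2 * k) a
    have hv : (w a, w (a - 1)) = (-1 : ℝ) • ((0, 1) : ℝ × ℝ) + (0 : ℝ) • ((0, 1) : ℝ × ℝ) := by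
      rw [h0, hm]; ext <;> simp
    rw [hv, transfer_smul_add, zero_smul, add_zero, neg_one_smul, neg_eq_iff_eq_neg] at ht
    rw [ht] at hlarge
    push_cast at hlarge
    simp only [Prod.neg_mk, abs_neg] at hlarge
    rcases hlarge with hl | hl
    · exact ⟨a + 1, a + 2 * k - 1, Or.inr rfl, Or.inr rfl, barrier_of_isSol (by omega) hw h1
        (by rwa [add_sub_cancel_right]) (by rwa [sub_add_cancel])⟩
    · exact ⟨a + 1, a + 2 * k - 2, Or.inr rfl, Or.inl rfl, barrier_of_isSol (by omega) hw h1
        (by rwa [add_sub_cancel_right])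
        (by rwa [show a + 2 * (k : ℤ) - 2 + 1 = a + 2 * k - 1 by ring])⟩

/-- An orthonormal eigenbasis for the restriction of the Schrödinger operator to a box. -/
structure BoxEigen (V : ℤ → ℝ) (a b : ℤ) where
  /-- The eigenvalues. -/
  E : Finset.Icc a b → ℝ
  /-- The eigenvectors, extended by zero. -/
  φ : Finset.Icc a b → ℤ → ℝ
  supp : ∀ k, ∀ n ∉ Finset.Icc a b, φ k n = 0
  eig : ∀ k, ∀ n ∈ Finset.Icc a b, schr V (φ k) n = E k * φ k n
  orth : ∀ k k', ∑ n ∈ Finset.Icc a b, φ k n * φ k' n = if k = k' then 1 else 0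
  compl : ∀ n ∈ Finset.Icc a b, ∀ n' ∈ Finset.Icc a b,
    ∑ k, φ k n * φ k n' = if n = n' then 1 else 0

lemma exists_boxEigen (V : ℤ → ℝ) (a b : ℤ) : Nonempty (BoxEigen V a b) := by
  classical
  let A : Matrix (Finset.Icc a b) (Finset.Icc a b) ℝ := Matrix.of fun i j =>
    (if (j : ℤ) = i + 1 then 1 else 0) + (if (j : ℤ) = i - 1 then 1 else 0) +
      (if (j : ℤ) = i then V i else 0)
  have hA : A.IsHermitian := by
    ext i j
    simp only [A, Matrix.conjTranspose_apply, Matrix.of_apply, star_trivial]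
    have h1 : ((i : ℤ) = j + 1) ↔ ((j : ℤ) = i - 1) := by omega
    have h2 : ((i : ℤ) = j - 1) ↔ ((j : ℤ) = i + 1) := by omega
    have h3 : ((i : ℤ) = j) ↔ ((j : ℤ) = i) := by omega
    simp only [h1, h2, h3]
    rw [add_comm (if (j : ℤ) = i - 1 then (1 : ℝ) else 0)]
    congr 1
    split_ifs with h
    · rw [h]
    · rfl
  let U : Matrix (Finset.Icc a b) (Finset.Icc a b) ℝ := hA.eigenvectorUnitary
  have hU1 : star U * U = 1 := Unitary.coe_star_mul_self hA.eigenvectorUnitary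
  have hU2 : U * star U = 1 := Unitary.coe_mul_star_self hA.eigenvectorUnitary
  have hUe : ∀ k, A.mulVec (fun i => U i k) = fun i => hA.eigenvalues k * U i k := by
    intro k
    have := hA.mulVec_eigenvectorBasis k
    ext i
    have h := congrFun this i
    simpa [U, Matrix.IsHermitian.eigenvectorUnitary_apply] using h
  let φ : Finset.Icc a b → ℤ → ℝ := fun k n => if h : n ∈ Finset.Icc a b then U ⟨n, h⟩ k else 0
  have hφ : ∀ k (i : Finset.Icc a b), φ k i = U i k := fun k i => by
    simp only [φ]; rw [dif_pos i.2]
  refine ⟨⟨hA.eigenvalues, φ, ?_, ?_, ?_, ?_⟩⟩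
  · intro k n hn
    simp only [φ]; rw [dif_neg hn]
  · intro k n hn
    have h := congrFun (hUe k) ⟨n, hn⟩
    rw [hφ k ⟨n, hn⟩, ← h]
    have hs : ∀ (g : ℤ → ℝ), (∀ m ∉ Finset.Icc a b, g m = 0) → ∀ m c, 
        ∑ j : Finset.Icc a b, (if (j : ℤ) = m then c else 0) * g j = c * g m := by
      intro g hg m c
      rw [Finset.sum_coe_sort (Finset.Icc a b) (fun j => (if j = m then c else 0) * g j)]
      simp only [ite_mul, zero_mul, Finset.sum_ite_eq']
      split_ifs with h
      · rfl
      · rw [hg m h, mul_zero]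
    have hsupp : ∀ m ∉ Finset.Icc a b, φ k m = 0 := fun m hm => by simp only [φ]; rw [dif_neg hm]
    simp only [Matrix.mulVec, dotProduct, A, Matrix.of_apply, ← hφ k, add_mul,
      Finset.sum_add_distrib]
    rw [hs _ hsupp, hs _ hsupp, hs _ hsupp]
    simp [schr]
  · intro k k'
    rw [← Finset.sum_coe_sort (Finset.Icc a b) (fun n => φ k n * φ k' n)]
    have := congrFun (congrFun hU1 k) k'
    simp only [Matrix.mul_apply, Matrix.star_apply, star_trivial, Matrix.one_apply] at this
    simpa only [hφ] using this
  · intro n hn n' hn'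
    have := congrFun (congrFun hU2 ⟨n, hn⟩) ⟨n', hn'⟩
    simp only [Matrix.mul_apply, Matrix.star_apply, star_trivial, Matrix.one_apply,
      Subtype.mk.injEq] at this
    rw [← this]
    refine Finset.sum_congr rfl fun k _ => ?_
    rw [hφ k ⟨n, hn⟩, hφ k ⟨n', hn'⟩]

lemma sum_smul_shift {F : Type*} [AddCommGroup F] [Module ℝ F] {a b : ℤ} {f : ℤ → ℝ} {x : ℤ → F}
    (hf : ∀ n ∉ Finset.Icc a b, f n = 0) (hx : ∀ n ∉ Finset.Icc a b, x n = 0) :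
    ∑ n ∈ Finset.Icc a b, f n • x (n + 1) = ∑ n ∈ Finset.Icc a b, f (n - 1) • x n := by
  have h1 : ∑ n ∈ Finset.Icc a b, f n • x (n + 1) = ∑ᶠ n, f n • x (n + 1) := by
    refine (finsum_eq_sum_of_support_subset _ fun n hn => ?_).symm
    by_contra h
    exact hn (by simp only; rw [hf n h, zero_smul])
  have h2 : ∑ n ∈ Finset.Icc a b, f (n - 1) • x n = ∑ᶠ n, f (n - 1) • x n := by
    refine (finsum_eq_sum_of_support_subset _ fun n hn => ?_).symm
    by_contra h
    exact hn (by simp only; rw [hx n h, smul_zero])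
  rw [h1, h2, ← finsum_comp_equiv (Equiv.addRight (1 : ℤ)) (f := fun n => f (n - 1) • x n)]
  simp

lemma sum_schr_symm {F : Type*} [AddCommGroup F] [Module ℝ F] (V : ℤ → ℝ) {a b : ℤ} {f : ℤ → ℝ}
    {x : ℤ → F} (hf : ∀ n ∉ Finset.Icc a b, f n = 0) (hx : ∀ n ∉ Finset.Icc a b, x n = 0) :
    ∑ n ∈ Finset.Icc a b, f n • schr V x n = ∑ n ∈ Finset.Icc a b, schr V f n • x n := by
  have h1 := sum_smul_shift hf hx
  have h2 : ∑ n ∈ Finset.Icc a b, f n • x (n - 1) = ∑ n ∈ Finset.Icc a b, f (n + 1) • x n := by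
    have e1 : ∑ n ∈ Finset.Icc a b, f n • x (n - 1) = ∑ᶠ n, f n • x (n - 1) := by
      refine (finsum_eq_sum_of_support_subset _ fun n hn => ?_).symm
      by_contra h
      exact hn (by simp only; rw [hf n h, zero_smul])
    have e2 : ∑ n ∈ Finset.Icc a b, f (n + 1) • x n = ∑ᶠ n, f (n + 1) • x n := by
      refine (finsum_eq_sum_of_support_subset _ fun n hn => ?_).symm
      by_contra h
      exact hn (by simp only; rw [hx n h, smul_zero])
    rw [e1, e2, ← finsum_comp_equiv (Equiv.addRight (1 : ℤ))]
    simp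
  simp only [schr, smul_add, add_smul, Finset.sum_add_distrib, h1, h2, smul_eq_mul]
  rw [add_comm (∑ n ∈ Finset.Icc a b, f (n - 1) • x n)]
  congr 1
  refine Finset.sum_congr rfl fun n _ => ?_
  rw [smul_smul, mul_comm]

namespace BoxEigen

variable {V : ℤ → ℝ} {a b : ℤ} (B : BoxEigen V a b)

/-- The coefficients of a sequence in the eigenbasis. -/
def coeff {F : Type*} [AddCommGroup F] [Module ℝ F] (x : ℤ → F) (k : Finset.Icc a b) : F :=
  ∑ n ∈ Finset.Icc a b, B.φ k n • x n

lemma coeff_schr {F : Type*} [AddCommGroup F] [Module ℝ F] {x : ℤ → F}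
    (hx : ∀ n ∉ Finset.Icc a b, x n = 0) (k : Finset.Icc a b) :
    B.coeff (schr V x) k = B.E k • B.coeff x k := by
  rw [coeff, sum_schr_symm V (B.supp k) hx, coeff, Finset.smul_sum]
  refine Finset.sum_congr rfl fun n hn => ?_
  rw [B.eig k n hn, mul_smul]

lemma sum_inner_coeff {F : Type*} [NormedAddCommGroup F] [InnerProductSpace ℝ F] (x : ℤ → F) :
    ∑ k, ‖B.coeff x k‖ ^ 2 = ∑ n ∈ Finset.Icc a b, ‖x n‖ ^ 2 := by
  have h : ∀ k, ‖B.coeff x k‖ ^ 2 = ∑ n ∈ Finset.Icc a b, ∑ m ∈ Finset.Icc a b,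
      (B.φ k n * B.φ k m) * inner ℝ (x n) (x m) := by
    intro k
    rw [← real_inner_self_eq_norm_sq, coeff, sum_inner]
    refine Finset.sum_congr rfl fun n _ => ?_
    rw [inner_sum]
    refine Finset.sum_congr rfl fun m _ => ?_
    rw [real_inner_smul_left, real_inner_smul_right]; ring
  simp only [h]
  rw [Finset.sum_comm]
  refine Finset.sum_congr rfl fun n hn => ?_
  rw [Finset.sum_comm]
  have : ∀ m ∈ Finset.Icc a b, ∑ k, (B.φ k n * B.φ k m) * inner ℝ (x n) (x m) =
      if n = m then inner ℝ (x n) (x m) else 0 := by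
    intro m hm
    rw [← Finset.sum_mul, B.compl n hn m hm]
    split_ifs <;> simp
  rw [Finset.sum_congr rfl this, Finset.sum_ite_eq, if_pos hn, real_inner_self_eq_norm_sq]

lemma sum_coeff_smul {F : Type*} [AddCommGroup F] [Module ℝ F] (x : ℤ → F) {n : ℤ}
    (hn : n ∈ Finset.Icc a b) : ∑ k, B.φ k n • B.coeff x k = x n := by
  simp only [coeff, Finset.smul_sum]
  rw [Finset.sum_comm]
  have : ∀ m ∈ Finset.Icc a b, ∑ k, B.φ k n • B.φ k m • x m = if n = m then x m else 0 := by
    intro m hm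
    simp only [smul_smul]
    rw [← Finset.sum_smul, B.compl n hn m hm]
    split_ifs <;> simp
  rw [Finset.sum_congr rfl this, Finset.sum_ite_eq, if_pos hn]

lemma sum_sq (k : Finset.Icc a b) : ∑ n ∈ Finset.Icc a b, B.φ k n ^ 2 = 1 := by
  have := B.orth k k
  simpa [sq] using this

end BoxEigen

/-- The restriction of `H - E` to the box `[a, b]` is bounded below by `h`. -/
def NonRes (V : ℤ → ℝ) (E h : ℝ) (a b : ℤ) : Prop :=
  ∀ x : ℤ → ℝ, (∀ n ∉ Finset.Icc a b, x n = 0) →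
    h ^ 2 * ∑ n ∈ Finset.Icc a b, x n ^ 2 ≤ ∑ n ∈ Finset.Icc a b, (schr V x n - E * x n) ^ 2

lemma BoxEigen.nonRes {V : ℤ → ℝ} {a b : ℤ} (B : BoxEigen V a b) {E h : ℝ} (hh : 0 ≤ h)
    (hE : ∀ k, h ≤ |B.E k - E|) : NonRes V E h a b := by
  intro x hx
  have h1 := B.sum_inner_coeff x
  have h2 := B.sum_inner_coeff (fun n => schr V x n - E * x n)
  simp only [Real.norm_eq_abs, sq_abs] at h1 h2
  rw [← h1, ← h2, Finset.mul_sum]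
  refine Finset.sum_le_sum fun k _ => ?_
  have h3 : B.coeff (fun n => schr V x n - E * x n) k = (B.E k - E) * B.coeff x k := by
    have := B.coeff_schr hx k
    simp only [BoxEigen.coeff, smul_eq_mul, mul_sub, Finset.sum_sub_distrib] at this ⊢
    rw [this, sub_mul, Finset.mul_sum (a := E)]
    congr 1
    refine Finset.sum_congr rfl fun n _ => by ring
  rw [h3, mul_pow, ← sq_abs (B.E k - E)]
  have := hE k
  gcongr

lemma BoxEigen.abs_E_le {V : ℤ → ℝ} {a b : ℤ} (B : BoxEigen V a b) {M : ℝ}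
    (hM : ∀ n, |V n| ≤ M) (k : Finset.Icc a b) : |B.E k| ≤ 2 + M := by
  have hne : ∃ n ∈ Finset.Icc a b, B.φ k n ≠ 0 := by
    by_contra h
    push Not at h
    have := B.sum_sq k
    rw [Finset.sum_eq_zero fun n hn => by rw [h n hn]; norm_num] at this
    exact zero_ne_one this
  obtain ⟨m, hm, hmax⟩ := Finset.exists_max_image (Finset.Icc a b) (fun n => |B.φ k n|)
    ⟨hne.choose, hne.choose_spec.1⟩
  obtain ⟨n0, hn0, hn0'⟩ := hne
  have hpos : 0 < |B.φ k m| := (abs_pos.2 hn0').trans_le (hmax n0 hn0)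
  have hall : ∀ n, |B.φ k n| ≤ |B.φ k m| := by
    intro n
    by_cases hn : n ∈ Finset.Icc a b
    · exact hmax n hn
    · rw [B.supp k n hn, abs_zero]; exact hpos.le
  have h := B.eig k m hm
  have h1 : |B.E k| * |B.φ k m| ≤ (2 + M) * |B.φ k m| := by
    rw [← abs_mul, ← h, schr, smul_eq_mul]
    calc _ ≤ |B.φ k (m + 1)| + |B.φ k (m - 1)| + |V m * B.φ k m| := abs_add_three _ _ _
      _ ≤ |B.φ k m| + |B.φ k m| + M * |B.φ k m| := by
        rw [abs_mul]
        exact add_le_add (add_le_add (hall _) (hall _))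
          (mul_le_mul_of_nonneg_right (hM m) (abs_nonneg _))
      _ = _ := by ring
  exact le_of_mul_le_mul_right h1 hpos

lemma exists_nonRes_finset (V : ℤ → ℝ) (a b : ℤ) : ∃ S : Finset ℝ, S.card ≤ (b + 1 - a).toNat ∧
    ∀ E h : ℝ, 0 ≤ h → (∀ e ∈ S, h ≤ |E - e|) → NonRes V E h a b := by
  classical
  obtain ⟨B⟩ := exists_boxEigen V a b
  refine ⟨Finset.univ.image B.E, ?_, fun E h hh hS => B.nonRes hh fun k => ?_⟩
  · refine Finset.card_image_le.trans ?_
    rw [Finset.card_univ, Fintype.card_coe, Int.card_Icc]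
  · rw [abs_sub_comm]
    exact hS _ (Finset.mem_image_of_mem _ (Finset.mem_univ k))

/-- A sequence supported on `[p, b]` that cancels the left boundary term of the truncation of `φ`
to an interval starting at `p`, up to errors controlled by `η`, `β` and `h`. -/
def LeftCorr (U : ℤ → ℝ) (E : ℝ) (φ : ℤ → ℝ) (η β h : ℝ) (p b : ℤ) : Prop :=
  ∃ (u : ℤ → ℝ) (c : ℝ), |c| ≤ η ∧ (∀ n ∉ Finset.Icc p b, u n = 0) ∧
    (∀ n, p ≤ n → schr U u n - E * u n =
      c * u n - (if n = p then φ (p - 1) else 0) + (if n = b + 1 then u b else 0)) ∧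
    |u b| ≤ 1 / β ∧ ∑ n ∈ Finset.Icc p b, u n ^ 2 ≤ 4 / h ^ 2

/-- The mirror image of `LeftCorr`. -/
def RightCorr (U : ℤ → ℝ) (E : ℝ) (φ : ℤ → ℝ) (η β h : ℝ) (a q : ℤ) : Prop :=
  ∃ (u : ℤ → ℝ) (c : ℝ), |c| ≤ η ∧ (∀ n ∉ Finset.Icc a q, u n = 0) ∧
    (∀ n, n ≤ q → schr U u n - E * u n =
      c * u n - (if n = q then φ (q + 1) else 0) + (if n = a - 1 then u a else 0)) ∧
    |u a| ≤ 1 / β ∧ ∑ n ∈ Finset.Icc a q, u n ^ 2 ≤ 4 / h ^ 2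

lemma leftCorr_of_barrier {U : ℤ → ℝ} {E E₀ η β h : ℝ} {φ : ℤ → ℝ} {p b : ℤ} (hpb : p ≤ b)
    (hβ : 0 < β) (hh : 0 < h) (hη : η ≤ h / 2) (hE : |E - E₀| ≤ η) (hB : Barrier U E₀ β p b)
    (hN : NonRes U E h p b) (hφ : |φ (p - 1)| ≤ 1) : LeftCorr U E φ η β h p b := by
  obtain ⟨w, hw, hwb, hwb1, hwβ⟩ := hB
  have hw0 : w (p - 1) ≠ 0 := abs_pos.1 (hβ.trans_le hwβ)
  set κ := φ (p - 1) / w (p - 1) with hκ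
  have hκw : κ * w (p - 1) = φ (p - 1) := div_mul_cancel₀ _ hw0
  let u : ℤ → ℝ := fun n => if n ∈ Finset.Icc p b then κ * w n else 0
  have hu0 : ∀ n ∉ Finset.Icc p b, u n = 0 := fun n hn => if_neg hn
  have hu1 : ∀ n, p ≤ n → n ≤ b + 1 → u n = κ * w n := by
    intro n h1 h2
    rcases eq_or_lt_of_le h2 with h3 | h3
    · rw [hu0 n (by simp; omega), h3, hwb1, mul_zero]
    · exact if_pos (by simp; omega)
  have heq : ∀ n, p ≤ n → schr U u n - E * u n =
      (E₀ - E) * u n - (if n = p then φ (p - 1) else 0) + (if n = b + 1 then u b else 0) := by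
    intro n hn
    have hwn := hw n
    simp only [schr, smul_eq_mul] at hwn ⊢
    rcases le_or_gt n b with h1 | h1
    · rw [if_neg (show ¬ n = b + 1 by omega), hu1 n hn (by omega),
      hu1 (n + 1) (by omega) (by omega)]
      rcases eq_or_lt_of_le hn with h2 | h2
      · subst h2
        rw [hu0 (p - 1) (by simp), if_pos rfl, ← hκw]
        linear_combination κ * hwn
      · rw [hu1 (n - 1) (by omega) (by omega), if_neg (show ¬ n = p by omega)]
        linear_combination κ * hwn
    · rw [hu0 n (by simp; omega), hu0 (n + 1) (by simp; omega), if_neg (show ¬ n = p by omega)]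
      rcases eq_or_lt_of_le (show b + 1 ≤ n by omega) with h2 | h2
      · rw [if_pos h2.symm, ← h2, add_sub_cancel_right]; ring
      · rw [if_neg (show ¬ n = b + 1 by omega), hu0 (n - 1) (by simp; omega)]; ring
  refine ⟨u, E₀ - E, by rwa [abs_sub_comm], hu0, heq, ?_, ?_⟩
  · rw [hu1 b hpb (by omega), hwb, mul_one, hκ, abs_div]
    exact div_le_div₀ zero_le_one hφ hβ hwβ
  · have h1 := hN u hu0
    set X := ∑ n ∈ Finset.Icc p b, u n ^ 2 with hX
    have hX0 : 0 ≤ X := Finset.sum_nonneg fun _ _ => sq_nonneg _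
    have h2 : ∑ n ∈ Finset.Icc p b, (schr U u n - E * u n) ^ 2 ≤
        ∑ n ∈ Finset.Icc p b, (2 * η ^ 2 * u n ^ 2 + (if n = p then 2 else 0)) := by
      refine Finset.sum_le_sum fun n hn => ?_
      rw [Finset.mem_Icc] at hn
      rw [heq n hn.1, if_neg (show ¬ n = b + 1 by omega), add_zero]
      have hc : (E₀ - E) ^ 2 ≤ η ^ 2 := by
        rw [← sq_abs, abs_sub_comm]; gcongr
      have hcu : (E₀ - E) ^ 2 * u n ^ 2 ≤ η ^ 2 * u n ^ 2 := by gcongr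
      split_ifs with h
      · have hφ2 : φ (p - 1) ^ 2 ≤ 1 := by rw [← sq_abs]; exact pow_le_one₀ (abs_nonneg _) hφ
        nlinarith [sq_nonneg ((E₀ - E) * u n + φ (p - 1))]
      · have := mul_nonneg (sq_nonneg η) (sq_nonneg (u n))
        rw [sub_zero, mul_pow]; linarith
    rw [Finset.sum_add_distrib, ← Finset.mul_sum, ← hX, Finset.sum_ite_eq',
      if_pos (Finset.left_mem_Icc.2 hpb)] at h2
    have hη0 : 0 ≤ η := (abs_nonneg _).trans hE
    have h3 : η ^ 2 ≤ h ^ 2 / 4 := by nlinarith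
    rw [le_div_iff₀ (by positivity)]
    nlinarith

lemma schr_neg (U u : ℤ → ℝ) (n : ℤ) :
    schr U (fun m => u (-m)) n = schr (fun m => U (-m)) u (-n) := by
  simp only [schr]
  rw [show -(n + 1) = -n - 1 by ring, show -(n - 1) = -n + 1 by ring, neg_neg]
  ring

lemma rightCorr_of_leftCorr {U : ℤ → ℝ} {E η β h : ℝ} {φ : ℤ → ℝ} {a q : ℤ}
    (hL : LeftCorr (fun n => U (-n)) E (fun n => φ (-n)) η β h (-q) (-a)) :
    RightCorr U E φ η β h a q := by
  obtain ⟨u, c, hc, hu0, heq, hub, hsum⟩ := hL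
  refine ⟨fun n => u (-n), c, hc, fun n hn => hu0 _ ?_, fun n hn => ?_, hub, ?_⟩
  · simp only [Finset.mem_Icc] at hn ⊢; omega
  · rw [schr_neg, heq (-n) (by omega)]
    have h1 : (-n = -q) ↔ (n = q) := by omega
    have h2 : (-n = -a + 1) ↔ (n = a - 1) := by omega
    simp only [h1, h2, show -(-q - 1) = q + 1 by ring]
  · refine le_trans (le_of_eq ?_) hsum
    refine Finset.sum_nbij' (fun n => -n) (fun n => -n) ?_ ?_ ?_ ?_ ?_
    · intro n hn; simp only [Finset.mem_Icc] at hn ⊢; omega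
    · intro n hn; simp only [Finset.mem_Icc] at hn ⊢; omega
    · intro n _; simp
    · intro n _; simp
    · intro n _; rfl

lemma rightCorr_of_eq_zero {U : ℤ → ℝ} {E η β h : ℝ} {φ : ℤ → ℝ} {q : ℤ} (hη : 0 ≤ η)
    (hβ : 0 ≤ β) (hφ : φ (q + 1) = 0) : RightCorr U E φ η β h (q + 1) q := by
  refine ⟨fun _ => 0, 0, by simpa using hη, fun _ _ => rfl, fun n _ => ?_, ?_, ?_⟩
  · simp [schr, hφ]
  · simp only [abs_zero]; positivity
  · simp; positivity

lemma sum_sq_Ioo_le {U : ℤ → ℝ} {E η β h : ℝ} {φ : ℤ → ℝ} {p b a q : ℤ} (hpb : p ≤ b)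
    (hba : b < a) (haq : a ≤ q + 1) (hβ : 0 < β) (hh : 0 < h) (hη : η ≤ h / (2 * β))
    (heig : ∀ n ∈ Finset.Icc p q, schr U φ n = E * φ n)
    (hL : LeftCorr U E φ η β h p b) (hR : RightCorr U E φ η β h a q)
    (hN : NonRes U E h p q) : ∑ n ∈ Finset.Ioo b a, φ n ^ 2 ≤ 16 / (β ^ 2 * h ^ 2) := by
  obtain ⟨u, c, hc, hu0, hueq, hub, husum⟩ := hL
  obtain ⟨v, d, hd, hv0, hveq, hva, hvsum⟩ := hR
  set χ : ℤ → ℝ := fun n => if n ∈ Finset.Icc p q then φ n else 0 with hχ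
  have hχ0 : ∀ n ∉ Finset.Icc p q, χ n = 0 := fun n hn => if_neg hn
  have hχ1 : ∀ n ∈ Finset.Icc p q, χ n = φ n := fun n hn => if_pos hn
  have hχeq : ∀ n ∈ Finset.Icc p q, schr U χ n - E * χ n =
      -(if n = p then φ (p - 1) else 0) - (if n = q then φ (q + 1) else 0) := by
    intro n hn
    have h1 := heig n hn
    have hn' := Finset.mem_Icc.1 hn
    simp only [schr, smul_eq_mul] at h1 ⊢
    rw [hχ1 n hn]
    have e1 : χ (n - 1) = φ (n - 1) - (if n = p then φ (p - 1) else 0) := by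
      split_ifs with h
      · rw [hχ0 _ (by simp; omega), h, sub_self]
      · rw [hχ1 _ (by simp; omega), sub_zero]
    have e2 : χ (n + 1) = φ (n + 1) - (if n = q then φ (q + 1) else 0) := by
      split_ifs with h
      · rw [hχ0 _ (by simp; omega), h, sub_self]
      · rw [hχ1 _ (by simp; omega), sub_zero]
    rw [e1, e2]
    linear_combination h1
  set ψ : ℤ → ℝ := fun n => χ n - u n - v n with hψ
  have hψ0 : ∀ n ∉ Finset.Icc p q, ψ n = 0 := by
    intro n hn
    simp only [hψ]
    rw [hχ0 n hn, hu0 n (fun h => hn ?_), hv0 n (fun h => hn ?_)]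
    · ring
    · simp only [Finset.mem_Icc] at h ⊢; omega
    · simp only [Finset.mem_Icc] at h ⊢; omega
  have hψeq : ∀ n ∈ Finset.Icc p q, schr U ψ n - E * ψ n =
      -(c * u n) - (if n = b + 1 then u b else 0) - d * v n - (if n = a - 1 then v a else 0) := by
    intro n hn
    have hn' := Finset.mem_Icc.1 hn
    have h1 := hχeq n hn
    have h2 := hueq n hn'.1
    have h3 := hveq n hn'.2
    have h4 : schr U ψ n = schr U χ n - schr U u n - schr U v n := by
      simp only [schr, hψ, smul_eq_mul]; ring
    rw [h4]
    simp only [hψ]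
    linear_combination h1 - h2 - h3
  have hη0 : 0 ≤ η := (abs_nonneg _).trans hc
  have hηh : η ^ 2 * (4 / h ^ 2) ≤ 1 / β ^ 2 := by
    calc η ^ 2 * (4 / h ^ 2) ≤ (h / (2 * β)) ^ 2 * (4 / h ^ 2) := by gcongr
      _ = 1 / β ^ 2 := by field_simp; norm_num
  have key : ∑ n ∈ Finset.Icc p q, (schr U ψ n - E * ψ n) ^ 2 ≤ 16 / β ^ 2 := by
    have h1 : ∑ n ∈ Finset.Icc p q, (schr U ψ n - E * ψ n) ^ 2 ≤
        ∑ n ∈ Finset.Icc p q, (4 * (η ^ 2 * u n ^ 2) + (if n = b + 1 then 4 * (1 / β ^ 2) else 0)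
          + 4 * (η ^ 2 * v n ^ 2) + (if n = a - 1 then 4 * (1 / β ^ 2) else 0)) := by
      refine Finset.sum_le_sum fun n hn => ?_
      rw [hψeq n hn]
      have four : ∀ x y z w : ℝ, (-x - y - z - w) ^ 2 ≤
            4 * x ^ 2 + 4 * y ^ 2 + 4 * z ^ 2 + 4 * w ^ 2 := by
        intro x y z w
        nlinarith [sq_nonneg (x - y), sq_nonneg (x - z), sq_nonneg (x - w), sq_nonneg (y - z),
          sq_nonneg (y - w), sq_nonneg (z - w)]
      refine (four _ _ _ _).trans ?_
      have e1 : (c * u n) ^ 2 ≤ η ^ 2 * u n ^ 2 := by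
        rw [mul_pow, ← sq_abs c]; gcongr
      have e2 : (d * v n) ^ 2 ≤ η ^ 2 * v n ^ 2 := by
        rw [mul_pow, ← sq_abs d]; gcongr
      have e3 : (u b) ^ 2 ≤ 1 / β ^ 2 := by
        rw [← sq_abs, ← one_div_pow]; gcongr
      have e4 : (v a) ^ 2 ≤ 1 / β ^ 2 := by
        rw [← sq_abs, ← one_div_pow]; gcongr
      have e5 : (if n = b + 1 then u b else 0) ^ 2 ≤ if n = b + 1 then 1 / β ^ 2 else 0 := by
        split_ifs
        · exact e3
        · simp
      have e6 : (if n = a - 1 then v a else 0) ^ 2 ≤ if n = a - 1 then 1 / β ^ 2 else 0 := by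
        split_ifs
        · exact e4
        · simp
      have e7 : ∀ P : Prop, ∀ [Decidable P], (if P then 4 * (1 / β ^ 2) else 0)
          = 4 * (if P then 1 / β ^ 2 else 0) := by intro P _; split_ifs <;> simp
      rw [e7, e7]
      linarith
    have hle : ∀ m : ℤ, (∑ n ∈ Finset.Icc p q, if n = m then 4 * (1 / β ^ 2) else 0) ≤
          4 * (1 / β ^ 2) := by
      intro m
      rw [Finset.sum_ite_eq']
      split_ifs
      · exact le_rfl
      · positivity
    have hsu : ∑ n ∈ Finset.Icc p q, u n ^ 2 ≤ 4 / h ^ 2 := by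
      refine le_trans (le_of_eq ?_) husum
      refine (Finset.sum_subset (Finset.Icc_subset_Icc le_rfl (by omega)) fun n _ hn => ?_).symm
      rw [hu0 n hn]; norm_num
    have hsv : ∑ n ∈ Finset.Icc p q, v n ^ 2 ≤ 4 / h ^ 2 := by
      refine le_trans (le_of_eq ?_) hvsum
      refine (Finset.sum_subset (Finset.Icc_subset_Icc (by omega) le_rfl) fun n _ hn => ?_).symm
      rw [hv0 n hn]; norm_num
    have h5 : η ^ 2 * ∑ n ∈ Finset.Icc p q, u n ^ 2 ≤ 1 / β ^ 2 :=
      (mul_le_mul_of_nonneg_left hsu (sq_nonneg η)).trans hηh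
    have h6 : η ^ 2 * ∑ n ∈ Finset.Icc p q, v n ^ 2 ≤ 1 / β ^ 2 :=
      (mul_le_mul_of_nonneg_left hsv (sq_nonneg η)).trans hηh
    simp only [Finset.sum_add_distrib, ← Finset.mul_sum] at h1
    have h7 := hle (b + 1)
    have h8 := hle (a - 1)
    have h9 : 16 / β ^ 2 = 16 * (1 / β ^ 2) := by ring
    rw [h9]
    linarith
  have h1 := (hN ψ hψ0).trans key
  have h2 : ∑ n ∈ Finset.Ioo b a, φ n ^ 2 ≤ ∑ n ∈ Finset.Icc p q, ψ n ^ 2 := by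
    have hsub : Finset.Ioo b a ⊆ Finset.Icc p q := by
      intro n hn; simp only [Finset.mem_Icc, Finset.mem_Ioo] at hn ⊢; omega
    refine le_trans (le_of_eq ?_)
      (Finset.sum_le_sum_of_subset_of_nonneg hsub fun _ _ _ => sq_nonneg _)
    refine Finset.sum_congr rfl fun n hn => ?_
    simp only [hψ]
    rw [hχ1 n (hsub hn), hu0 n, hv0 n, sub_zero, sub_zero]
    · simp only [Finset.mem_Icc, Finset.mem_Ioo] at hn ⊢; omega
    · simp only [Finset.mem_Icc, Finset.mem_Ioo] at hn ⊢; omega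
  rw [le_div_iff₀ (by positivity)]
  have h3 : (∑ n ∈ Finset.Ioo b a, φ n ^ 2) * h ^ 2 ≤ 16 / β ^ 2 := by nlinarith [sq_nonneg h]
  rw [le_div_iff₀ (by positivity)] at h3
  linarith

/-- The sequence `x` is the `j`-th column of the resolvent of the restriction of the Schrödinger
operator to the box `[a, b]`. -/
structure IsRes (V : ℤ → ℝ) (a b : ℤ) (z : ℂ) (j : ℤ) (x : ℤ → ℂ) : Prop where
  supp : ∀ n ∉ Finset.Icc a b, x n = 0
  eq : ∀ n ∈ Finset.Icc a b, schr V x n - z * x n = if n = j then 1 else 0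

namespace BoxEigen

variable {V : ℤ → ℝ} {a b : ℤ} (B : BoxEigen V a b)

lemma coeff_schr_sub {x y : ℤ → ℂ} {z : ℂ} {j : ℤ} (hj : j ∈ Finset.Icc a b)
    (hx : ∀ n ∉ Finset.Icc a b, x n = 0)
    (hy : ∀ n ∈ Finset.Icc a b, schr V x n - z * x n = (if n = j then 1 else 0) + y n)
    (k : Finset.Icc a b) :
    ((B.E k : ℂ) - z) * B.coeff x k = B.φ k j + B.coeff y k := by
  have h1 := B.coeff_schr hx k
  have h2 : B.coeff (schr V x) k - z * B.coeff x k = B.φ k j + B.coeff y k := by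
    simp only [coeff, Finset.mul_sum]
    rw [← Finset.sum_sub_distrib]
    have h3 : (B.φ k j : ℂ) = ∑ n ∈ Finset.Icc a b, B.φ k n • (if n = j then (1 : ℂ) else 0) := by
      simp only [smul_ite, smul_zero]
      rw [Finset.sum_ite_eq', if_pos hj]
      simp
    rw [h3, ← Finset.sum_add_distrib]
    refine Finset.sum_congr rfl fun n hn => ?_
    rw [← smul_add, ← hy n hn, smul_sub, mul_smul_comm]
  rw [h1] at h2
  rw [← h2, sub_mul, Complex.real_smul]

lemma coeff_zero {F : Type*} [AddCommGroup F] [Module ℝ F] (k : Finset.Icc a b) :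
    B.coeff (fun _ => (0 : F)) k = 0 := by
  simp [coeff]

end BoxEigen

lemma exists_isRes (V : ℤ → ℝ) {a b : ℤ} {z : ℂ} (hz : 0 < z.im) {j : ℤ} (hj : j ∈ Finset.Icc a b) :
    ∃ x, IsRes V a b z j x := by
  obtain ⟨B⟩ := exists_boxEigen V a b
  have hne : ∀ k, (B.E k : ℂ) - z ≠ 0 := by
    intro k h
    have := congrArg Complex.im h
    simp at this
    exact hz.ne' this
  refine ⟨fun n => ∑ k, (B.φ k n : ℂ) * (B.φ k j / (B.E k - z)), fun n hn => ?_, fun n hn => ?_⟩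
  · exact Finset.sum_eq_zero fun k _ => by rw [B.supp k n hn]; simp
  · simp only [schr, Complex.real_smul, Finset.mul_sum]
    rw [← Finset.sum_add_distrib, ← Finset.sum_add_distrib, ← Finset.sum_sub_distrib]
    have h : ∀ k, (B.φ k (n + 1) : ℂ) * (B.φ k j / (B.E k - z))
        + B.φ k (n - 1) * (B.φ k j / (B.E k - z)) + V n * (B.φ k n * (B.φ k j / (B.E k - z)))
        - z * (B.φ k n * (B.φ k j / (B.E k - z))) = ((B.φ k n * B.φ k j : ℝ) : ℂ) := by
      intro k
      have h1 := B.eig k n hn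
      simp only [schr, smul_eq_mul] at h1
      have h2 : (B.φ k (n + 1) : ℂ) + B.φ k (n - 1) + V n * B.φ k n = B.E k * B.φ k n := by
        exact_mod_cast h1
      have h3 : (B.φ k (n + 1) : ℂ) * (B.φ k j / (B.E k - z))
        + B.φ k (n - 1) * (B.φ k j / (B.E k - z)) + V n * (B.φ k n * (B.φ k j / (B.E k - z)))
        - z * (B.φ k n * (B.φ k j / (B.E k - z))) =
        ((B.E k : ℂ) - z) * (B.φ k n * (B.φ k j / (B.E k - z))) := by
        linear_combination (B.φ k j / (B.E k - z) : ℂ) * h2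
      rw [h3]
      push_cast
      field_simp [hne k]
    rw [Finset.sum_congr rfl fun k _ => h k, ← Complex.ofReal_sum, B.compl n hn j hj]
    split_ifs <;> simp

namespace IsRes

variable {V : ℤ → ℝ} {a b j : ℤ} {z : ℂ} {x : ℤ → ℂ}

lemma unique (hz : 0 < z.im) (hj : j ∈ Finset.Icc a b) {x' : ℤ → ℂ} (hx : IsRes V a b z j x)
    (hx' : IsRes V a b z j x') : x = x' := by
  obtain ⟨B⟩ := exists_boxEigen V a b
  have hne : ∀ k, (B.E k : ℂ) - z ≠ 0 := by
    intro k h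
    have := congrArg Complex.im h
    simp at this
    exact hz.ne' this
  have h : ∀ k, B.coeff x k = B.coeff x' k := by
    intro k
    have h1 := B.coeff_schr_sub (y := fun _ => 0) hj hx.supp (by simpa using hx.eq) k
    have h2 := B.coeff_schr_sub (y := fun _ => 0) hj hx'.supp (by simpa using hx'.eq) k
    exact mul_left_cancel₀ (hne k) (h1.trans h2.symm)
  ext n
  by_cases hn : n ∈ Finset.Icc a b
  · rw [← B.sum_coeff_smul x hn, ← B.sum_coeff_smul x' hn]
    simp only [h]
  · rw [hx.supp n hn, hx'.supp n hn]

lemma im_eq (hj : j ∈ Finset.Icc a b) (hx : IsRes V a b z j x) :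
    (x j).im = z.im * ∑ n ∈ Finset.Icc a b, ‖x n‖ ^ 2 := by
  obtain ⟨B⟩ := exists_boxEigen V a b
  rw [← B.sum_inner_coeff, ← B.sum_coeff_smul x hj, Complex.im_sum, Finset.mul_sum]
  refine Finset.sum_congr rfl fun k _ => ?_
  have h1 := B.coeff_schr_sub (y := fun _ => 0) hj hx.supp (by simpa using hx.eq) k
  rw [B.coeff_zero, add_zero] at h1
  set c := B.coeff x k
  rw [Complex.real_smul, ← h1, mul_assoc, Complex.mul_im, Complex.mul_re,
    ← Complex.normSq_eq_norm_sq, Complex.normSq_apply]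
  have h2 := congrArg Complex.im h1
  simp only [Complex.mul_im, Complex.sub_re, Complex.sub_im, Complex.ofReal_re,
    Complex.ofReal_im] at h2 ⊢
  linear_combination 2 * c.re * h2

lemma ne_zero (hz : 0 < z.im) (hj : j ∈ Finset.Icc a b) (hx : IsRes V a b z j x) :
    0 < (x j).im ∧ z.im * ‖x j‖ ^ 2 ≤ (x j).im := by
  have h1 := hx.im_eq hj
  have h2 : ‖x j‖ ^ 2 ≤ ∑ n ∈ Finset.Icc a b, ‖x n‖ ^ 2 :=
    Finset.single_le_sum (f := fun n => ‖x n‖ ^ 2) (fun _ _ => sq_nonneg _) hj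
  have h3 : 0 < ∑ n ∈ Finset.Icc a b, ‖x n‖ ^ 2 := by
    by_contra h
    have h0 : ∑ n ∈ Finset.Icc a b, ‖x n‖ ^ 2 = 0 :=
      le_antisymm (not_lt.1 h) (Finset.sum_nonneg fun _ _ => sq_nonneg _)
    rw [Finset.sum_eq_zero_iff_of_nonneg fun _ _ => sq_nonneg _] at h0
    have hx0 : ∀ n, x n = 0 := by
      intro n
      by_cases hn : n ∈ Finset.Icc a b
      · simpa using h0 n hn
      · exact hx.supp n hn
    have := hx.eq j hj
    simp [schr, hx0] at this
  rw [h1]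
  exact ⟨mul_pos hz h3, mul_le_mul_of_nonneg_left h2 hz.le⟩

lemma rank_one (hz : 0 < z.im) (hj : j ∈ Finset.Icc a b) (hx : IsRes V a b z j x) (t : ℝ)
    {V' : ℤ → ℝ} (hV' : ∀ n ∈ Finset.Icc a b, V' n = V n + if n = j then t else 0) :
    IsRes V' a b z j (fun n => x n / (1 + t * x j)) := by
  have him := (hx.ne_zero hz hj).1
  have hne : 1 + (t : ℂ) * x j ≠ 0 := by
    intro h
    have h1 := congrArg Complex.im h
    have h2 := congrArg Complex.re h
    simp at h1 h2
    rcases h1 with h1 | h1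
    · simp [h1] at h2
    · exact him.ne' h1
  refine ⟨fun n hn => by rw [hx.supp n hn, zero_div], fun n hn => ?_⟩
  have h := hx.eq n hn
  simp only [schr, Complex.real_smul] at h ⊢
  rw [hV' n hn]
  split_ifs at h ⊢ with h1
  · subst h1
    push_cast
    field_simp
    linear_combination h
  · rw [add_zero]
    field_simp
    linear_combination h

end IsRes

lemma im_rank_one {G : ℂ} (hG : 0 < G.im) (t : ℝ) :
    (G / (1 + t * G)).im = (-(G⁻¹).im) / (((G⁻¹).re + t) ^ 2 + (-(G⁻¹).im) ^ 2) := by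
  have hG0 : G ≠ 0 := by rintro rfl; simp at hG
  have h1 : G / (1 + t * G) = (G⁻¹ + t)⁻¹ := by
    have : G⁻¹ + t = (1 + t * G) / G := by field_simp
    rw [this, inv_div]
  rw [h1, Complex.inv_im, Complex.normSq_apply]
  simp only [Complex.add_im, Complex.ofReal_im, add_zero, Complex.add_re, Complex.ofReal_re]
  congr 1; ring

lemma sum_poisson_le {a b τ : ℝ} (hτ : 0 < τ) (hb : τ ≤ b) (M : ℕ) :
    ∑ s ∈ Finset.range M, b / ((a + s * τ) ^ 2 + b ^ 2) ≤ 10 / τ := by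
  have hb0 : 0 < b := hτ.trans_le hb
  have hterm : ∀ s : ℕ, b / ((a + s * τ) ^ 2 + b ^ 2) ≤
      3 / τ * (Real.arctan ((a + (s + 1 : ℕ) * τ) / b) - Real.arctan ((a + s * τ) / b)) := by
    intro s
    set c := a + s * τ with hc
    have hc1 : a + (s + 1 : ℕ) * τ = c + τ := by rw [hc]; push_cast; ring
    rw [hc1]
    have hlt : c / b < (c + τ) / b := by gcongr; linarith
    obtain ⟨ξ, hξ, hd⟩ := exists_deriv_eq_slope Real.arctan hlt
      Real.continuous_arctan.continuousOn Real.differentiable_arctan.differentiableOn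
    rw [Real.deriv_arctan] at hd
    have hgap : (c + τ) / b - c / b = τ / b := by ring
    rw [hgap] at hd
    have h1 : Real.arctan ((c + τ) / b) - Real.arctan (c / b) = 1 / (1 + ξ ^ 2) * (τ / b) := by
      have h0 : 1 / (1 + ξ ^ 2) = _ := hd
      rw [h0]; field_simp
    rw [h1]
    obtain ⟨y, hy⟩ : ∃ y, y = ξ * b := ⟨_, rfl⟩
    have hy1 : c < y := by rw [hy]; exact (div_lt_iff₀ hb0).1 hξ.1
    have hy2 : y < c + τ := by rw [hy]; exact (lt_div_iff₀ hb0).1 hξ.2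
    have hξy : ξ = y / b := by rw [hy]; field_simp
    have h2 : 3 / τ * (1 / (1 + ξ ^ 2) * (τ / b)) = 3 * b / (b ^ 2 + y ^ 2) := by
      rw [hξy]; field_simp
    rw [h2, div_le_div_iff₀ (by positivity) (by positivity)]
    have h3 : y ^ 2 ≤ 2 * c ^ 2 + 2 * b ^ 2 := by
      have : y ^ 2 = (c + (y - c)) ^ 2 := by ring
      nlinarith [sq_nonneg (c - (y - c))]
    nlinarith [mul_nonneg hb0.le (sq_nonneg c)]
  refine (Finset.sum_le_sum fun s _ => hterm s).trans ?_
  rw [← Finset.mul_sum, Finset.sum_range_sub (fun s : ℕ => Real.arctan ((a + s * τ) / b))]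
  have h1 := Real.arctan_lt_pi_div_two ((a + (M : ℕ) * τ) / b)
  have h2 := Real.neg_pi_div_two_lt_arctan ((a + (0 : ℕ) * τ) / b)
  have h3 := Real.pi_lt_d2
  have h4 : Real.arctan ((a + (M : ℕ) * τ) / b) - Real.arctan ((a + (0 : ℕ) * τ) / b) ≤ 3.15 := by
    linarith
  calc _ ≤ 3 / τ * 3.15 := by gcongr
    _ ≤ 10 / τ := by rw [div_mul_eq_mul_div]; gcongr; norm_num

lemma IsRes.sum_im_le {V : ℤ → ℝ} {a b j : ℤ} {z : ℂ} {τ : ℝ} (hτ : 0 < τ) (hz : τ ≤ z.im)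
    (hj : j ∈ Finset.Icc a b) {X : ℕ → ℤ → ℂ} (M : ℕ)
    (hX : ∀ s : ℕ, IsRes (fun n => V n + if n = j then s * τ else 0) a b z j (X s)) :
    ∑ s ∈ Finset.range M, (X s j).im ≤ 10 / τ := by
  have hz0 : 0 < z.im := hτ.trans_le hz
  obtain ⟨x, hx⟩ := exists_isRes V hz0 hj
  have hX' : ∀ s, X s j = x j / (1 + ((s * τ : ℝ) : ℂ) * x j) := fun s =>
    congrFun ((hX s).unique hz0 hj (hx.rank_one hz0 hj (s * τ) fun n _ => rfl)) j
  obtain ⟨h1, h2⟩ := hx.ne_zero hz0 hj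
  have h3 : τ ≤ -((x j)⁻¹).im := by
    rw [Complex.inv_im, neg_div, neg_neg, le_div_iff₀, Complex.normSq_eq_norm_sq]
    · exact (mul_le_mul_of_nonneg_right hz (sq_nonneg _)).trans h2
    · rw [Complex.normSq_pos]
      intro h
      simp [h] at h1
  refine le_trans (Finset.sum_le_sum fun s _ => ?_) (sum_poisson_le (a := ((x j)⁻¹).re) hτ h3 M)
  rw [hX', im_rank_one h1]

lemma exists_wegner (V : ℤ → ℝ) {l h : ℝ} (hl : 0 < l) (hh : 0 < h) (T : Finset (ℝ × ℤ))
    (hT : ∀ c ∈ T, 1 ≤ c.2) : ∃ s₀ s₁ : ℝ, (0 ≤ s₀ ∧ s₀ ≤ 1) ∧ (0 ≤ s₁ ∧ s₁ ≤ 1) ∧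
      ∀ j : ℤ, (j = 0 ∨ j = 1) → ∃ X : ℝ × ℤ → ℤ → ℂ, (∀ c ∈ T,
        IsRes (fun n => V n + (if n = 0 then l * s₀ else 0) + if n = 1 then l * s₁ else 0)
          (-c.2) c.2 (c.1 + h * Complex.I) j (X c)) ∧
        ∑ c ∈ T, (X c j).im ≤ 20 * T.card / l := by
  obtain ⟨M, hM⟩ : ∃ M : ℕ, l / h < M := exists_nat_gt _
  have hM0 : (0 : ℝ) < M := (div_pos hl hh).trans hM
  have hMn : 0 < M := by exact_mod_cast hM0
  set τ := l / M with hτd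
  have hτ : 0 < τ := div_pos hl hM0
  have hτh : τ ≤ h := by
    rw [hτd, div_le_iff₀ hM0]
    rw [div_lt_iff₀ hh] at hM
    linarith
  let W : ℕ → ℕ → ℤ → ℝ := fun s t n =>
    V n + (if n = 0 then s * τ else 0) + if n = 1 then t * τ else 0
  have him : ∀ c : ℝ × ℤ, ((c.1 : ℂ) + h * Complex.I).im = h := fun c => by simp
  have hmem : ∀ c ∈ T, ∀ j : ℤ, (j = 0 ∨ j = 1) → j ∈ Finset.Icc (-c.2) c.2 := by
    intro c hc j hj
    have := hT c hc
    rw [Finset.mem_Icc]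
    omega
  have hex : ∀ j : ℤ, (j = 0 ∨ j = 1) → ∀ s t : ℕ, ∀ c ∈ T, ∃ x,
      IsRes (W s t) (-c.2) c.2 (c.1 + h * Complex.I) j x := fun j hj s t c hc =>
    exists_isRes _ (by rw [him]; exact hh) (hmem c hc j hj)
  choose! X hX using hex
  have hpos : ∀ j : ℤ, (j = 0 ∨ j = 1) → ∀ s t : ℕ, 0 ≤ ∑ c ∈ T, (X j s t c j).im :=
    fun j hj s t => Finset.sum_nonneg fun c hc =>
      ((hX j hj s t c hc).ne_zero (by rw [him]; exact hh) (hmem c hc j hj)).1.le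
  have hsum0 : ∀ t, ∀ c ∈ T, ∑ s ∈ Finset.range M, (X 0 s t c 0).im ≤ 10 / τ := by
    intro t c hc
    refine IsRes.sum_im_le (V := W 0 t) (z := c.1 + h * Complex.I) hτ (by rw [him]; exact hτh)
      (hmem c hc 0 (Or.inl rfl)) M fun s => ?_
    convert hX 0 (Or.inl rfl) s t c hc using 2
    simp only [W]
    split_ifs <;> push_cast <;> ring
  have hsum1 : ∀ s, ∀ c ∈ T, ∑ t ∈ Finset.range M, (X 1 s t c 1).im ≤ 10 / τ := by
    intro s c hc
    refine IsRes.sum_im_le (V := W s 0) (z := c.1 + h * Complex.I) hτ (by rw [him]; exact hτh)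
      (hmem c hc 1 (Or.inr rfl)) M fun t => ?_
    convert hX 1 (Or.inr rfl) s t c hc using 2
    simp only [W]
    split_ifs <;> push_cast <;> ring
  have hA : ∑ s ∈ Finset.range M, ∑ t ∈ Finset.range M, ∑ c ∈ T, (X 0 s t c 0).im
      ≤ M * (T.card * (10 / τ)) := by
    rw [Finset.sum_comm]
    refine (Finset.sum_le_card_nsmul _ _ (T.card * (10 / τ)) fun t _ => ?_).trans (by simp)
    rw [Finset.sum_comm]
    exact (Finset.sum_le_card_nsmul _ _ _ fun c hc => hsum0 t c hc).trans (by simp)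
  have hB : ∑ s ∈ Finset.range M, ∑ t ∈ Finset.range M, ∑ c ∈ T, (X 1 s t c 1).im
      ≤ M * (T.card * (10 / τ)) := by
    refine (Finset.sum_le_card_nsmul _ _ (T.card * (10 / τ)) fun s _ => ?_).trans (by simp)
    rw [Finset.sum_comm]
    exact (Finset.sum_le_card_nsmul _ _ _ fun c hc => hsum1 s c hc).trans (by simp)
  have hC : ∑ p ∈ Finset.range M ×ˢ Finset.range M,
      (∑ c ∈ T, (X 0 p.1 p.2 c 0).im + ∑ c ∈ T, (X 1 p.1 p.2 c 1).im) ≤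
      ∑ p ∈ Finset.range M ×ˢ Finset.range M, 20 * T.card / l := by
    rw [Finset.sum_product]
    simp only [Finset.sum_add_distrib]
    refine (add_le_add hA hB).trans (le_of_eq ?_)
    simp only [Finset.sum_const, Finset.card_product, Finset.card_range, nsmul_eq_mul, hτd]
    push_cast
    field_simp
    ring
  obtain ⟨⟨s, t⟩, hst, hle⟩ := Finset.exists_le_of_sum_le
    (⟨(0, 0), by simp [hMn]⟩ : (Finset.range M ×ˢ Finset.range M).Nonempty) hC
  rw [Finset.mem_product, Finset.mem_range, Finset.mem_range] at hst
  have hs : (s : ℝ) ≤ M := by exact_mod_cast hst.1.le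
  have ht : (t : ℝ) ≤ M := by exact_mod_cast hst.2.le
  refine ⟨s / M, t / M, ⟨by positivity, (div_le_one hM0).2 hs⟩,
    ⟨by positivity, (div_le_one hM0).2 ht⟩, fun j hj => ⟨X j s t, fun c hc => ?_, ?_⟩⟩
  · convert hX j hj s t c hc using 2
    simp only [W, hτd]
    have e1 : l * (s / M) = s * (l / M) := by ring
    have e2 : l * (t / M) = t * (l / M) := by ring
    rw [e1, e2]
  · have h0 := hpos 0 (Or.inl rfl) s t
    have h1 := hpos 1 (Or.inr rfl) s t
    simp only at hle
    rcases hj with rfl | rfl <;> linarith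

lemma BoxEigen.sum_sq_filter_le {V : ℤ → ℝ} {a b : ℤ} (B : BoxEigen V a b) {x y : ℤ → ℂ} {e h : ℝ}
    {j : ℤ} (hj : j ∈ Finset.Icc a b) (hx : ∀ n ∉ Finset.Icc a b, x n = 0)
    (hy : ∀ n ∈ Finset.Icc a b, schr V x n - (e + h * Complex.I) * x n
      = (if n = j then 1 else 0) + y n) :
    ∑ k with |B.E k - e| ≤ h, B.φ k j ^ 2 ≤
      4 * h ^ 2 * ∑ n ∈ Finset.Icc a b, ‖x n‖ ^ 2 + 2 * ∑ n ∈ Finset.Icc a b, ‖y n‖ ^ 2 := by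
  rw [← B.sum_inner_coeff x, ← B.sum_inner_coeff y, Finset.mul_sum, Finset.mul_sum,
    ← Finset.sum_add_distrib]
  refine (Finset.sum_le_sum fun k hk => ?_).trans
    (Finset.sum_le_sum_of_subset_of_nonneg (Finset.filter_subset _ _) fun k _ _ => by positivity)
  have hk' : |B.E k - e| ≤ h := (Finset.mem_filter.1 hk).2
  have h1 := B.coeff_schr_sub hj hx hy k
  set c := B.coeff x k
  set d := B.coeff y k
  have h2 : (B.φ k j : ℂ) = (B.E k - (e + h * Complex.I)) * c - d := by rw [h1]; ring
  have h3 : ‖(B.E k - (e + h * Complex.I) : ℂ)‖ ^ 2 ≤ 2 * h ^ 2 := by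
    rw [← Complex.normSq_eq_norm_sq, Complex.normSq_apply]
    simp
    nlinarith [sq_le_sq' (abs_le.1 hk').1 (abs_le.1 hk').2]
  have h4 : |B.φ k j| ≤ ‖(B.E k - (e + h * Complex.I) : ℂ)‖ * ‖c‖ + ‖d‖ := by
    rw [← Real.norm_eq_abs, ← Complex.norm_real, h2, ← norm_mul]
    exact norm_sub_le _ _
  calc B.φ k j ^ 2 = |B.φ k j| ^ 2 := (sq_abs _).symm
    _ ≤ (‖(B.E k - (e + h * Complex.I) : ℂ)‖ * ‖c‖ + ‖d‖) ^ 2 := by gcongr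
    _ ≤ 2 * (‖(B.E k - (e + h * Complex.I) : ℂ)‖ ^ 2 * ‖c‖ ^ 2) + 2 * ‖d‖ ^ 2 := by
        nlinarith [sq_nonneg (‖(B.E k - (e + h * Complex.I) : ℂ)‖ * ‖c‖ - ‖d‖)]
    _ ≤ 2 * (2 * h ^ 2 * ‖c‖ ^ 2) + 2 * ‖d‖ ^ 2 := by gcongr
    _ = _ := by ring

lemma sum_comp_le {f : ℤ → ℝ} {s t : Finset ℤ} {g : ℤ → ℤ} (hf : ∀ n, 0 ≤ f n)
    (hg : Function.Injective g) (hst : ∀ n ∈ s, g n ∈ t) : ∑ n ∈ s, f (g n) ≤ ∑ n ∈ t, f n := by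
  rw [← Finset.sum_image (f := f) fun x _ y _ h => hg h]
  refine Finset.sum_le_sum_of_subset_of_nonneg (fun n hn => ?_) fun n _ _ => hf n
  obtain ⟨m, hm, rfl⟩ := Finset.mem_image.1 hn
  exact hst m hm

lemma exists_boundary_le {f : ℤ → ℝ} (hf : ∀ n, 0 ≤ f n) {R : ℤ} (hR : 3 ≤ R) {κ : ℝ}
    (hκ : 4 ≤ κ * (R - 2)) : ∃ r : ℤ, 2 ≤ r ∧ r + 1 ≤ R ∧
      f r + f (r + 1) + f (-r) + f (-r - 1) ≤ κ * ∑ n ∈ Finset.Icc (-R) R, f n := by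
  set Q := ∑ n ∈ Finset.Icc (-R) R, f n with hQd
  have hQ : 0 ≤ Q := Finset.sum_nonneg fun n _ => hf n
  set s := Finset.Icc (2 : ℤ) (R - 1)
  have hs : s.Nonempty := ⟨2, by simp [s]; omega⟩
  have hcard : (s.card : ℝ) = R - 2 := by
    have : ((s.card : ℤ) : ℝ) = ((R - 2 : ℤ) : ℝ) := by
      congr 1
      simp only [s, Int.card_Icc]
      omega
    push_cast at this
    exact this
  have hle : ∑ r ∈ s, (f r + f (r + 1) + f (-r) + f (-r - 1)) ≤
      ∑ r ∈ s, κ * Q := by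
    simp only [Finset.sum_add_distrib, Finset.sum_const, nsmul_eq_mul, hcard]
    have e1 : ∑ r ∈ s, f r ≤ Q := sum_comp_le (g := fun n => n) hf (fun _ _ h => h) fun n hn => by
      simp only [s, Finset.mem_Icc] at hn ⊢; omega
    have e2 : ∑ r ∈ s, f (r + 1) ≤ Q := sum_comp_le (g := fun n => n + 1) hf
      (fun _ _ h => by simpa using h) fun n hn => by
      simp only [s, Finset.mem_Icc] at hn ⊢; omega
    have e3 : ∑ r ∈ s, f (-r) ≤ Q := sum_comp_le (g := fun n => -n) hf
      (fun _ _ h => by simpa using h) fun n hn => by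
      simp only [s, Finset.mem_Icc] at hn ⊢; omega
    have e4 : ∑ r ∈ s, f (-r - 1) ≤ Q := sum_comp_le (g := fun n => -n - 1) hf
      (fun _ _ h => by simpa using h) fun n hn => by
      simp only [s, Finset.mem_Icc] at hn ⊢; omega
    nlinarith
  obtain ⟨r, hr, h⟩ := Finset.exists_le_of_sum_le hs hle
  simp only [s, Finset.mem_Icc] at hr
  exact ⟨r, hr.1, by omega, h⟩

lemma BoxEigen.sum_sq_filter_le_of_isRes {V V' : ℤ → ℝ} {N R : ℤ} (B : BoxEigen V (-N) N)
    {e h : ℝ} {j : ℤ} (hj : j = 0 ∨ j = 1) {x : ℤ → ℂ} (hR : 1 ≤ R)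
    (hx : IsRes V' (-R) R (e + h * Complex.I) j x)
    (hVV : ∀ n ∈ Finset.Icc (-R) R, n ≠ 0 → n ≠ 1 → V n = V' n)
    (hV0 : |V 0 - V' 0| ≤ h) (hV1 : |V 1 - V' 1| ≤ h)
    (hN : N = R ∨ (R < N ∧ 4 ≤ h ^ 2 * (R - 2))) :
    ∑ k with |B.E k - e| ≤ h, B.φ k j ^ 2 ≤ 8 * h * (x j).im := by
  have hjR : j ∈ Finset.Icc (-R) R := by rw [Finset.mem_Icc]; omega
  have him := hx.im_eq hjR
  have hzim : ((e : ℂ) + h * Complex.I).im = h := by simp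
  rw [hzim] at him
  rw [him]
  set Q := ∑ n ∈ Finset.Icc (-R) R, ‖x n‖ ^ 2 with hQ
  have hh : 0 ≤ h := (abs_nonneg _).trans hV0
  have hdiff : ∀ n ∈ Finset.Icc (-R) R, ‖(V n - V' n : ℝ) • x n‖ ^ 2 ≤ h ^ 2 * ‖x n‖ ^ 2 := by
    intro n hn
    rw [norm_smul, mul_pow, Real.norm_eq_abs]
    gcongr
    by_cases h0 : n = 0
    · rw [h0]; exact hV0
    by_cases h1 : n = 1
    · rw [h1]; exact hV1
    rw [hVV n hn h0 h1, sub_self, abs_zero]; exact hh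
  rcases hN with rfl | ⟨hRN, hκ⟩
  · refine (B.sum_sq_filter_le (y := fun n => (V n - V' n : ℝ) • x n) hjR hx.supp
      fun n hn => ?_).trans ?_
    · rw [← hx.eq n hn]
      simp only [schr, sub_smul]
      ring
    · have : ∑ n ∈ Finset.Icc (-N) N, ‖(V n - V' n : ℝ) • x n‖ ^ 2 ≤ h ^ 2 * Q := by
        rw [hQ, Finset.mul_sum]
        exact Finset.sum_le_sum hdiff
      have hQ0 : 0 ≤ Q := Finset.sum_nonneg fun _ _ => sq_nonneg _
      nlinarith [mul_nonneg (sq_nonneg h) hQ0]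
  · have hR3 : 3 ≤ R := by
      by_contra h'
      have : (R : ℝ) ≤ 2 := by exact_mod_cast (by omega : R ≤ 2)
      nlinarith [sq_nonneg h]
    obtain ⟨r, hr2, hrR, hr⟩ := exists_boundary_le (f := fun n => ‖x n‖ ^ 2)
      (fun n => sq_nonneg _) hR3 hκ
    set x' : ℤ → ℂ := fun n => if n ∈ Finset.Icc (-r) r then x n else 0 with hx'
    have hjN : j ∈ Finset.Icc (-N) N := by rw [Finset.mem_Icc]; omega
    have hin : ∀ n : ℤ, -r ≤ n → n ≤ r → x' n = x n := fun n h1 h2 => by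
      simp only [hx']; rw [if_pos (Finset.mem_Icc.2 ⟨h1, h2⟩)]
    have hout : ∀ n : ℤ, ¬ (-r ≤ n ∧ n ≤ r) → x' n = 0 := fun n h1 => by
      simp only [hx']; rw [if_neg (by rwa [Finset.mem_Icc])]
    set y : ℤ → ℂ := fun n => schr V x' n - (e + h * Complex.I) * x' n - if n = j then 1 else 0
      with hy
    set g : ℤ → ℝ := fun n => h ^ 2 * ‖x' n‖ ^ 2 + (if n = r then ‖x (r + 1)‖ ^ 2 else 0)
      + (if n = r + 1 then ‖x r‖ ^ 2 else 0) + (if n = -r then ‖x (-r - 1)‖ ^ 2 else 0)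
      + (if n = -r - 1 then ‖x (-r)‖ ^ 2 else 0) with hg
    have hyg : ∀ n, ‖y n‖ ^ 2 ≤ g n := by
      intro n
      by_cases h1 : -r ≤ n ∧ n ≤ r
      · have hnR : n ∈ Finset.Icc (-R) R := by rw [Finset.mem_Icc]; omega
        have hxn := hx.eq n hnR
        simp only [schr] at hxn
        by_cases h2 : n = r
        · have hV : V n = V' n := hVV n hnR (by omega) (by omega)
          have : y n = - x (r + 1) := by
            simp only [hy, schr]
            rw [hout (n + 1) (by omega), hin (n - 1) (by omega) (by omega),
              hin n h1.1 h1.2, hV, ← h2, ← hxn]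
            ring
          rw [this, norm_neg]
          simp only [hg, h2]
          rw [if_pos trivial, if_neg (by omega), if_neg (by omega), if_neg (by omega)]
          nlinarith [mul_nonneg (sq_nonneg h) (sq_nonneg ‖x' r‖)]
        · by_cases h3 : n = -r
          · have hV : V n = V' n := hVV n hnR (by omega) (by omega)
            have : y n = - x (-r - 1) := by
              simp only [hy, schr]
              rw [hout (n - 1) (by omega), hin (n + 1) (by omega) (by omega),
                hin n h1.1 h1.2, hV, ← h3, ← hxn]
              ring
            rw [this, norm_neg]
            simp only [hg, h3]
            rw [if_neg (by omega), if_neg (by omega), if_pos trivial, if_neg (by omega)]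
            nlinarith [mul_nonneg (sq_nonneg h) (sq_nonneg ‖x' (-r)‖)]
          · have : y n = (V n - V' n : ℝ) • x n := by
              simp only [hy, schr]
              rw [hin (n - 1) (by omega) (by omega), hin (n + 1) (by omega) (by omega),
                hin n h1.1 h1.2, ← hxn, sub_smul]
              ring
            rw [this]
            simp only [hg]
            rw [hin n h1.1 h1.2, if_neg h2, if_neg (by omega), if_neg h3, if_neg (by omega)]
            simpa using hdiff n hnR
      · have hnj : n ≠ j := by omega
        by_cases h2 : n = r + 1
        · have : y n = x r := by
            simp only [hy, schr]
            rw [hout (n + 1) (by omega), hout n h1, hin (n - 1) (by omega) (by omega), if_neg hnj,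
              h2]
            simp
          rw [this]
          simp only [hg, h2]
          rw [if_neg (by omega), if_pos trivial, if_neg (by omega), if_neg (by omega)]
          nlinarith [mul_nonneg (sq_nonneg h) (sq_nonneg ‖x' (r + 1)‖)]
        · by_cases h3 : n = -r - 1
          · have : y n = x (-r) := by
              simp only [hy, schr]
              rw [hout (n - 1) (by omega), hout n h1, hin (n + 1) (by omega) (by omega), if_neg hnj,
                h3]
              simp
            rw [this]
            simp only [hg, h3]
            rw [if_neg (by omega), if_neg (by omega), if_neg (by omega), if_pos trivial]
            nlinarith [mul_nonneg (sq_nonneg h) (sq_nonneg ‖x' (-r - 1)‖)]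
          · have : y n = 0 := by
              simp only [hy, schr]
              rw [hout (n - 1) (by omega), hout (n + 1) (by omega), hout n h1, if_neg hnj]
              simp
            rw [this]
            simp only [hg]
            rw [if_neg (by omega), if_neg h2, if_neg (by omega), if_neg h3]
            simp only [norm_zero]
            nlinarith [mul_nonneg (sq_nonneg h) (sq_nonneg ‖x' n‖)]
    have hQ' : ∑ n ∈ Finset.Icc (-N) N, ‖x' n‖ ^ 2 ≤ Q := by
      rw [hQ]
      have hsub : Finset.Icc (-R) R ⊆ Finset.Icc (-N) N :=
        Finset.Icc_subset_Icc (by omega) (by omega)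
      rw [← Finset.sum_subset hsub fun n _ hn => by
        rw [hout n (by rw [Finset.mem_Icc] at hn; omega)]; simp]
      refine Finset.sum_le_sum fun n _ => ?_
      simp only [hx']
      split_ifs
      · exact le_rfl
      · simp
    have hY : ∑ n ∈ Finset.Icc (-N) N, ‖y n‖ ^ 2 ≤ h ^ 2 * Q + h ^ 2 * Q := by
      refine (Finset.sum_le_sum fun n _ => hyg n).trans ?_
      simp only [hg, Finset.sum_add_distrib, Finset.sum_ite_eq', ← Finset.mul_sum]
      rw [if_pos (by rw [Finset.mem_Icc]; omega), if_pos (by rw [Finset.mem_Icc]; omega),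
        if_pos (by rw [Finset.mem_Icc]; omega), if_pos (by rw [Finset.mem_Icc]; omega)]
      have := mul_le_mul_of_nonneg_left hQ' (sq_nonneg h)
      simp only [← hQ] at hr
      linarith
    refine (B.sum_sq_filter_le (x := x') (y := y) hjN (fun n hn => ?_) fun n hn => ?_).trans ?_
    · exact hout n (by rw [Finset.mem_Icc] at hn; omega)
    · simp only [hy]; ring
    · have := mul_le_mul_of_nonneg_left hQ' (sq_nonneg h)
      linarith

lemma BoxEigen.sum_sq_linComb {V : ℤ → ℝ} {a b : ℤ} (B : BoxEigen V a b) (c : Finset.Icc a b → ℝ) :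
    ∑ n ∈ Finset.Icc a b, (∑ k, c k * B.φ k n) ^ 2 = ∑ k, c k ^ 2 := by
  have h := B.sum_inner_coeff (fun n => ∑ k, c k * B.φ k n)
  simp only [Real.norm_eq_abs, sq_abs] at h
  rw [← h]
  refine Finset.sum_congr rfl fun k _ => ?_
  congr 1
  simp only [BoxEigen.coeff, smul_eq_mul, Finset.mul_sum]
  rw [Finset.sum_comm]
  have : ∀ k', ∑ n ∈ Finset.Icc a b, B.φ k n * (c k' * B.φ k' n) = if k = k' then c k' else 0 := by
    intro k'
    have h1 : ∀ n, B.φ k n * (c k' * B.φ k' n) = c k' * (B.φ k n * B.φ k' n) := fun n => by ring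
    simp only [h1]
    rw [← Finset.mul_sum, B.orth]
    split_ifs <;> simp
  simp only [this]
  simp

lemma sum_sq_le_of_supp {f : ℤ → ℝ} {t : Finset ℤ} (hf : ∀ n ∉ t, f n = 0) (s : Finset ℤ) :
    ∑ n ∈ s, f n ^ 2 ≤ ∑ n ∈ t, f n ^ 2 := by
  classical
  rw [← Finset.sum_filter_add_sum_filter_not s (· ∈ t)]
  have h1 : ∑ n ∈ s with n ∉ t, f n ^ 2 = 0 :=
    Finset.sum_eq_zero fun n hn => by rw [hf n (Finset.mem_filter.1 hn).2]; norm_num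
  rw [h1, add_zero]
  exact Finset.sum_le_sum_of_subset_of_nonneg (fun n hn => (Finset.mem_filter.1 hn).2)
    fun n _ _ => sq_nonneg _

lemma BoxEigen.exists_approx {V : ℤ → ℝ} {a b : ℤ} (B : BoxEigen V a b) {M η : ℝ}
    (hM : ∀ n, |V n| ≤ M) {J : ℕ} {S : Finset (Finset.Icc a b)} (hS : S.card ≤ J)
    (hJ : J ≤ (Finset.Icc a b).card) {j : ℤ} (hj : j ∈ Finset.Icc a b)
    (hη : ∑ k ∈ Finset.univ \ S, B.φ k j ^ 2 ≤ η) :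
    ∃ (u : Fin J → ℤ → ℝ) (e c : Fin J → ℝ), (∀ m, |e m| ≤ 2 + M) ∧ (∀ m, |c m| ≤ 1) ∧
      (∀ m n, |u m n| ≤ 1) ∧ (∀ m, ∀ n ∈ Finset.Icc a b, schr V (u m) n = e m * u m n) ∧
      (∀ m, ∀ s : Finset ℤ, ∑ n ∈ s, u m n ^ 2 ≤ 1) ∧
      ∀ s : Finset ℤ, ∑ n ∈ s, ((if n = j then 1 else 0) - ∑ m, c m * u m n) ^ 2 ≤ η := by
  classical
  obtain ⟨S', hSS', hS'⟩ := Finset.exists_superset_card_eq hS (by simpa using hJ)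
  let g := S'.equivFinOfCardEq hS'
  have hs : ∀ k, ∀ s : Finset ℤ, ∑ n ∈ s, B.φ k n ^ 2 ≤ 1 := fun k s =>
    (sum_sq_le_of_supp (B.supp k) s).trans (B.sum_sq k).le
  have hle : ∀ k n, |B.φ k n| ≤ 1 := fun k n => by
    have := hs k {n}
    rw [Finset.sum_singleton] at this
    exact abs_le_one_iff_mul_self_le_one.2 (by nlinarith)
  refine ⟨fun m => B.φ (g.symm m), fun m => B.E (g.symm m), fun m => B.φ (g.symm m) j,
    fun m => B.abs_E_le hM _, fun m => hle _ _, fun m n => hle _ _, fun m n hn => B.eig _ n hn,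
    fun m s => hs _ s, fun s => ?_⟩
  have hsum : ∀ n, ∑ m, B.φ (g.symm m) j * B.φ (g.symm m) n = ∑ k ∈ S', B.φ k j * B.φ k n := by
    intro n
    rw [← Finset.sum_coe_sort S' (fun k => B.φ k j * B.φ k n)]
    exact Equiv.sum_comp g.symm fun k : S' => B.φ k j * B.φ k n
  have hdiff : ∀ n, (if n = j then (1 : ℝ) else 0) - ∑ m, B.φ (g.symm m) j * B.φ (g.symm m) n =
      ∑ k, (if k ∈ S' then 0 else B.φ k j) * B.φ k n := by
    intro n
    have h1 : (if n = j then (1 : ℝ) else 0) = ∑ k, B.φ k j * B.φ k n := by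
      by_cases hn : n ∈ Finset.Icc a b
      · rw [B.compl j hj n hn]; simp only [eq_comm]
      · rw [if_neg (by rintro rfl; exact hn hj)]
        exact (Finset.sum_eq_zero fun k _ => by rw [B.supp k n hn, mul_zero]).symm
    rw [h1, hsum, ← Finset.sum_filter_add_sum_filter_not Finset.univ (· ∈ S')]
    simp only [ite_mul, zero_mul, Finset.sum_ite, Finset.sum_const_zero, zero_add]
    rw [Finset.filter_mem_eq_inter, Finset.univ_inter]
    ring
  refine (sum_sq_le_of_supp (t := Finset.Icc a b) (fun n hn => ?_) s).trans ?_
  · rw [hdiff]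
    exact Finset.sum_eq_zero fun k _ => by rw [B.supp k n hn, mul_zero]
  · simp only [hdiff]
    rw [B.sum_sq_linComb]
    refine le_trans ?_ hη
    have : ∀ k, (if k ∈ S' then 0 else B.φ k j) ^ 2 = if k ∈ S' then 0 else B.φ k j ^ 2 := by
      intro k; split_ifs <;> simp
    simp only [this, Finset.sum_ite, Finset.sum_const_zero, zero_add]
    refine Finset.sum_le_sum_of_subset_of_nonneg (fun k hk => ?_) fun _ _ _ => sq_nonneg _
    rw [Finset.mem_sdiff]
    exact ⟨Finset.mem_univ _, fun h => (Finset.mem_filter.1 hk).2 (hSS' h)⟩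

lemma Ultrafilter.exists_tendsto_of_abs_le {ι : Type*} (F : Ultrafilter ι) {a : ι → ℝ} {C : ℝ}
    (ha : ∀ i : ι, |a i| ≤ C) : ∃ L, Filter.Tendsto a F (nhds L) := by
  obtain ⟨L, _, hL⟩ := (isCompact_Icc (a := -C) (b := C)).ultrafilter_le_nhds' (F.map a)
    (Ultrafilter.mem_map.2 (Filter.univ_mem' fun i => abs_le.1 (ha i)))
  exact ⟨L, hL⟩

lemma exists_span_near_single {V : ℤ → ℝ} {M : ℝ} (hM : ∀ n, |V n| ≤ M) {N : ℕ → ℤ}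
    (hN : Filter.Tendsto N Filter.atTop Filter.atTop) {j : ℤ} {η : ℝ} (hη : 0 ≤ η) {J : ℕ}
    (h : ∀ᶠ i in Filter.atTop, ∃ B : BoxEigen V (-N i) (N i),
      ∃ S : Finset (Finset.Icc (-N i) (N i)),
      S.card ≤ J ∧ ∑ k ∈ Finset.univ \ S, B.φ k j ^ 2 ≤ η ^ 2) :
    ∃ v ∈ Submodule.span ℝ
      {ψ : lp (fun _ : ℤ => ℝ) 2 | ∃ E : ℝ, IsEigenfunction V E ψ},
      ‖lp.single 2 j (1 : ℝ) - v‖ ≤ η := by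
  have hev : ∀ᶠ i in Filter.atTop, ∃ (u : Fin J → ℤ → ℝ) (e c : Fin J → ℝ),
      (∀ m, |e m| ≤ 2 + M) ∧ (∀ m, |c m| ≤ 1) ∧
      (∀ m n, |u m n| ≤ 1) ∧ (∀ m, ∀ n ∈ Finset.Icc (-N i) (N i), schr V (u m) n = e m * u m n) ∧
      (∀ m, ∀ s : Finset ℤ, ∑ n ∈ s, u m n ^ 2 ≤ 1) ∧
      ∀ s : Finset ℤ, ∑ n ∈ s, ((if n = j then 1 else 0) - ∑ m, c m * u m n) ^ 2 ≤ η ^ 2 := by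
    filter_upwards [h, hN.eventually_ge_atTop (|j| + J)] with i ⟨B, S, hS, hB⟩ hi
    refine B.exists_approx hM hS ?_ ?_ hB
    · rw [Int.card_Icc]
      have := abs_nonneg j
      omega
    · rw [Finset.mem_Icc]
      have := neg_abs_le j
      have := le_abs_self j
      omega
  obtain ⟨i₀, hi₀⟩ := Filter.eventually_atTop.1 hev
  choose u e c he hc hu heig husq happ using fun i : ℕ => hi₀ (i + i₀) (Nat.le_add_left _ _)
  let F : Ultrafilter ℕ := Filter.hyperfilter ℕ
  have hF : (F : Filter ℕ) ≤ Filter.atTop := by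
    rw [← Nat.cofinite_eq_atTop]
    exact Filter.hyperfilter_le_cofinite
  choose u' hu' using fun m n => F.exists_tendsto_of_abs_le fun i => hu i m n
  choose e' he' using fun m => F.exists_tendsto_of_abs_le fun i => he i m
  choose c' hc' using fun m => F.exists_tendsto_of_abs_le fun i => hc i m
  have hsol : ∀ m n, schr V (u' m) n = e' m * u' m n := by
    intro m n
    have h1 : Filter.Tendsto (fun i => schr V (u i m) n) F (nhds (schr V (u' m) n)) :=
      ((hu' m (n + 1)).add (hu' m (n - 1))).add ((hu' m n).const_mul (V n))
    have h2 := (he' m).mul (hu' m n)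
    refine tendsto_nhds_unique_of_eventuallyEq h1 h2 ?_
    have hN' : ∀ᶠ i in (F : Filter ℕ), |n| ≤ N (i + i₀) :=
      hF ((hN.comp (Filter.tendsto_add_atTop_nat i₀)).eventually_ge_atTop |n|)
    filter_upwards [hN'] with i hi
    refine heig i m n ?_
    rw [Finset.mem_Icc]
    have := neg_abs_le n
    have := le_abs_self n
    omega
  have hsq : ∀ m, ∀ s : Finset ℤ, ∑ n ∈ s, u' m n ^ 2 ≤ 1 := fun m s =>
    le_of_tendsto (tendsto_finsetSum s fun n _ => (hu' m n).pow 2)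
      (Filter.Eventually.of_forall fun i => husq i m s)
  have happ' : ∀ s : Finset ℤ,
      ∑ n ∈ s, ((if n = j then 1 else 0) - ∑ m, c' m * u' m n) ^ 2 ≤ η ^ 2 := fun s =>
    le_of_tendsto (tendsto_finsetSum s fun n _ => (tendsto_const_nhds.sub
      (tendsto_finsetSum _ fun m _ => (hc' m).mul (hu' m n))).pow 2)
      (Filter.Eventually.of_forall fun i => happ i s)
  let ψ : Fin J → lp (fun _ : ℤ => ℝ) 2 := fun m => ⟨u' m, memℓp_gen' (C := 1) fun s => by
    simpa using hsq m s⟩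
  have hψ : ∀ m, ψ m ∈ Submodule.span ℝ
      {ψ : lp (fun _ : ℤ => ℝ) 2 | ∃ E : ℝ, IsEigenfunction V E ψ} := by
    intro m
    by_cases h0 : ψ m = 0
    · rw [h0]; exact Submodule.zero_mem _
    · exact Submodule.subset_span ⟨e' m, h0, fun n => hsol m n⟩
  refine ⟨∑ m, c' m • ψ m, Submodule.sum_mem _ fun m _ => Submodule.smul_mem _ _ (hψ m), ?_⟩
  refine lp.norm_le_of_forall_sum_le (by norm_num) hη fun s => ?_
  convert happ' s using 2 with n
  · have : (∑ m, c' m • ψ m : lp (fun _ : ℤ => ℝ) 2) n = ∑ m, c' m * u' m n := by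
      rw [lp.coeFn_sum, Finset.sum_apply]
      rfl
    simp only [ENNReal.toReal_ofNat, Real.rpow_ofNat, Real.norm_eq_abs, sq_abs]
    rw [lp.coeFn_sub, Pi.sub_apply, this, lp.single_apply, Pi.single_apply]
  · simp

lemma hasPurePointSpectrum_of_boxEigen {V : ℤ → ℝ} {M : ℝ} (hM : ∀ n, |V n| ≤ M) {N : ℕ → ℤ}
    (hN : Filter.Tendsto N Filter.atTop Filter.atTop)
    (h : ∀ j : ℤ, ∀ η > 0, ∃ J : ℕ, ∀ᶠ i in Filter.atTop, ∃ B : BoxEigen V (-N i) (N i),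
      ∃ S : Finset (Finset.Icc (-N i) (N i)),
      S.card ≤ J ∧ ∑ k ∈ Finset.univ \ S, B.φ k j ^ 2 ≤ η) : HasPurePointSpectrum V := by
  rw [HasPurePointSpectrum]
  set W := (Submodule.span ℝ
    {ψ : lp (fun _ : ℤ => ℝ) 2 | ∃ E : ℝ, IsEigenfunction V E ψ}) with hW
  have h1 : ∀ j : ℤ, lp.single 2 j (1 : ℝ) ∈ W.topologicalClosure := by
    intro j
    rw [← SetLike.mem_coe, Submodule.topologicalClosure_coe, Metric.mem_closure_iff]
    intro δ hδ
    obtain ⟨J, hJ⟩ := h j ((δ / 2) ^ 2) (by positivity)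
    obtain ⟨v, hv, hv'⟩ := exists_span_near_single hM hN (by positivity) hJ
    refine ⟨v, hv, ?_⟩
    rw [dist_eq_norm]
    linarith
  refine (Submodule.eq_top_iff').2 fun f => ?_
  have h2 := lp.hasSum_single (p := 2) (by norm_num) f
  refine (W.isClosed_topologicalClosure.mem_of_tendsto h2 (Filter.Eventually.of_forall fun s => ?_))
  refine Submodule.sum_mem _ fun j _ => ?_
  have : lp.single 2 j (f j) = f j • (lp.single 2 j (1 : ℝ) : lp (fun _ : ℤ => ℝ) 2) := by
    rw [← lp.single_smul, smul_eq_mul, mul_one]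
  rw [this]
  exact Submodule.smul_mem _ _ (h1 j)

lemma Barrier.neg {U : ℤ → ℝ} {E β : ℝ} {p q : ℤ} (hpq : p ≤ q + 1) (h : Barrier U E β p q) :
    Barrier (fun n => U (-n)) E β (-q) (-p) := by
  obtain ⟨w, hw, h1, h0, hβ⟩ := h
  refine barrier_of_isSol (by omega) (w := fun n => w (-n)) (fun n => ?_) (by simpa using h1) ?_ ?_
  · rw [schr_neg]
    simp only [neg_neg]
    exact hw (-n)
  · rw [show -(-q - 1) = q + 1 by ring]; exact h0
  · rw [show -(-p + 1) = p - 1 by ring]; exact hβ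

lemma Barrier.mono {U : ℤ → ℝ} {E β β' : ℝ} {p q : ℤ} (hβ : β ≤ β') (h : Barrier U E β' p q) :
    Barrier U E β p q := by
  obtain ⟨w, hw, h1, h0, h2⟩ := h
  exact ⟨w, hw, h1, h0, hβ.trans h2⟩

lemma sum_Icc_neg {F : Type*} [AddCommMonoid F] (f : ℤ → F) (a b : ℤ) :
    ∑ n ∈ Finset.Icc (-b) (-a), f n = ∑ n ∈ Finset.Icc a b, f (-n) := by
  refine Finset.sum_nbij' (fun n => -n) (fun n => -n) ?_ ?_ ?_ ?_ ?_
  · intro n hn; simp only [Finset.mem_Icc] at hn ⊢; omega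
  · intro n hn; simp only [Finset.mem_Icc] at hn ⊢; omega
  · intro n _; simp
  · intro n _; simp
  · intro n _; simp

lemma NonRes.neg {U : ℤ → ℝ} {E h : ℝ} {p q : ℤ} (hN : NonRes U E h p q) :
    NonRes (fun n => U (-n)) E h (-q) (-p) := by
  intro x hx
  have h1 := hN (fun n => x (-n)) fun n hn => hx _ (by
    simp only [Finset.mem_Icc] at hn ⊢; omega)
  rw [sum_Icc_neg, sum_Icc_neg]
  simpa only [schr_neg] using h1

/-- For every energy in `[-K, K]`, an interval with endpoints next to `a` and `b` is a barrier for
some `η`-close energy. -/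
def Barriers (U : ℤ → ℝ) (K η β : ℝ) (a b : ℤ) : Prop :=
  ∀ E, |E| ≤ K → ∃ E₀, |E - E₀| ≤ η ∧ ∃ p q, (p = a ∨ p = a + 1) ∧ (q = b - 1 ∨ q = b) ∧
    Barrier U E₀ β p q

/-- `E` is not `h`-resonant with any of the intervals with endpoints next to `a` and `b`. -/
def NonResNear (U : ℤ → ℝ) (E h : ℝ) (a b : ℤ) : Prop :=
  ∀ p q, (p = a ∨ p = a + 1) → (q = b - 1 ∨ q = b) → NonRes U E h p q

lemma sum_sq_annulus_le {U : ℤ → ℝ} {K E h β η : ℝ} {φ : ℤ → ℝ} {a b c d : ℤ} (hab : a + 2 ≤ b)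
    (hbc : b < c) (hcd : c + 2 ≤ d) (hβ : 1 ≤ β) (hh : 0 < h)
    (hη : η ≤ h / (2 * β)) (hE : |E| ≤ K) (hφ : ∀ n, |φ n| ≤ 1)
    (heig : ∀ n ∈ Finset.Icc a d, schr U φ n = E * φ n)
    (hB₁ : Barriers U K η β a b) (hB₂ : Barriers U K η β c d)
    (hN₁ : NonResNear U E h a b) (hN₂ : NonResNear U E h c d) (hN : NonResNear U E h a d) :
    ∑ n ∈ Finset.Ioo b c, φ n ^ 2 ≤ 16 / (β ^ 2 * h ^ 2) := by
  have hη2 : η ≤ h / 2 := hη.trans (div_le_div_of_nonneg_left hh.le (by norm_num) (by linarith))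
  have hβ0 : 0 < β := by linarith
  obtain ⟨E₁, hE₁, p, q, hp, hq, hpq⟩ := hB₁ E hE
  obtain ⟨E₂, hE₂, r, s, hr, hs, hrs⟩ := hB₂ E hE
  have hL := leftCorr_of_barrier (φ := φ) (by omega) hβ0 hh hη2 hE₁ hpq (hN₁ p q hp hq) (hφ _)
  have hR : RightCorr U E φ η β h r s := by
    refine rightCorr_of_leftCorr ?_
    exact leftCorr_of_barrier (by omega) hβ0 hh hη2 hE₂ (hrs.neg (by omega)) (hN₂ r s hr hs).neg
      (hφ _)
  refine le_trans ?_ (sum_sq_Ioo_le (by omega) (by omega) (by omega) hβ0 hh hη (fun n hn => ?_)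
    hL hR (hN p s hp hs))
  · exact Finset.sum_le_sum_of_subset_of_nonneg (Finset.Ioo_subset_Ioo (by omega) (by omega))
      fun _ _ _ => sq_nonneg _
  · exact heig n (Finset.Icc_subset_Icc (by omega) (by omega) hn)

lemma sum_sq_terminal_le {U : ℤ → ℝ} {K E h β η : ℝ} {φ : ℤ → ℝ} {a b d : ℤ} (hab : a + 2 ≤ b)
    (hbd : b < d) (hβ : 1 ≤ β) (hh : 0 < h) (hη0 : 0 ≤ η)
    (hη : η ≤ h / (2 * β)) (hE : |E| ≤ K) (hφ : ∀ n, |φ n| ≤ 1)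
    (heig : ∀ n ∈ Finset.Icc a d, schr U φ n = E * φ n) (hφd : φ (d + 1) = 0)
    (hB₁ : Barriers U K η β a b) (hN₁ : NonResNear U E h a b) (hN : NonResNear U E h a d) :
    ∑ n ∈ Finset.Ioc b d, φ n ^ 2 ≤ 16 / (β ^ 2 * h ^ 2) := by
  have hη2 : η ≤ h / 2 := hη.trans (div_le_div_of_nonneg_left hh.le (by norm_num) (by linarith))
  have hβ0 : 0 < β := by linarith
  obtain ⟨E₁, hE₁, p, q, hp, hq, hpq⟩ := hB₁ E hE
  have hL := leftCorr_of_barrier (φ := φ) (by omega) hβ0 hh hη2 hE₁ hpq (hN₁ p q hp hq) (hφ _)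
  refine le_trans ?_ (sum_sq_Ioo_le (by omega) (by omega) (by omega) hβ0 hh hη (fun n hn => ?_)
    hL (rightCorr_of_eq_zero hη0 hβ0.le hφd) (hN p d hp (Or.inr rfl)))
  · refine Finset.sum_le_sum_of_subset_of_nonneg (fun n hn => ?_) fun _ _ _ => sq_nonneg _
    simp only [Finset.mem_Ioc, Finset.mem_Ioo] at hn ⊢
    omega
  · exact heig n (Finset.Icc_subset_Icc (by omega) (by omega) hn)

lemma sum_union_le {f : ℤ → ℝ} (hf : ∀ n, 0 ≤ f n) (s t : Finset ℤ) :
    ∑ n ∈ s ∪ t, f n ≤ ∑ n ∈ s, f n + ∑ n ∈ t, f n := by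
  rw [← Finset.sum_union_inter]
  exact le_add_of_nonneg_right (Finset.sum_nonneg fun n _ => hf n)

/-- Parameters of the multiscale construction: barriers occupy `[a l, N l]`, are `β l`-effective
for energies in an `η l`-net, and resonances are measured at width `h l`. -/
structure Scales (a N : ℕ → ℤ) (h β η : ℕ → ℝ) : Prop where
  two_le : ∀ l, 2 ≤ a l
  lt : ∀ l, a l + 2 ≤ N l
  lt_succ : ∀ l, N l < a (l + 1)
  one_le_β : ∀ l, 1 ≤ β l
  β_le : ∀ l, β l ≤ β (l + 1)
  η_nonneg : ∀ l, 0 ≤ η l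
  η_le : ∀ l, η (l + 1) ≤ η l
  h_pos : ∀ l, 0 < h l
  η_le_h : ∀ l, η l ≤ h l / (2 * β l)
  small : ∀ l, 16 / (β l ^ 2 * h l ^ 2) ≤ (1 / 2) ^ (l + 4)

lemma Barriers.mono {U : ℤ → ℝ} {K η η' β β' : ℝ} {a b : ℤ} (hη : η' ≤ η) (hβ : β ≤ β')
    (h : Barriers U K η' β' a b) : Barriers U K η β a b := by
  intro E hE
  obtain ⟨E₀, h0, p, q, hp, hq, hpq⟩ := h E hE
  exact ⟨E₀, h0.trans hη, p, q, hp, hq, hpq.mono hβ⟩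

/-- `E` is non-resonant at level `l`. -/
def NonResAt (U : ℤ → ℝ) (E : ℝ) (a N : ℕ → ℤ) (h : ℕ → ℝ) (l : ℕ) : Prop :=
  NonResNear U E (h l) (a l) (N l) ∧ NonResNear U E (h l) (a (l + 2)) (N (l + 2)) ∧
    NonResNear U E (h l) (a l) (N (l + 2))

namespace Scales

variable {a N : ℕ → ℤ} {h β η : ℕ → ℝ}

lemma N_lt (hs : Scales a N h β η) (l : ℕ) : N l < N (l + 1) := by
  have := hs.lt_succ l
  have := hs.lt (l + 1)
  omega

lemma strictMono (hs : Scales a N h β η) : StrictMono N := strictMono_nat_of_lt_succ hs.N_lt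

lemma tail_le (hs : Scales a N h β η) {U : ℤ → ℝ} {K E : ℝ} {φ : ℤ → ℝ} {l₀ i : ℕ} (hl : l₀ ≤ i)
    (hB : ∀ l, Barriers U K (η l) (β l) (a l) (N l)) (hE : |E| ≤ K) (hφ : ∀ n, |φ n| ≤ 1)
    (heig : ∀ n ∈ Finset.Icc (-N (i + 2)) (N (i + 2)), schr U φ n = E * φ n)
    (hφd : φ (N (i + 2) + 1) = 0) (hN : ∀ l, l₀ ≤ l → l ≤ i → NonResAt U E a N h l) :
    ∑ n ∈ Finset.Ioc (N l₀) (N (i + 2)), φ n ^ 2 ≤ 1 / 8 := by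
  have heig' : ∀ l ≤ i, ∀ n ∈ Finset.Icc (a l) (N (l + 2)), schr U φ n = E * φ n := by
    intro l hl n hn
    refine heig n (Finset.Icc_subset_Icc ?_ ?_ hn)
    · have := hs.two_le l
      have := hs.two_le (i + 2)
      have := hs.lt (i + 2)
      omega
    · exact hs.strictMono.monotone (by omega)
  have key : ∀ m, l₀ ≤ m → m ≤ i → ∑ n ∈ Finset.Ioc (N l₀) (N m), φ n ^ 2 ≤
      (1 / 2) ^ (l₀ + 3) - (1 / 2) ^ (m + 3) := by
    intro m hm
    induction m, hm using Nat.le_induction with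
    | base => simp
    | succ m hm ih =>
      intro hmi
      have h1 := ih (by omega)
      obtain ⟨n1, n2, n3⟩ := hN m hm (by omega)
      have h2 : ∑ n ∈ Finset.Ioc (N m) (N (m + 1)), φ n ^ 2 ≤ (1 / 2) ^ (m + 4) := by
        refine le_trans ?_ (hs.small m)
        refine le_trans ?_ (sum_sq_annulus_le (hs.lt m) ((hs.N_lt m).trans (hs.lt_succ (m + 1)))
          (hs.lt (m + 2)) (hs.one_le_β m) (hs.h_pos m) (hs.η_le_h m) hE hφ (heig' m (by omega))
          (hB m) ((hB (m + 2)).mono ((hs.η_le _).trans (hs.η_le _)) ((hs.β_le _).trans (hs.β_le _)))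
          n1 n2 n3)
        refine Finset.sum_le_sum_of_subset_of_nonneg (fun n hn => ?_) fun _ _ _ => sq_nonneg _
        have := hs.lt_succ (m + 1)
        simp only [Finset.mem_Ioc, Finset.mem_Ioo] at hn ⊢
        omega
      have h3 : Finset.Ioc (N l₀) (N (m + 1)) = Finset.Ioc (N l₀) (N m) ∪
          Finset.Ioc (N m) (N (m + 1)) :=
        (Finset.Ioc_union_Ioc_eq_Ioc (hs.strictMono.monotone hm) (hs.N_lt m).le).symm
      rw [h3]
      refine (sum_union_le (fun _ => sq_nonneg _) _ _).trans ?_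
      have e : ((1 : ℝ) / 2) ^ (m + 3) = 2 * (1 / 2) ^ (m + 4) := by
        rw [pow_succ _ (m + 3)]; ring
      have e' : m + 1 + 3 = m + 4 := by omega
      rw [e']
      linarith
  have h1 := key i hl le_rfl
  obtain ⟨n1, n2, n3⟩ := hN i hl le_rfl
  have h2 : ∑ n ∈ Finset.Ioc (N i) (N (i + 2)), φ n ^ 2 ≤ (1 / 2) ^ (i + 4) :=
    (sum_sq_terminal_le (hs.lt i) (hs.strictMono (by omega)) (hs.one_le_β i) (hs.h_pos i)
      (hs.η_nonneg i) (hs.η_le_h i) hE hφ (heig' i le_rfl) hφd (hB i) n1 n3).trans (hs.small i)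
  rw [← Finset.Ioc_union_Ioc_eq_Ioc (hs.strictMono.monotone hl)
    (hs.strictMono.monotone (by omega : i ≤ i + 2))]
  refine (sum_union_le (fun _ => sq_nonneg _) _ _).trans ?_
  have e : ((1 : ℝ) / 2) ^ (i + 3) = 2 * (1 / 2) ^ (i + 4) := by
    rw [pow_succ _ (i + 3)]; ring
  have e1 : (0 : ℝ) < (1 / 2) ^ (i + 4) := by positivity
  have e2 : ((1 : ℝ) / 2) ^ (l₀ + 3) ≤ 1 / 8 := by
    rw [pow_add]
    have : ((1 : ℝ) / 2) ^ l₀ ≤ 1 := pow_le_one₀ (by norm_num) (by norm_num)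
    linarith
  linarith

end Scales

lemma sum_biUnion_le {ι κ : Type*} [DecidableEq κ] (s : Finset ι) (t : ι → Finset κ) {f : κ → ℝ}
    (hf : ∀ k, 0 ≤ f k) : ∑ k ∈ s.biUnion t, f k ≤ ∑ i ∈ s, ∑ k ∈ t i, f k := by
  classical
  induction s using Finset.induction with
  | empty => simp
  | insert i s hi ih =>
    rw [Finset.biUnion_insert, Finset.sum_insert hi]
    have := Finset.sum_nonneg fun k (_ : k ∈ t i ∩ s.biUnion t) => hf k
    linarith [Finset.sum_union_inter (s₁ := t i) (s₂ := s.biUnion t) (f := f)]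

lemma abs_le_of_schr_eq {V φ : ℤ → ℝ} {K M E : ℝ} (hM : ∀ n, |V n| ≤ M) (hE : |E| ≤ K) (n : ℕ)
    (heig : ∀ m ∈ Finset.Icc (-n : ℤ) n, schr V φ m = E * φ m) :
    ∀ m ∈ Finset.Icc (-n : ℤ) (n + 1), |φ m| ≤ (K + M + 1) ^ n * (|φ 0| + |φ 1|) := by
  have hM0 : 0 ≤ M := (abs_nonneg _).trans (hM 0)
  have hK0 : 0 ≤ K := (abs_nonneg _).trans hE
  have hX : 0 ≤ |φ 0| + |φ 1| := by positivity
  induction n with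
  | zero =>
    intro m hm
    simp only [Finset.mem_Icc] at hm
    have : m = 0 ∨ m = 1 := by push_cast at hm; omega
    have h0 := abs_nonneg (φ 0)
    have h1 := abs_nonneg (φ 1)
    rcases this with rfl | rfl <;> simp
  | succ n ih =>
    have ih' := ih fun m hm => heig m (by
      simp only [Finset.mem_Icc] at hm ⊢; push_cast; omega)
    set X := (K + M + 1) ^ n * (|φ 0| + |φ 1|) with hXd
    have hX0 : 0 ≤ X := by positivity
    have hXs : (K + M + 1) ^ (n + 1) * (|φ 0| + |φ 1|) = (K + M + 1) * X := by rw [hXd]; ring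
    rw [hXs]
    have step : ∀ x y z m, x = (E - V m) * y - z → |y| ≤ X → |z| ≤ X →
        |x| ≤ (K + M + 1) * X := by
      intro x y z m hx hy hz
      rw [hx]
      calc |(E - V m) * y - z| ≤ |(E - V m) * y| + |z| := abs_sub _ _
        _ ≤ (K + M) * X + X := by
          refine add_le_add ?_ hz
          rw [abs_mul]
          exact mul_le_mul ((abs_sub _ _).trans (add_le_add hE (hM m))) hy
            (abs_nonneg _) (by positivity)
        _ = _ := by ring
    intro m hm
    simp only [Finset.mem_Icc] at hm
    push_cast at hm
    by_cases h1 : m = n + 2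
    · have h2 := heig (n + 1) (by simp only [Finset.mem_Icc]; push_cast; omega)
      simp only [schr, smul_eq_mul] at h2
      refine step _ (φ (n + 1)) (φ n) (n + 1) ?_ (ih' _ (by simp only [Finset.mem_Icc]; omega))
        (ih' _ (by simp only [Finset.mem_Icc]; omega))
      rw [h1, show (n : ℤ) + 2 = n + 1 + 1 by ring]
      rw [show (n : ℤ) + 1 - 1 = n by ring] at h2
      linear_combination h2
    · by_cases h1 : m = -n - 1
      · have h2 := heig (-n) (by simp only [Finset.mem_Icc]; push_cast; omega)
        simp only [schr, smul_eq_mul] at h2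
        refine step _ (φ (-n)) (φ (-n + 1)) (-n) ?_ (ih' _ (by simp only [Finset.mem_Icc]; omega))
          (ih' _ (by simp only [Finset.mem_Icc]; omega))
        rw [h1]
        linear_combination h2
      · refine (ih' m (by simp only [Finset.mem_Icc]; omega)).trans ?_
        nlinarith

lemma sum_geometric_Icc_le (l₀ i : ℕ) :
    ∑ l ∈ Finset.Icc l₀ i, ((1 : ℝ) / 2) ^ l ≤ 2 * (1 / 2) ^ l₀ := by
  rcases lt_or_ge i l₀ with h | h
  · rw [Finset.Icc_eq_empty (by omega), Finset.sum_empty]; positivity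
  · have : ∑ l ∈ Finset.Icc l₀ i, ((1 : ℝ) / 2) ^ l = 2 * (1 / 2) ^ l₀ - 2 * (1 / 2) ^ (i + 1) := by
      induction i, h using Nat.le_induction with
      | base => simp; ring
      | succ i h ih =>
        rw [Finset.sum_Icc_succ_top (by omega), ih, pow_succ _ (i + 1)]
        ring
    rw [this]
    have : (0 : ℝ) ≤ 2 * (1 / 2) ^ (i + 1) := by positivity
    linarith

lemma BoxEigen.card_le_of_localized {V : ℤ → ℝ} {N L : ℤ} (B : BoxEigen V (-N) N)
    (hL : L ≤ N) {S : Finset (Finset.Icc (-N) N)}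
    (hS : ∀ k ∈ S, 1 / 2 ≤ ∑ n ∈ Finset.Icc (-L) L, B.φ k n ^ 2) :
    S.card ≤ 2 * (2 * L + 1).toNat := by
  have h1 : (S.card : ℝ) * (1 / 2) ≤ ∑ k ∈ S, ∑ n ∈ Finset.Icc (-L) L, B.φ k n ^ 2 := by
    have := Finset.card_nsmul_le_sum S _ _ hS
    simpa using this
  have h2 : ∑ k ∈ S, ∑ n ∈ Finset.Icc (-L) L, B.φ k n ^ 2 ≤
      ∑ k, ∑ n ∈ Finset.Icc (-L) L, B.φ k n ^ 2 :=
    Finset.sum_le_sum_of_subset_of_nonneg (Finset.subset_univ _) fun k _ _ =>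
      Finset.sum_nonneg fun _ _ => sq_nonneg _
  have h3 : ∑ k, ∑ n ∈ Finset.Icc (-L) L, B.φ k n ^ 2 = ((2 * L + 1).toNat : ℝ) := by
    rw [Finset.sum_comm]
    have : ∀ n ∈ Finset.Icc (-L) L, ∑ k, B.φ k n ^ 2 = 1 := by
      intro n hn
      have hn' : n ∈ Finset.Icc (-N) N := Finset.Icc_subset_Icc (by omega) hL hn
      simpa [sq] using B.compl n hn' n hn'
    rw [Finset.sum_congr rfl this, Finset.sum_const, Int.card_Icc, nsmul_eq_mul, mul_one]
    congr 2
    omega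
  rw [h3] at h2
  have h4 : (S.card : ℝ) ≤ ((2 * (2 * L + 1).toNat : ℕ) : ℝ) := by push_cast; linarith
  exact_mod_cast h4

theorem Scales.hasPurePointSpectrum {a N : ℕ → ℤ} {h β η : ℕ → ℝ} (hs : Scales a N h β η)
    {V : ℤ → ℝ} {M : ℝ} (hM : ∀ n, |V n| ≤ M) (S : ℕ → Finset ℝ)
    (hB : ∀ l, Barriers V (2 + M) (η l) (β l) (a l) (N l))
    (hB' : ∀ l, Barriers (fun n => V (-n)) (2 + M) (η l) (β l) (a l) (N l))
    (hN : ∀ l E, (∀ e ∈ S l, h l ≤ |E - e|) → NonResAt V E a N h l)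
    (hN' : ∀ l E, (∀ e ∈ S l, h l ≤ |E - e|) → NonResAt (fun n => V (-n)) E a N h l)
    (hW : ∀ i l, l ≤ i → ∀ B : BoxEigen V (-N (i + 2)) (N (i + 2)), ∀ j : ℤ, (j = 0 ∨ j = 1) →
      ∑ k with ∃ e ∈ S l, |B.E k - e| ≤ h l, B.φ k j ^ 2 ≤ (1 / 2) ^ l) :
    HasPurePointSpectrum V := by
  classical
  have hNt : Filter.Tendsto (fun i => N (i + 2)) Filter.atTop Filter.atTop := by
    have h1 : ∀ i : ℕ, (i : ℤ) ≤ N i := by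
      intro i
      induction i with
      | zero => have := hs.two_le 0; have := hs.lt 0; push_cast; omega
      | succ i ih => have := hs.N_lt i; push_cast; omega
    refine Filter.tendsto_atTop_mono (fun i => h1 (i + 2)) ?_
    exact tendsto_natCast_atTop_atTop.comp (Filter.tendsto_add_atTop_nat 2)
  refine hasPurePointSpectrum_of_boxEigen hM hNt fun j ε hε => ?_
  set C := (2 + M + M + 1) ^ j.natAbs with hC
  obtain ⟨l₀, hl₀⟩ : ∃ l₀ : ℕ, ((1 : ℝ) / 2) ^ l₀ < ε / (8 * C ^ 2 + 1) :=
    exists_pow_lt_of_lt_one (by positivity) (by norm_num)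
  refine ⟨2 * (2 * N l₀ + 1).toNat, ?_⟩
  filter_upwards [Filter.eventually_ge_atTop l₀, hNt.eventually_ge_atTop (|j| + 1)] with i hi hij
  obtain ⟨B⟩ := exists_boxEigen V (-N (i + 2)) (N (i + 2))
  set bad : ℕ → Finset (Finset.Icc (-N (i + 2)) (N (i + 2))) := fun l =>
    Finset.univ.filter fun k => ∃ e ∈ S l, |B.E k - e| ≤ h l with hbad
  rw [Int.abs_eq_natAbs] at hij
  refine ⟨B, Finset.univ \ (Finset.Icc l₀ i).biUnion bad, ?_, ?_⟩
  · have hN0 : ∀ l, 4 ≤ N l := fun l => by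
      have := hs.two_le l; have := hs.lt l; omega
    refine B.card_le_of_localized
      (hs.strictMono.monotone (by omega)) fun k hk => ?_
    simp only [Finset.mem_sdiff, Finset.mem_univ, true_and, Finset.mem_biUnion, not_exists,
      not_and, Finset.mem_Icc, hbad, Finset.mem_filter, not_le] at hk
    have hgood : ∀ l, l₀ ≤ l → l ≤ i → ∀ e ∈ S l, h l ≤ |B.E k - e| := fun l h1 h2 e he =>
      (hk l ⟨h1, h2⟩ e he).le
    have hE := B.abs_E_le hM k
    have hφ : ∀ n, |B.φ k n| ≤ 1 := fun n => by
      have := (sum_sq_le_of_supp (B.supp k) {n}).trans (B.sum_sq k).le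
      rw [Finset.sum_singleton] at this
      exact abs_le_one_iff_mul_self_le_one.2 (by nlinarith)
    have t1 := hs.tail_le hi hB hE hφ (B.eig k) (B.supp k _ (by simp))
      fun l h1 h2 => hN l _ (hgood l h1 h2)
    have t2 := hs.tail_le (U := fun n => V (-n)) (φ := fun n => B.φ k (-n)) hi hB' hE
      (fun n => hφ _) (fun n hn => ?_) (B.supp k _ (by simp))
      fun l h1 h2 => hN' l _ (hgood l h1 h2)
    · have h1 := B.sum_sq k
      have h2 : Finset.Icc (-N (i + 2)) (N (i + 2)) = Finset.Icc (-N l₀) (N l₀) ∪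
          (Finset.Ioc (N l₀) (N (i + 2)) ∪
            (Finset.Ioc (N l₀) (N (i + 2))).image fun n => -n) := by
        ext n
        have h3 := hs.strictMono.monotone (show l₀ ≤ i + 2 by omega)
        have h4 := hN0 l₀
        simp only [Finset.mem_union, Finset.mem_Icc, Finset.mem_Ioc, Finset.mem_image]
        constructor
        · intro hn
          by_cases h5 : -N l₀ ≤ n ∧ n ≤ N l₀
          · exact Or.inl h5
          · by_cases h6 : N l₀ < n
            · exact Or.inr (Or.inl ⟨h6, hn.2⟩)
            · exact Or.inr (Or.inr ⟨-n, by omega, by omega⟩)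
        · rintro (hn | hn | ⟨m, hm, rfl⟩) <;> omega
      rw [h2] at h1
      have h3 := sum_union_le (f := fun n => B.φ k n ^ 2) (fun n => sq_nonneg _)
        (Finset.Icc (-N l₀) (N l₀)) (Finset.Ioc (N l₀) (N (i + 2)) ∪
            (Finset.Ioc (N l₀) (N (i + 2))).image fun n => -n)
      have h4 := sum_union_le (f := fun n => B.φ k n ^ 2) (fun n => sq_nonneg _)
        (Finset.Ioc (N l₀) (N (i + 2))) ((Finset.Ioc (N l₀) (N (i + 2))).image fun n => -n)
      rw [Finset.sum_image (f := fun n => B.φ k n ^ 2) fun x _ y _ h => by simpa using h] at h4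
      linarith
    · rw [schr_neg]
      simp only [neg_neg]
      exact B.eig k (-n) (by simp only [Finset.mem_Icc] at hn ⊢; omega)
  · rw [Finset.sdiff_sdiff_eq_self (Finset.subset_univ _)]
    have hj : ∀ k, B.φ k j ^ 2 ≤ 2 * C ^ 2 * (B.φ k 0 ^ 2 + B.φ k 1 ^ 2) := by
      intro k
      have h1 := abs_le_of_schr_eq hM (B.abs_E_le hM k) j.natAbs (φ := B.φ k)
        (fun m hm => B.eig k m (by simp only [Finset.mem_Icc] at hm ⊢; omega)) j
        (by simp only [Finset.mem_Icc]; omega)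
      rw [← hC] at h1
      have h2 : B.φ k j ^ 2 ≤ (C * (|B.φ k 0| + |B.φ k 1|)) ^ 2 := by
        rw [← sq_abs (B.φ k j)]; gcongr
      refine h2.trans ?_
      rw [mul_pow, mul_comm 2 (C ^ 2), mul_assoc]
      refine mul_le_mul_of_nonneg_left ?_ (sq_nonneg C)
      have := sq_abs (B.φ k 0)
      have := sq_abs (B.φ k 1)
      nlinarith [sq_nonneg (|B.φ k 0| - |B.φ k 1|)]
    have hl : ∀ l ∈ Finset.Icc l₀ i, ∑ k ∈ bad l, B.φ k j ^ 2 ≤ 4 * C ^ 2 * (1 / 2) ^ l := by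
      intro l hl
      have w0 := hW i l (Finset.mem_Icc.1 hl).2 B 0 (Or.inl rfl)
      have w1 := hW i l (Finset.mem_Icc.1 hl).2 B 1 (Or.inr rfl)
      refine (Finset.sum_le_sum fun k _ => hj k).trans ?_
      rw [← Finset.mul_sum, Finset.sum_add_distrib]
      have := mul_le_mul_of_nonneg_left (add_le_add w0 w1) (by positivity : 0 ≤ 2 * C ^ 2)
      refine this.trans (le_of_eq (by ring))
    calc ∑ k ∈ (Finset.Icc l₀ i).biUnion bad, B.φ k j ^ 2
        ≤ ∑ l ∈ Finset.Icc l₀ i, ∑ k ∈ bad l, B.φ k j ^ 2 :=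
          sum_biUnion_le _ _ fun _ => sq_nonneg _
      _ ≤ ∑ l ∈ Finset.Icc l₀ i, 4 * C ^ 2 * (1 / 2) ^ l := Finset.sum_le_sum hl
      _ ≤ 4 * C ^ 2 * (2 * (1 / 2) ^ l₀) := by
          rw [← Finset.mul_sum]
          exact mul_le_mul_of_nonneg_left (sum_geometric_Icc_le l₀ i) (by positivity)
      _ ≤ ε := by
          rw [lt_div_iff₀ (by positivity)] at hl₀
          have : (0 : ℝ) < (1 / 2) ^ l₀ := by positivity
          nlinarith

lemma exists_grid {K η : ℝ} (hK : 0 ≤ K) (hη : 0 < η) : ∃ S : Finset ℝ,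
    (S.card : ℝ) ≤ 2 * K / η + 1 ∧ ∀ E, |E| ≤ K → ∃ E₀ ∈ S, |E - E₀| ≤ η := by
  classical
  refine ⟨(Finset.range (⌊2 * K / η⌋₊ + 1)).image fun i : ℕ => -K + i * η, ?_, fun E hE => ?_⟩
  · have h1 : ((Finset.range (⌊2 * K / η⌋₊ + 1)).image fun i : ℕ => -K + i * η).card ≤
        ⌊2 * K / η⌋₊ + 1 := Finset.card_image_le.trans (by simp)
    have h2 := Nat.floor_le (show 0 ≤ 2 * K / η by positivity)
    calc (_ : ℝ) ≤ ((⌊2 * K / η⌋₊ + 1 : ℕ) : ℝ) := by exact_mod_cast h1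
      _ ≤ _ := by push_cast; linarith
  · obtain ⟨h1, h2⟩ := abs_le.1 hE
    have h3 : 0 ≤ (E + K) / η := div_nonneg (by linarith) hη.le
    refine ⟨-K + ⌊(E + K) / η⌋₊ * η, Finset.mem_image.2 ⟨_, ?_, rfl⟩, ?_⟩
    · rw [Finset.mem_range, Nat.lt_succ_iff]
      exact Nat.floor_le_floor (by gcongr; linarith)
    · have h4 := Nat.floor_le h3
      have h5 := Nat.lt_floor_add_one ((E + K) / η)
      rw [le_div_iff₀ hη] at h4
      rw [div_lt_iff₀ hη] at h5
      rw [abs_le]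
      constructor <;> linarith

lemma exists_barriers (V : ℤ → ℝ) {K l η β : ℝ} {a N : ℤ} {k : ℕ} (hK : 0 ≤ K) (hl : 0 < l)
    (hl1 : l ≤ 1) (hη : 0 < η) (hβ : 1 ≤ β) (hk0 : 0 < k) (hN : N = a + 2 * k - 1)
    (hk : ((2 * K / η + 1) * 4 * β ^ 2) ^ 2 < (1 + l ^ 2 / 128) ^ k) :
    ∃ b : ℤ → ℝ, (∀ n, b n = 0 ∨ b n = 1) ∧ ∀ U : ℤ → ℝ,
      (∀ n ∈ Finset.Icc a N, U n = V n + l * b n) → Barriers U K η β a N := by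
  obtain ⟨S, hS, hSE⟩ := exists_grid hK hη
  obtain ⟨b, hb, hU⟩ := exists_barrier_bits S V a hl hl1 hβ k hk0 (hk.trans_le' (by gcongr))
  refine ⟨fun n => b (n - a).toNat, fun n => hb _, fun U h E hE => ?_⟩
  obtain ⟨E₀, hE₀, hEE⟩ := hSE E hE
  obtain ⟨p, q, hp, hq, hpq⟩ := hU U (fun i hi => by
    rw [h _ (by rw [Finset.mem_Icc]; omega)]
    simp) E₀ hE₀
  exact ⟨E₀, hEE, p, q, hp, by omega, hpq⟩

/-- The properties of the perturbation `l * s` made at one stage of the construction. -/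
structure Stage (V s : ℤ → ℝ) (K l h η β : ℝ) (a N : ℤ) (T : Finset (ℝ × ℤ)) : Prop where
  nonneg : ∀ n, 0 ≤ s n
  le_one : ∀ n, s n ≤ 1
  supp : ∀ n, s n ≠ 0 → n = 0 ∨ n = 1 ∨ (a ≤ n ∧ n ≤ N) ∨ (a ≤ -n ∧ -n ≤ N)
  barriers : ∀ U : ℤ → ℝ, (∀ n ∈ Finset.Icc a N, U n = V n + l * s n) → Barriers U K η β a N
  barriers_neg : ∀ U : ℤ → ℝ, (∀ n ∈ Finset.Icc a N, U n = V (-n) + l * s (-n)) →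
    Barriers U K η β a N
  wegner : ∀ j : ℤ, (j = 0 ∨ j = 1) → ∃ X : ℝ × ℤ → ℤ → ℂ,
    (∀ c ∈ T, IsRes (fun n => V n + l * s n) (-c.2) c.2 (c.1 + h * Complex.I) j (X c)) ∧
      ∑ c ∈ T, (X c j).im ≤ 20 * T.card / l

lemma exists_stage (V : ℤ → ℝ) {K l h η β : ℝ} {a N : ℤ} {k : ℕ} (hK : 0 ≤ K) (hl : 0 < l)
    (hl1 : l ≤ 1) (hh : 0 < h) (hη : 0 < η) (hβ : 1 ≤ β) (ha : 2 ≤ a) (hk0 : 0 < k)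
    (hN : N = a + 2 * k - 1)
    (hk : ((2 * K / η + 1) * 4 * β ^ 2) ^ 2 < (1 + l ^ 2 / 128) ^ k) (T : Finset (ℝ × ℤ))
    (hT : ∀ c ∈ T, 1 ≤ c.2) : ∃ s, Stage V s K l h η β a N T := by
  obtain ⟨b, hb, hbU⟩ := exists_barriers V hK hl hl1 hη hβ hk0 hN hk
  obtain ⟨b', hb', hbU'⟩ := exists_barriers (fun n => V (-n)) hK hl hl1 hη hβ hk0 hN hk
  set t : ℤ → ℝ := fun n => (if a ≤ n ∧ n ≤ N then b n else 0) +
    if a ≤ -n ∧ -n ≤ N then b' (-n) else 0 with ht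
  obtain ⟨s₀, s₁, hs₀, hs₁, hW⟩ := exists_wegner (fun n => V n + l * t n) hl hh T hT
  have hb0 : ∀ n, 0 ≤ b n ∧ b n ≤ 1 := fun n => by rcases hb n with h | h <;> rw [h] <;> norm_num
  have hb0' : ∀ n, 0 ≤ b' n ∧ b' n ≤ 1 := fun n => by
    rcases hb' n with h | h <;> rw [h] <;> norm_num
  set s : ℤ → ℝ := fun n => if n = 0 then s₀ else if n = 1 then s₁ else t n with hs
  have hst : ∀ n, n ≠ 0 → n ≠ 1 → s n = t n := fun n h0 h1 => by simp [hs, h0, h1]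
  have h01 : ∀ n, 0 ≤ s n ∧ s n ≤ 1 := by
    intro n
    simp only [hs, ht]
    split_ifs
    · exact hs₀
    · exact hs₁
    · omega
    · simpa using hb0 n
    · simpa using hb0' (-n)
    · norm_num
  refine ⟨s, fun n => (h01 n).1, fun n => (h01 n).2, fun n hn => ?_, fun U hU => ?_,
    fun U hU => ?_, fun j hj => ?_⟩
  · by_contra! h
    refine hn ?_
    simp only [hs, ht]
    rw [if_neg h.1, if_neg h.2.1, if_neg (by omega), if_neg (by omega), add_zero]
  · refine hbU U fun n hn => ?_
    rw [Finset.mem_Icc] at hn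
    rw [hU n (Finset.mem_Icc.2 hn), hst n (by omega) (by omega)]
    simp only [ht]
    rw [if_pos hn, if_neg (by omega), add_zero]
  · refine hbU' U fun n hn => ?_
    rw [Finset.mem_Icc] at hn
    rw [hU n (Finset.mem_Icc.2 hn), hst (-n) (by omega) (by omega)]
    simp only [ht]
    rw [if_neg (by omega), neg_neg, if_pos hn, zero_add]
  · obtain ⟨X, hX, hsum⟩ := hW j hj
    refine ⟨X, fun c hc => ?_, hsum⟩
    convert hX c hc using 2 with n
    by_cases h0 : n = 0
    · subst h0
      simp only [hs, ht]
      rw [if_pos trivial, if_pos trivial, if_neg (by omega), if_neg (by omega), if_neg (by omega)]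
      ring
    · by_cases h1 : n = 1
      · subst h1
        simp only [hs, ht]
        rw [if_pos trivial, if_neg (by omega), if_neg (by omega), if_neg (by omega),
          if_pos trivial, if_neg one_ne_zero]
        ring
      · rw [hst n h0 h1, if_neg h0, if_neg h1]
        ring

lemma schr_congr {F : Type*} [AddCommGroup F] [Module ℝ F] {V V' : ℤ → ℝ} {n : ℤ}
    (h : V n = V' n) (x : ℤ → F) : schr V x n = schr V' x n := by
  rw [schr, schr, h]

lemma NonResNear.congr {V V' : ℤ → ℝ} {E h : ℝ} {a b : ℤ}
    (hVV : ∀ n ∈ Finset.Icc a b, V n = V' n) (hV : NonResNear V E h a b) :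
    NonResNear V' E h a b := by
  intro p q hp hq x hx
  have h1 : ∀ n ∈ Finset.Icc p q, (schr V x n - E * x n) ^ 2 = (schr V' x n - E * x n) ^ 2 :=
    fun n hn => by
      rw [schr_congr (hVV n (by simp only [Finset.mem_Icc] at hn ⊢; omega)) x]
  rw [← Finset.sum_congr rfl h1]
  exact hV p q hp hq x hx

lemma exists_nonResNear_finset (V : ℤ → ℝ) {a b : ℤ} (ha : 0 ≤ a) (hb : 0 ≤ b) :
    ∃ S : Finset ℝ, (S.card : ℝ) ≤ 4 * (b + 1) ∧
    ∀ E h : ℝ, 0 ≤ h → (∀ e ∈ S, h ≤ |E - e|) → NonResNear V E h a b := by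
  classical
  obtain ⟨S₁, h1, n1⟩ := exists_nonRes_finset V a (b - 1)
  obtain ⟨S₂, h2, n2⟩ := exists_nonRes_finset V a b
  obtain ⟨S₃, h3, n3⟩ := exists_nonRes_finset V (a + 1) (b - 1)
  obtain ⟨S₄, h4, n4⟩ := exists_nonRes_finset V (a + 1) b
  refine ⟨S₁ ∪ S₂ ∪ (S₃ ∪ S₄), ?_, fun E h hh hS p q hp hq => ?_⟩
  · have c1 := Finset.card_union_le (S₁ ∪ S₂) (S₃ ∪ S₄)
    have c2 := Finset.card_union_le S₁ S₂
    have c3 := Finset.card_union_le S₃ S₄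
    have c4 : ((S₁ ∪ S₂ ∪ (S₃ ∪ S₄)).card : ℤ) ≤ 4 * (b + 1) := by omega
    exact_mod_cast c4
  · rcases hp with rfl | rfl <;> rcases hq with rfl | rfl
    · exact n1 E h hh fun e he => hS e (by simp [he])
    · exact n2 E h hh fun e he => hS e (by simp [he])
    · exact n3 E h hh fun e he => hS e (by simp [he])
    · exact n4 E h hh fun e he => hS e (by simp [he])

lemma exists_nonResAt_finset (V : ℤ → ℝ) {a N : ℕ → ℤ} {h : ℕ → ℝ} (ha : ∀ l, 0 ≤ a l)
    (hN : Monotone N) (hN0 : ∀ l, 0 ≤ N l) {l : ℕ} (hh : 0 ≤ h l) :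
    ∃ S : Finset ℝ, (S.card : ℝ) ≤ 12 * (N (l + 2) + 1) ∧
    ∀ E : ℝ, (∀ e ∈ S, h l ≤ |E - e|) → NonResAt V E a N h l := by
  classical
  obtain ⟨S₁, h1, n1⟩ := exists_nonResNear_finset V (ha l) (hN0 l)
  obtain ⟨S₂, h2, n2⟩ := exists_nonResNear_finset V (ha (l + 2)) (hN0 (l + 2))
  obtain ⟨S₃, h3, n3⟩ := exists_nonResNear_finset V (ha l) (hN0 (l + 2))
  refine ⟨S₁ ∪ (S₂ ∪ S₃), ?_, fun E hS => ⟨?_, ?_, ?_⟩⟩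
  · have c1 : (((S₁ ∪ (S₂ ∪ S₃)).card : ℕ) : ℝ) ≤ S₁.card + (S₂.card + S₃.card) := by
      exact_mod_cast (Finset.card_union_le _ _).trans
        (Nat.add_le_add_left (Finset.card_union_le _ _) _)
    have c2 : (N l : ℝ) ≤ N (l + 2) := by exact_mod_cast hN (by omega)
    linarith
  · exact n1 E _ hh fun e he => hS e (by simp [he])
  · exact n2 E _ hh fun e he => hS e (by simp [he])
  · exact n3 E _ hh fun e he => hS e (by simp [he])

lemma NonResAt.congr {V V' : ℤ → ℝ} {E : ℝ} {a N : ℕ → ℤ} {h : ℕ → ℝ} {l : ℕ}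
    (hN : N l ≤ N (l + 2)) (ha : a l ≤ a (l + 2))
    (hVV : ∀ n ∈ Finset.Icc (a l) (N (l + 2)), V n = V' n) (hV : NonResAt V E a N h l) :
    NonResAt V' E a N h l :=
  ⟨hV.1.congr fun n hn => hVV n (Finset.Icc_subset_Icc le_rfl hN hn),
    hV.2.1.congr fun n hn => hVV n (Finset.Icc_subset_Icc ha le_rfl hn),
    hV.2.2.congr hVV⟩

/-- Admissible parameters for the multiscale construction with barriers of length `2 * k l`
ending at `N l` and perturbations of size `lam l`. -/
structure Params (N : ℕ → ℤ) (k : ℕ → ℕ) (lam h β η : ℕ → ℝ) (K : ℝ) : Prop where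
  scales : Scales (fun l => N l - 2 * k l + 1) N h β η
  lam_pos : ∀ l, 0 < lam l
  lam_le_one : ∀ l, lam l ≤ 1
  η_pos : ∀ l, 0 < η l
  bits : ∀ l, ((2 * K / η l + 1) * 4 * β l ^ 2) ^ 2 < (1 + lam l ^ 2 / 128) ^ k l
  weight : ∀ l, 7680 * h l * (N (l + 2) + 1) / lam (l + 3) ≤ (1 / 2) ^ l
  tail : ∀ l n, ∑ i ∈ Finset.range n, lam (l + 4 + i) ≤ h l
  trunc : ∀ l, 4 ≤ h l ^ 2 * (N (l + 3) - 2)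

/-- The pairs (energy, box radius) whose resolvents are controlled at a given stage. -/
def targets (N : ℕ → ℤ) (S : ℕ → (ℤ → ℝ) → Finset ℝ) (V : ℤ → ℝ) : ℕ → Finset (ℝ × ℤ)
  | l + 3 => S l V ×ˢ {N (l + 2), N (l + 3)}
  | _ => ∅

/-- Energies near which `V` or its reflection may be resonant at level `l`. -/
def IsResonanceSet (N a : ℕ → ℤ) (h : ℕ → ℝ) (S : ℕ → (ℤ → ℝ) → Finset ℝ) : Prop :=
  ∀ l V, ((S l V).card : ℝ) ≤ 24 * (N (l + 2) + 1) ∧ ∀ E : ℝ, (∀ e ∈ S l V, h l ≤ |E - e|) →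
    NonResAt V E a N h l ∧ NonResAt (fun n => V (-n)) E a N h l

lemma Scales.exists_isResonanceSet {a N : ℕ → ℤ} {h β η : ℕ → ℝ} (hs : Scales a N h β η) :
    ∃ S, IsResonanceSet N a h S := by
  classical
  have ha : ∀ l, 0 ≤ a l := fun l => by have := hs.two_le l; omega
  have hN : ∀ l, 0 ≤ N l := fun l => by have := hs.two_le l; have := hs.lt l; omega
  choose S hS hSE using fun V l => exists_nonResAt_finset V ha hs.strictMono.monotone hN
    (hs.h_pos l).le
  refine ⟨fun l V => S V l ∪ S (fun n => V (-n)) l, fun l V => ⟨?_, fun E hE => ⟨?_, ?_⟩⟩⟩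
  · have c1 : (((S V l ∪ S (fun n => V (-n)) l).card : ℕ) : ℝ) ≤
        (S V l).card + (S (fun n => V (-n)) l).card := by
      exact_mod_cast Finset.card_union_le _ _
    have := hS V l
    have := hS (fun n => V (-n)) l
    linarith
  · exact hSE V l E fun e he => hE e (by simp [he])
  · exact hSE _ l E fun e he => hE e (by simp [he])

namespace Params

variable {N : ℕ → ℤ} {k : ℕ → ℕ} {lam h β η : ℕ → ℝ} {K : ℝ}

lemma a_lt (P : Params N k lam h β η K) {m j : ℕ} (hmj : m < j) :
    N m < N j - 2 * k j + 1 := by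
  have h1 := P.scales.strictMono.monotone (show m ≤ j - 1 by omega)
  have h2 := P.scales.lt_succ (j - 1)
  rw [show j - 1 + 1 = j by omega] at h2
  omega

lemma one_le_N (P : Params N k lam h β η K) (l : ℕ) : 4 ≤ N l := by
  have := P.scales.two_le l
  have := P.scales.lt l
  omega

lemma exists_stage (P : Params N k lam h β η K) (hK : 0 ≤ K) (S : ℕ → (ℤ → ℝ) → Finset ℝ)
    (V : ℤ → ℝ) (m : ℕ) : ∃ s, Stage V s K (lam m) (h (m - 3)) (η m) (β m) (N m - 2 * k m + 1)
      (N m) (targets N S V m) := by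
  refine _root_.exists_stage V hK (P.lam_pos m) (P.lam_le_one m) (P.scales.h_pos _) (P.η_pos m)
    (P.scales.one_le_β m) (P.scales.two_le m) (by have := P.scales.lt m; omega) (by ring)
    (P.bits m) _ fun c hc => ?_
  have h4 := P.one_le_N
  match m with
  | 0 | 1 | 2 => simp [targets] at hc
  | l + 3 =>
    simp only [targets, Finset.mem_product, Finset.mem_insert, Finset.mem_singleton] at hc
    have := h4 (l + 2)
    have := h4 (l + 3)
    omega

theorem hasPurePointSpectrum {M : ℝ} (P : Params N k lam h β η (2 + M))
    {S : ℕ → (ℤ → ℝ) → Finset ℝ} (hS : IsResonanceSet N (fun l => N l - 2 * k l + 1) h S)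
    {V s : ℕ → ℤ → ℝ} {W : ℤ → ℝ} (hM : ∀ n, |W n| ≤ M)
    (hV : ∀ m n, |n| ≤ N m → V (m + 1) n = V m n + lam m * s m n)
    (hW : ∀ n, Filter.Tendsto (fun m => V m n) Filter.atTop (nhds (W n)))
    (hst : ∀ m, Stage (V m) (s m) (2 + M) (lam m) (h (m - 3)) (η m) (β m) (N m - 2 * k m + 1)
      (N m) (targets N S (V m) m)) : HasPurePointSpectrum W := by
  classical
  have hmono := P.scales.strictMono.monotone
  have hfin : ∀ m n, n ≠ 0 → n ≠ 1 → |n| ≤ N m → W n = V (m + 1) n := by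
    intro m n h0 h1 hn
    have hc : ∀ j, m + 1 ≤ j → V j n = V (m + 1) n := by
      intro j hj
      induction j, hj using Nat.le_induction with
      | base => rfl
      | succ j hj ih =>
        rw [hV j n (hn.trans (hmono (by omega))), ih]
        have : s j n = 0 := by
          by_contra hne
          have h2 := (hst j).supp n hne
          have h3 := P.a_lt (show m < j by omega)
          rw [abs_le] at hn
          omega
        rw [this, mul_zero, add_zero]
    exact tendsto_nhds_unique (hW n) (tendsto_const_nhds.congr' (by
      filter_upwards [Filter.eventually_ge_atTop (m + 1)] with j hj using (hc j hj).symm))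
  have hclose : ∀ l n, |n| ≤ N (l + 3) → |W n - V (l + 4) n| ≤ h l := by
    intro l n hn
    have hb : ∀ i, |V (l + 4 + i) n - V (l + 4) n| ≤
        ∑ j ∈ Finset.range i, lam (l + 4 + j) := by
      intro i
      induction i with
      | zero => simp
      | succ i ih =>
        rw [Finset.sum_range_succ, ← add_assoc, hV _ n (hn.trans (hmono (by omega)))]
        have h1 : |lam (l + 4 + i) * s (l + 4 + i) n| ≤ lam (l + 4 + i) := by
          rw [abs_mul, abs_of_pos (P.lam_pos _), abs_of_nonneg ((hst _).nonneg n)]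
          exact mul_le_of_le_one_right (P.lam_pos _).le ((hst _).le_one n)
        refine le_trans ?_ (add_le_add ih h1)
        rw [add_sub_right_comm]
        exact abs_add_le _ _
    refine le_of_tendsto (((hW n).sub_const _).abs) ?_
    filter_upwards [Filter.eventually_ge_atTop (l + 4)] with j hj
    have h1 := (hb (j - (l + 4))).trans (P.tail l _)
    rwa [show l + 4 + (j - (l + 4)) = j by omega] at h1
  have hpre : ∀ l n, n ≠ 0 → n ≠ 1 → |n| ≤ N (l + 2) → W n = V (l + 3) n := fun l n =>
    hfin (l + 2) n
  have h4 := P.one_le_N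
  have hamono : ∀ l, N l - 2 * k l + 1 ≤ N (l + 2) - 2 * k (l + 2) + 1 := fun l => by
    have := P.a_lt (show l < l + 2 by omega)
    have := P.scales.lt l
    omega
  have ha2 := P.scales.two_le
  refine P.scales.hasPurePointSpectrum hM (fun l => S l (V (l + 3))) (fun l => ?_) (fun l => ?_)
    (fun l E hE => ?_) (fun l E hE => ?_) fun i l hli B j hj => ?_
  · refine (hst l).barriers W fun n hn => ?_
    have := ha2 l
    rw [Finset.mem_Icc] at hn
    have hn' : |n| ≤ N l := by rw [abs_le]; omega
    rw [hfin l n (by omega) (by omega) hn', hV l n hn']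
  · refine (hst l).barriers_neg _ fun n hn => ?_
    have := ha2 l
    rw [Finset.mem_Icc] at hn
    have hn' : |-n| ≤ N l := by rw [abs_le]; omega
    rw [hfin l (-n) (by omega) (by omega) hn', hV l (-n) hn']
  · refine ((hS l (V (l + 3))).2 E hE).1.congr (hmono (by omega)) (hamono l) fun n hn => ?_
    have := ha2 l
    rw [Finset.mem_Icc] at hn
    exact (hpre l n (by omega) (by omega) (by rw [abs_le]; omega)).symm
  · refine ((hS l (V (l + 3))).2 E hE).2.congr (hmono (by omega)) (hamono l) fun n hn => ?_
    have := ha2 l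
    rw [Finset.mem_Icc] at hn
    exact (hpre l (-n) (by omega) (by omega) (by rw [abs_le]; omega)).symm
  · obtain ⟨X, hX, hsum⟩ := (hst (l + 3)).wegner j hj
    rw [show l + 3 - 3 = l by omega] at hX
    obtain ⟨R, hR, hRi⟩ : ∃ R, (R = N (l + 2) ∨ R = N (l + 3)) ∧ (N (i + 2) = R ∨
        (R < N (i + 2) ∧ 4 ≤ h l ^ 2 * (R - 2))) := by
      rcases Nat.lt_trichotomy i (l + 1) with hi | rfl | hi
      · exact ⟨N (l + 2), Or.inl rfl, Or.inl (by rw [show i = l by omega])⟩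
      · exact ⟨N (l + 3), Or.inr rfl, Or.inl rfl⟩
      · exact ⟨N (l + 3), Or.inr rfl, Or.inr ⟨P.scales.strictMono (by omega), P.trunc l⟩⟩
    have hRle : R ≤ N (l + 3) := by
      rcases hR with rfl | rfl
      · exact hmono (by omega)
      · exact le_rfl
    have hR1 : 1 ≤ R := by
      rcases hR with rfl | rfl
      · have := h4 (l + 2); omega
      · have := h4 (l + 3); omega
    have hVn : ∀ n, |n| ≤ R → V (l + 4) n = V (l + 3) n + lam (l + 3) * s (l + 3) n :=
      fun n hn => hV (l + 3) n (hn.trans hRle)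
    have hT : targets N S (V (l + 3)) (l + 3) = S l (V (l + 3)) ×ˢ {N (l + 2), N (l + 3)} := rfl
    have hmem : ∀ e ∈ S l (V (l + 3)), (e, R) ∈ targets N S (V (l + 3)) (l + 3) := by
      intro e he
      rw [hT, Finset.mem_product]
      exact ⟨he, by rcases hR with rfl | rfl <;> simp⟩
    have hh := P.scales.h_pos l
    have hnn : ∀ c ∈ targets N S (V (l + 3)) (l + 3), 0 ≤ (X c j).im := by
      intro c hc
      have hc2 : 1 ≤ c.2 := by
        rw [hT, Finset.mem_product, Finset.mem_insert, Finset.mem_singleton] at hc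
        have := h4 (l + 2)
        have := h4 (l + 3)
        omega
      rw [(hX c hc).im_eq (by rw [Finset.mem_Icc]; omega)]
      refine mul_nonneg ?_ (Finset.sum_nonneg fun _ _ => sq_nonneg _)
      simpa using hh.le
    have hcard : ((targets N S (V (l + 3)) (l + 3)).card : ℝ) ≤ 48 * (N (l + 2) + 1) := by
      rw [hT, Finset.card_product]
      have c1 : (({N (l + 2), N (l + 3)} : Finset ℤ).card : ℝ) ≤ 2 := by
        exact_mod_cast Finset.card_le_two
      have c2 := (hS l (V (l + 3))).1
      push_cast
      have c3 : (0 : ℝ) ≤ (S l (V (l + 3))).card := by positivity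
      nlinarith
    calc _ ≤ ∑ k ∈ (S l (V (l + 3))).biUnion fun e => Finset.univ.filter fun k => |B.E k - e| ≤ h l,
            B.φ k j ^ 2 := by
          refine Finset.sum_le_sum_of_subset_of_nonneg (fun k hk => ?_) fun _ _ _ => sq_nonneg _
          simpa using hk
      _ ≤ ∑ e ∈ S l (V (l + 3)), ∑ k with |B.E k - e| ≤ h l, B.φ k j ^ 2 :=
          sum_biUnion_le _ _ fun _ => sq_nonneg _
      _ ≤ ∑ e ∈ S l (V (l + 3)), 8 * h l * (X (e, R) j).im := by
          refine Finset.sum_le_sum fun e he => ?_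
          refine B.sum_sq_filter_le_of_isRes hj hR1 (hX _ (hmem e he)) (fun n hn h0 h1 => ?_)
            ?_ ?_ hRi
          · rw [Finset.mem_Icc] at hn
            have hn' : |n| ≤ R := abs_le.2 hn
            rw [← hVn n hn']
            exact hfin (l + 3) n h0 h1 (hn'.trans hRle)
          · rw [← hVn 0 (by rw [abs_zero]; omega)]
            exact hclose l 0 (by rw [abs_zero]; omega)
          · rw [← hVn 1 (by rw [abs_one]; omega)]
            exact hclose l 1 (by rw [abs_one]; omega)
      _ = 8 * h l * ∑ c ∈ (S l (V (l + 3))).image fun e => (e, R), (X c j).im := by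
          rw [← Finset.mul_sum, Finset.sum_image fun x _ y _ hxy => (Prod.ext_iff.1 hxy).1]
      _ ≤ 8 * h l * ∑ c ∈ targets N S (V (l + 3)) (l + 3), (X c j).im := by
          refine mul_le_mul_of_nonneg_left ?_ (by positivity)
          refine Finset.sum_le_sum_of_subset_of_nonneg ?_ fun c hc _ => hnn c hc
          exact Finset.image_subset_iff.2 hmem
      _ ≤ 8 * h l * (20 * (48 * (N (l + 2) + 1)) / lam (l + 3)) := by
          refine mul_le_mul_of_nonneg_left (hsum.trans ?_) (by positivity)
          have := P.lam_pos (l + 3)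
          gcongr
      _ = 7680 * h l * (N (l + 2) + 1) / lam (l + 3) := by ring
      _ ≤ _ := P.weight l

end Params

lemma exists_bump {X : Type*} [PseudoMetricSpace X] (t : Finset ℤ) (x : ℤ → X) {w : ℝ} (hw : 0 < w)
    (hsep : ∀ m ∈ t, ∀ n ∈ t, m ≠ n → w ≤ dist (x m) (x n)) (s : ℤ → ℝ) (hs0 : ∀ n, 0 ≤ s n)
    (hs1 : ∀ n, s n ≤ 1) : ∃ F : X → ℝ, (∀ y, 0 ≤ F y) ∧ (∀ y, F y ≤ 1) ∧
      (∀ y z, |F y - F z| ≤ dist y z / w) ∧ ∀ n ∈ t, F (x n) = s n := by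
  lift w to NNReal using hw.le
  lift s to ℤ → NNReal using hs0
  have hW0 : 0 < w := by exact_mod_cast hw
  have hs1' : ∀ n, s n ≤ 1 := fun n => by exact_mod_cast hs1 n
  set G : X → NNReal := fun y => t.sup fun n => s n - nndist y (x n) / w with hG
  have hlip : ∀ y z, G y ≤ G z + nndist y z / w := by
    intro y z
    refine Finset.sup_le fun n hn => ?_
    have h1 : s n - nndist z (x n) / w ≤ G z :=
      Finset.le_sup (f := fun n => s n - nndist z (x n) / w) hn
    rw [tsub_le_iff_right] at h1 ⊢
    refine h1.trans ?_
    rw [add_assoc, ← add_div]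
    gcongr
    rw [nndist_comm y z]
    exact nndist_triangle z y (x n)
  have hlip' : ∀ y z, (G y : ℝ) ≤ G z + dist y z / w := fun y z => by
    have := hlip y z
    exact_mod_cast this
  refine ⟨fun y => G y, fun y => (G y).coe_nonneg, fun y => ?_, fun y z => ?_, fun n hn => ?_⟩
  · have : G y ≤ 1 := Finset.sup_le fun n _ => tsub_le_self.trans (hs1' n)
    exact_mod_cast this
  · rw [abs_le]
    have h1 := hlip' y z
    have h2 := hlip' z y
    rw [dist_comm] at h2
    constructor <;> linarith
  · have : G (x n) = s n := by
      refine le_antisymm (Finset.sup_le fun m hm => ?_) ?_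
      · by_cases hmn : m = n
        · subst hmn; simp
        · have h1 : s m ≤ nndist (x n) (x m) / w := by
            refine (hs1' m).trans ?_
            rw [le_div_iff₀ hW0, one_mul]
            exact_mod_cast hsep n hn m hm (Ne.symm hmn)
          rw [tsub_eq_zero_of_le h1]
          exact zero_le
      · refine le_trans ?_ (Finset.le_sup (f := fun m => s m - nndist (x n) (x m) / w) hn)
        simp
    exact congrArg NNReal.toReal this

lemma min_one_le_rpow {t γ : ℝ} (ht : 0 ≤ t) (hγ0 : 0 < γ) (hγ1 : γ ≤ 1) : min 1 t ≤ t ^ γ := by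
  rcases le_total 1 t with h | h
  · exact (min_le_left _ _).trans (Real.one_le_rpow h hγ0.le)
  · refine (min_le_right _ _).trans ?_
    conv_lhs => rw [← Real.rpow_one t]
    rcases ht.eq_or_lt with rfl | h0
    · rw [Real.zero_rpow one_ne_zero, Real.zero_rpow hγ0.ne']
    · exact Real.rpow_le_rpow_of_exponent_ge h0 h hγ1

/-- The orbit `k * α`, `0 < |k| ≤ 2 * N`, stays at distance at least `1 / (8 * N)` from zero. -/
def WellSeparated (α : ℝ) (N : ℕ) : Prop :=
  ∀ k : ℤ, k ≠ 0 → |k| ≤ 2 * N → 1 / (8 * N : ℝ) ≤ ‖((k * α : ℝ) : AddCircle (1 : ℝ))‖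

lemma norm_coe_eq (x : ℝ) : ‖((x : ℝ) : AddCircle (1 : ℝ))‖ = |x - round x| := UnitAddCircle.norm_eq

lemma exists_wellSeparated_of_le {α : ℝ} {X : ℕ} (hX : 4 ≤ X) {δ₀ : ℝ} (hδ₀ : 0 < δ₀)
    (hδ : ∀ n : ℕ, 0 < n → n ≤ X → δ₀ ≤ |n * α - round (n * α)|) :
    ∃ N : ℕ, X ≤ 2 * N + 1 ∧ (N : ℝ) ≤ 1 / δ₀ + 1 ∧ WellSeparated α N := by
  classical
  obtain ⟨n₀, hn₀, hmin⟩ := Finset.exists_min_image (Finset.Icc 1 X)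
    (fun n : ℕ => |n * α - round (n * α)|) ⟨1, by simp; omega⟩
  rw [Finset.mem_Icc] at hn₀
  set δ := |n₀ * α - round (n₀ * α)| with hδd
  have hδ0 : δ₀ ≤ δ := hδ n₀ (by omega) hn₀.2
  have hδpos : 0 < δ := hδ₀.trans_le hδ0
  set D := ⌈1 / δ⌉₊ with hD
  have hDpos : 0 < D := Nat.ceil_pos.2 (by positivity)
  have hDlt : 1 / ((D : ℝ) + 1) < δ := by
    rw [div_lt_iff₀ (by positivity)]
    have := Nat.le_ceil (1 / δ)
    rw [div_le_iff₀ hδpos] at this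
    nlinarith
  obtain ⟨k₁, hk₁, hk₁D, hk₁δ⟩ := Real.exists_nat_abs_mul_sub_round_le α hDpos
  have hex : ∃ q : ℕ, 0 < q ∧ |q * α - round (q * α)| < δ := ⟨k₁, hk₁, hk₁δ.trans_lt hDlt⟩
  set q := Nat.find hex with hq
  obtain ⟨hq0, hqδ⟩ := Nat.find_spec hex
  rw [← hq] at hq0 hqδ
  have hqX : X < q := by
    by_contra! h
    exact absurd hqδ (not_lt.2 (hmin q (Finset.mem_Icc.2 ⟨hq0, h⟩)))
  have hqD : q ≤ D := (Nat.find_min' hex ⟨hk₁, hk₁δ.trans_lt hDlt⟩).trans hk₁D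
  have hbelow : ∀ k : ℕ, 0 < k → k < q → δ ≤ |k * α - round (k * α)| := fun k hk hkq => by
    have := Nat.find_min hex hkq
    push Not at this
    exact this hk
  have hdet : 1 ≤ 2 * q * δ := by
    set m : ℤ := q * round (n₀ * α) - n₀ * round (q * α) with hm
    have hmR : (m : ℝ) = n₀ * (q * α - round (q * α)) - q * (n₀ * α - round (n₀ * α)) := by
      rw [hm]; push_cast; ring
    have hn₀q : (n₀ : ℝ) < q := by exact_mod_cast hn₀.2.trans_lt hqX
    have hq0' : (0 : ℝ) < q := by exact_mod_cast hq0
    have hn₀0 : (0 : ℝ) < n₀ := by exact_mod_cast (by omega : 0 < n₀)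
    have hprod : n₀ * |q * α - round (q * α)| < q * δ :=
      calc _ ≤ (n₀ : ℝ) * δ := by gcongr
        _ < _ := by gcongr
    by_cases hm0 : m = 0
    · exfalso
      rw [hm0, Int.cast_zero, eq_comm, sub_eq_zero] at hmR
      have := congrArg abs hmR
      rw [abs_mul, abs_mul, abs_of_pos hq0', abs_of_pos hn₀0, ← hδd] at this
      linarith
    · have h1 : (1 : ℝ) ≤ |(m : ℝ)| := by exact_mod_cast Int.one_le_abs hm0
      refine h1.trans ?_
      rw [hmR]
      refine (abs_sub _ _).trans ?_
      rw [abs_mul, abs_mul, abs_of_pos hq0', abs_of_pos hn₀0, ← hδd]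
      linarith
  refine ⟨(q - 1) / 2, by omega, ?_, fun k hk0 hk => ?_⟩
  · have h1 : (((q - 1) / 2 : ℕ) : ℝ) ≤ D := by exact_mod_cast (by omega : (q - 1) / 2 ≤ D)
    have h2 := Nat.ceil_lt_add_one (show 0 ≤ 1 / δ by positivity)
    have h3 : 1 / δ ≤ 1 / δ₀ := one_div_le_one_div_of_le hδ₀ hδ0
    linarith
  · have hkey : δ ≤ ‖((k * α : ℝ) : AddCircle (1 : ℝ))‖ := by
      obtain ⟨n, rfl | rfl⟩ := k.eq_nat_or_neg
      · rw [Nat.abs_cast] at hk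
        rw [norm_coe_eq]
        exact_mod_cast hbelow n (by omega) (by omega)
      · rw [abs_neg, Nat.abs_cast] at hk
        push_cast
        rw [neg_mul, AddCircle.coe_neg, norm_neg, norm_coe_eq]
        exact hbelow n (by omega) (by omega)
    refine le_trans ?_ hkey
    have hN1 : q ≤ 4 * ((q - 1) / 2) := by omega
    have hN1' : (q : ℝ) ≤ 4 * (((q - 1) / 2 : ℕ) : ℝ) := by exact_mod_cast hN1
    have hq0' : (0 : ℝ) < q := by exact_mod_cast hq0
    rw [div_le_iff₀ (by linarith)]
    nlinarith

lemma exists_wellSeparated {α : ℝ} (hdio : ∃ C : ℝ, 0 < C ∧ ∃ τ : ℝ, 0 < τ ∧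
      ∀ p : ℤ, ∀ q : ℕ, 0 < q → C * (q : ℝ) ^ (-τ) ≤ |α - (p : ℝ) / (q : ℝ)|) :
    ∃ A X₀ : ℕ, ∀ X : ℕ, X₀ ≤ X → ∃ N : ℕ, X ≤ N ∧ N ≤ X ^ A ∧ WellSeparated α N := by
  obtain ⟨C, hC, τ, hτ, hα⟩ := hdio
  refine ⟨⌈τ⌉₊ + 1, ⌈3 ^ τ / C⌉₊ + 4, fun X hX => ?_⟩
  have hX0 : (0 : ℝ) < X := by exact_mod_cast (by omega : 0 < X)
  have hX1 : (1 : ℝ) ≤ X := by exact_mod_cast (by omega : 1 ≤ X)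
  have hY : (0 : ℝ) < ((2 * X + 1 : ℕ) : ℝ) := by positivity
  obtain ⟨N, hN, hN', hsep⟩ := exists_wellSeparated_of_le (α := α) (X := 2 * X + 1) (by omega)
    (δ₀ := C * ((2 * X + 1 : ℕ) : ℝ) ^ (-τ)) (by positivity) fun n hn hnX => by
      have h1 := hα (round (n * α)) n hn
      have hn0 : (0 : ℝ) < n := by exact_mod_cast hn
      have hn1 : (1 : ℝ) ≤ n := by exact_mod_cast hn
      have h2 : |n * α - round (n * α)| = n * |α - round (n * α) / n| := by
        rw [← abs_of_pos hn0, ← abs_mul, abs_of_pos hn0]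
        congr 1
        field_simp
      rw [h2]
      calc C * ((2 * X + 1 : ℕ) : ℝ) ^ (-τ) ≤ C * (n : ℝ) ^ (-τ) := by
            refine mul_le_mul_of_nonneg_left ?_ hC.le
            exact Real.rpow_le_rpow_of_nonpos hn0 (by exact_mod_cast hnX) (by linarith)
        _ ≤ _ := h1
        _ ≤ _ := le_mul_of_one_le_left (abs_nonneg _) hn1
  refine ⟨N, by omega, ?_, hsep⟩
  have h1 : ((2 * X + 1 : ℕ) : ℝ) ≤ 3 * X := by push_cast; linarith
  have h2 : 1 / (C * ((2 * X + 1 : ℕ) : ℝ) ^ (-τ)) ≤ 3 ^ τ / C * (X : ℝ) ^ τ := by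
    rw [Real.rpow_neg hY.le, ← div_eq_mul_inv, one_div_div]
    calc _ ≤ (3 * X : ℝ) ^ τ / C := by gcongr
      _ = _ := by rw [Real.mul_rpow (by norm_num) hX0.le]; ring
  have h3 : 3 ^ τ / C + 1 ≤ (X : ℝ) := by
    have h4 := Nat.le_ceil (3 ^ τ / C)
    have h5 : ((⌈3 ^ τ / C⌉₊ + 4 : ℕ) : ℝ) ≤ X := by exact_mod_cast hX
    push_cast at h5
    linarith
  have h4 : (X : ℝ) ^ τ ≤ (X : ℝ) ^ ⌈τ⌉₊ := by
    rw [← Real.rpow_natCast]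
    exact Real.rpow_le_rpow_of_exponent_le hX1 (Nat.le_ceil τ)
  have h5 : (1 : ℝ) ≤ (X : ℝ) ^ ⌈τ⌉₊ := one_le_pow₀ hX1
  have h6 : 0 < 3 ^ τ / C := by positivity
  have h7 : (N : ℝ) ≤ (X : ℝ) ^ (⌈τ⌉₊ + 1) := by
    rw [pow_succ]
    have h8 : 0 ≤ (X : ℝ) ^ τ := by positivity
    nlinarith
  exact_mod_cast h7

lemma exists_scale_seq {α : ℝ} {A₀ X₀ : ℕ}
    (h : ∀ X : ℕ, X₀ ≤ X → ∃ N : ℕ, X ≤ N ∧ N ≤ X ^ A₀ ∧ WellSeparated α N) {A : ℕ} (hA : A ≠ 0)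
    (B : ℕ) : ∃ N : ℕ → ℕ, B ≤ N 0 ∧ ∀ l, N l ^ A ≤ N (l + 1) ∧ N (l + 1) ≤ N l ^ (A * A₀) ∧
      WellSeparated α (N l) := by
  choose F hF1 hF2 hF3 using h
  let step : {n : ℕ // X₀ ≤ n ∧ WellSeparated α n} → {n : ℕ // X₀ ≤ n ∧ WellSeparated α n} :=
    fun n => ⟨F (n.1 ^ A) (n.2.1.trans (Nat.le_self_pow hA _)),
      (n.2.1.trans (Nat.le_self_pow hA _)).trans (hF1 _ _), hF3 _ _⟩
  let N : ℕ → {n : ℕ // X₀ ≤ n ∧ WellSeparated α n} := fun l =>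
    Nat.rec ⟨F (max B X₀) (le_max_right _ _), (le_max_right _ _).trans (hF1 _ _), hF3 _ _⟩
      (fun _ n => step n) l
  refine ⟨fun l => (N l).1, (le_max_left _ _).trans (hF1 _ _), fun l => ⟨hF1 _ _, ?_, (N l).2.2⟩⟩
  rw [pow_mul]
  exact hF2 _ _

lemma exp_half_le {t : ℝ} (ht0 : 0 ≤ t) (ht1 : t ≤ 1) : Real.exp (t / 2) ≤ 1 + t := by
  have h1 := Real.add_one_le_exp (-(t / 2))
  rw [Real.exp_neg] at h1
  have h2 := Real.exp_pos (t / 2)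
  rw [le_inv_comm₀ (by linarith) h2] at h1
  refine h1.trans ?_
  rw [inv_le_iff_one_le_mul₀ (by linarith)]
  nlinarith

lemma eventually_pow_lt_exp {c C e : ℝ} (hc : 0 < c) (he : 0 < e) (Q : ℕ) :
    ∀ᶠ n : ℕ in Filter.atTop, C * (n : ℝ) ^ Q < Real.exp (c * (n : ℝ) ^ e) := by
  obtain ⟨k, hk⟩ := exists_nat_ge (Q / e)
  rw [div_le_iff₀ he] at hk
  have h1 := (isLittleO_pow_exp_pos_mul_atTop (k := k) hc).def
    (show 0 < 1 / (2 * (|C| + 1)) by positivity)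
  have h2 : Filter.Tendsto (fun n : ℕ => (n : ℝ) ^ e) Filter.atTop Filter.atTop :=
    (tendsto_rpow_atTop he).comp tendsto_natCast_atTop_atTop
  filter_upwards [h2.eventually h1, Filter.eventually_ge_atTop 1] with n hn hn1
  have hn1' : (1 : ℝ) ≤ n := by exact_mod_cast hn1
  have hn0 : (0 : ℝ) ≤ n := by linarith
  rw [Real.norm_of_nonneg (by positivity), Real.norm_of_nonneg (Real.exp_pos _).le] at hn
  have h3 : (n : ℝ) ^ Q ≤ ((n : ℝ) ^ e) ^ k := by
    rw [← Real.rpow_natCast, ← Real.rpow_natCast, ← Real.rpow_mul hn0]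
    exact Real.rpow_le_rpow_of_exponent_le hn1' (by linarith)
  have h4 := Real.exp_pos (c * (n : ℝ) ^ e)
  have h5 : (2 * (|C| + 1)) * (n : ℝ) ^ Q ≤ Real.exp (c * (n : ℝ) ^ e) := by
    have := h3.trans hn
    rw [div_mul_eq_mul_div, one_mul, le_div_iff₀ (by positivity)] at this
    linarith
  have h6 : (1 : ℝ) ≤ (n : ℝ) ^ Q := one_le_pow₀ hn1'
  have h7 := le_abs_self C
  have h8 := abs_nonneg C
  nlinarith

lemma eventually_bits {K d : ℝ} (hK : 0 ≤ K) (hd : 0 < d) (hd1 : d < 1 / 8) (Q : ℕ) :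
    ∀ᶠ n : ℕ in Filter.atTop, ∀ y : ℝ, 1 ≤ y → y ≤ (n : ℝ) ^ Q →
      ((2 * K / (y ^ (-(1 / 2 - d)) / (2 * y)) + 1) * 4 * y ^ 2) ^ 2 <
        (1 + ((n : ℝ) ^ (-(1 / 2 - 3 * d))) ^ 2 / 128) ^ (n / 4) := by
  filter_upwards [eventually_pow_lt_exp (c := 1 / 2048) (C := (16 * K + 4) ^ 2) (e := 6 * d)
    (by norm_num) (by linarith) (8 * Q), Filter.eventually_ge_atTop 8] with n hn hn8 y hy hyn
  have hn0 : (0 : ℝ) < n := by exact_mod_cast (by omega : 0 < n)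
  have hn1 : (1 : ℝ) ≤ n := by exact_mod_cast (by omega : 1 ≤ n)
  have hy0 : 0 < y := by linarith
  have hL : ((2 * K / (y ^ (-(1 / 2 - d)) / (2 * y)) + 1) * 4 * y ^ 2) ^ 2 ≤
      (16 * K + 4) ^ 2 * (n : ℝ) ^ (8 * Q) := by
    have h1 : 2 * K / (y ^ (-(1 / 2 - d)) / (2 * y)) ≤ 4 * K * y ^ 2 := by
      rw [Real.rpow_neg hy0.le]
      have h2 : y ^ (1 / 2 - d) ≤ y := by
        conv_rhs => rw [← Real.rpow_one y]
        exact Real.rpow_le_rpow_of_exponent_le hy (by linarith)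
      have h3 : 0 < y ^ (1 / 2 - d) := by positivity
      have h4 : 2 * K / ((y ^ (1 / 2 - d))⁻¹ / (2 * y)) = 4 * K * (y * y ^ (1 / 2 - d)) := by
        field_simp; ring
      rw [h4, sq]
      gcongr
    have h2 : 1 ≤ y ^ 2 := one_le_pow₀ hy
    have h3 : 0 ≤ 2 * K / (y ^ (-(1 / 2 - d)) / (2 * y)) := by positivity
    calc _ ≤ ((4 * K * y ^ 2 + y ^ 2) * 4 * y ^ 2) ^ 2 := by gcongr
      _ = (16 * K + 4) ^ 2 * y ^ 8 := by ring
      _ ≤ (16 * K + 4) ^ 2 * ((n : ℝ) ^ Q) ^ 8 := by gcongr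
      _ = _ := by rw [← pow_mul, mul_comm Q]
  refine hL.trans_lt (hn.trans_le ?_)
  set t := ((n : ℝ) ^ (-(1 / 2 - 3 * d))) ^ 2 / 128 with ht
  have hsq : ((n : ℝ) ^ (-(1 / 2 - 3 * d))) ^ 2 = (n : ℝ) ^ (6 * d) / n := by
    rw [← Real.rpow_natCast, ← Real.rpow_mul hn0.le, ← Real.rpow_sub_one hn0.ne']
    congr 1
    push_cast
    ring
  have ht0 : 0 ≤ t := by positivity
  have ht1 : t ≤ 1 := by
    rw [ht, hsq, div_div, div_le_one (by positivity)]
    have : (n : ℝ) ^ (6 * d) ≤ n := by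
      conv_rhs => rw [← Real.rpow_one (n : ℝ)]
      exact Real.rpow_le_rpow_of_exponent_le hn1 (by linarith)
    linarith
  calc Real.exp (1 / 2048 * (n : ℝ) ^ (6 * d)) ≤ Real.exp ((n / 4 : ℕ) * (t / 2)) := by
        refine Real.exp_le_exp.2 ?_
        have h1 : (n : ℝ) / 8 ≤ ((n / 4 : ℕ) : ℝ) := by
          rw [div_le_iff₀ (by norm_num)]
          exact_mod_cast (by omega : n ≤ n / 4 * 8)
        calc 1 / 2048 * (n : ℝ) ^ (6 * d) = (n : ℝ) / 8 * (t / 2) := by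
              rw [ht, hsq]; field_simp; ring
          _ ≤ _ := by gcongr
    _ = Real.exp (t / 2) ^ (n / 4) := by rw [Real.exp_nat_mul]
    _ ≤ _ := pow_le_pow_left₀ (Real.exp_pos _).le (exp_half_le ht0 ht1) _

/-- Superexponential growth of the scales. -/
structure Growth (x : ℕ → ℝ) (d : ℝ) : Prop where
  large : 2 ^ 16 ≤ x 0
  sq_le : ∀ l, x l ^ 2 ≤ x (l + 1) ^ d
  pow_le : ∀ l, x l ^ 16 ≤ x (l + 1)

namespace Growth

variable {x : ℕ → ℝ} {d : ℝ}

lemma one_le (hx : Growth x d) (l : ℕ) : 1 ≤ x l := by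
  induction l with
  | zero => exact le_trans (by norm_num) hx.large
  | succ l ih => exact (one_le_pow₀ ih).trans (hx.pow_le l)

lemma two_pow_mul_le (hx : Growth x d) (l : ℕ) : 2 ^ l * x 0 ≤ x l := by
  induction l with
  | zero => simp
  | succ l ih =>
    have h0 := hx.large
    have h1 : x 0 ≤ x l := by
      refine le_trans ?_ ih
      exact le_mul_of_one_le_left (by linarith) (one_le_pow₀ (by norm_num))
    have h2 : x l ^ 2 ≤ x (l + 1) :=
      (pow_le_pow_right₀ (hx.one_le l) (by norm_num)).trans (hx.pow_le l)
    rw [pow_succ]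
    nlinarith

lemma two_pow_le (hx : Growth x d) (l : ℕ) : 2 ^ (l + 16) ≤ x l := by
  refine le_trans ?_ (hx.two_pow_mul_le l)
  rw [pow_add]
  exact mul_le_mul_of_nonneg_left hx.large (by positivity)

lemma two_mul_le (hx : Growth x d) (l : ℕ) : 2 * x l ≤ x (l + 1) := by
  have h1 := hx.two_pow_le l
  have h2 : x l ^ 2 ≤ x (l + 1) :=
    (pow_le_pow_right₀ (hx.one_le l) (by norm_num)).trans (hx.pow_le l)
  have h3 : (2 : ℝ) ≤ 2 ^ (l + 16) := by
    conv_lhs => rw [← pow_one (2 : ℝ)]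
    exact pow_le_pow_right₀ (by norm_num) (by omega)
  nlinarith

lemma two_pow_mul_rpow_le (hx : Growth x d) (hd1 : d ≤ 1) (l : ℕ) :
    2 ^ l * x 0 ^ d ≤ x l ^ d := by
  induction l with
  | zero => simp
  | succ l ih =>
    have h1 : x l ^ d ≤ x l := by
      conv_rhs => rw [← Real.rpow_one (x l)]
      exact Real.rpow_le_rpow_of_exponent_le (hx.one_le l) hd1
    have h2 := hx.sq_le l
    have h3 : (2 : ℝ) ≤ x l := by
      refine le_trans ?_ (hx.two_pow_le l)
      conv_lhs => rw [← pow_one (2 : ℝ)]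
      exact pow_le_pow_right₀ (by norm_num) (by omega)
    have h4 : 0 ≤ x l ^ d := by have := hx.one_le l; positivity
    rw [pow_succ]
    nlinarith

lemma rpow_neg_le (hx : Growth x d) (hd1 : d ≤ 1) (l : ℕ) :
    x l ^ (-d) ≤ (1 / 2) ^ l * x 0 ^ (-d) := by
  have h0 : 0 < x l := by have := hx.one_le l; linarith
  have h1 : 0 < x 0 := by have := hx.one_le 0; linarith
  have h2 : (0 : ℝ) < x 0 ^ d := by positivity
  rw [Real.rpow_neg h0.le, Real.rpow_neg h1.le, one_div, inv_pow, ← mul_inv]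
  exact inv_anti₀ (by positivity) (hx.two_pow_mul_rpow_le hd1 l)

lemma rpow_neg_eighth_le (hx : Growth x d) (m i : ℕ) :
    x (m + 1 + i) ^ (-(1 / 8 : ℝ)) ≤ (x m)⁻¹ * (1 / 2) ^ (i + 1) := by
  have h0 : ∀ l, 0 < x l := fun l => by have := hx.one_le l; linarith
  have h1 : 2 ^ i * x m ≤ x (m + i) := by
    induction i with
    | zero => simp
    | succ i ih =>
      have := hx.two_mul_le (m + i)
      rw [← add_assoc, pow_succ]
      linarith
  have h2 : x (m + i) ^ 2 ≤ x (m + 1 + i) ^ (1 / 8 : ℝ) := by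
    rw [show m + 1 + i = m + i + 1 by ring]
    calc x (m + i) ^ 2 = (x (m + i) ^ 16) ^ (1 / 8 : ℝ) := by
          rw [← Real.rpow_natCast, ← Real.rpow_natCast, ← Real.rpow_mul (h0 _).le]
          norm_num
      _ ≤ _ := Real.rpow_le_rpow (by have := h0 (m + i); positivity) (hx.pow_le _) (by norm_num)
  have h3 : x m * 2 ^ (i + 1) ≤ x (m + i) ^ 2 := by
    have h4 : (2 : ℝ) ≤ x (m + i) := by
      refine le_trans ?_ (hx.two_pow_le (m + i))
      conv_lhs => rw [← pow_one (2 : ℝ)]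
      exact pow_le_pow_right₀ (by norm_num) (by omega)
    rw [pow_succ]
    nlinarith
  rw [Real.rpow_neg (h0 _).le, one_div (2 : ℝ), inv_pow, ← mul_inv]
  exact inv_anti₀ (mul_pos (h0 m) (by positivity)) (h3.trans h2)

end Growth

lemma Growth.params {N : ℕ → ℕ} {d K : ℝ} {Q : ℕ} (hx : Growth (fun l => (N l : ℝ)) d)
    (hd : 0 < d) (hd1 : d < 1 / 8) (hQ : ∀ l, N (l + 3) ≤ N l ^ Q)
    (hbits : ∀ n : ℕ, N 0 ≤ n → ∀ y : ℝ, 1 ≤ y → y ≤ (n : ℝ) ^ Q →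
      ((2 * K / (y ^ (-(1 / 2 - d)) / (2 * y)) + 1) * 4 * y ^ 2) ^ 2 <
        (1 + ((n : ℝ) ^ (-(1 / 2 - 3 * d))) ^ 2 / 128) ^ (n / 4)) :
    Params (fun l => (N l : ℤ)) (fun l => N l / 4) (fun l => (N l : ℝ) ^ (-(1 / 2 - 3 * d)))
      (fun l => (N (l + 3) : ℝ) ^ (-(1 / 2 - d))) (fun l => N (l + 3))
      (fun l => (N (l + 3) : ℝ) ^ (-(1 / 2 - d)) / (2 * N (l + 3))) K := by
  have h1 : ∀ l, (1 : ℝ) ≤ N l := hx.one_le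
  have h0 : ∀ l, (0 : ℝ) < N l := fun l => by linarith [h1 l]
  have hbig : ∀ l, 65536 ≤ N l := fun l => by
    have h2 := hx.two_pow_le l
    have h3 : (65536 : ℝ) ≤ 2 ^ (l + 16) :=
      calc (65536 : ℝ) = 2 ^ 16 := by norm_num
        _ ≤ _ := pow_le_pow_right₀ (by norm_num) (by omega)
    have h4 : ((65536 : ℕ) : ℝ) ≤ N l := by push_cast; exact h3.trans h2
    exact_mod_cast h4
  have h2N : ∀ l, 2 * N l ≤ N (l + 1) := fun l => by
    have := hx.two_mul_le l
    exact_mod_cast this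
  have hNle : ∀ l, (N l : ℝ) ≤ N (l + 1) := fun l => by
    have := h2N l
    exact_mod_cast (by omega : N l ≤ N (l + 1))
  have hN0 : ∀ l, N 0 ≤ N l := fun l => by
    induction l with
    | zero => exact le_rfl
    | succ l ih => have := h2N l; omega
  have hh : ∀ l, (0 : ℝ) < (N l : ℝ) ^ (-(1 / 2 - d)) := fun l => Real.rpow_pos_of_pos (h0 l) _
  have hsq : ∀ l, ((N l : ℝ) ^ (-(1 / 2 - d))) ^ 2 * N l = (N l : ℝ) ^ (2 * d) := fun l => by
    rw [← Real.rpow_natCast, ← Real.rpow_mul (h0 l).le, ← Real.rpow_add_one (h0 l).ne']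
    congr 1
    push_cast
    ring
  have h2d : ∀ l, (N l : ℝ) ^ 2 ≤ (N (l + 1) : ℝ) ^ (2 * d) := fun l =>
    (hx.sq_le l).trans (Real.rpow_le_rpow_of_exponent_le (h1 _) (by linarith))
  refine ⟨⟨fun l => ?_, fun l => ?_, fun l => ?_, fun l => h1 _, fun l => hNle _, fun l => ?_,
    fun l => ?_, fun l => hh _, fun l => le_rfl, fun l => ?_⟩, fun l => ?_, fun l => ?_,
    fun l => ?_, fun l => ?_, fun l => ?_, fun l n => ?_, fun l => ?_⟩
  · have := hbig l; push_cast; omega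
  · have := hbig l; push_cast; omega
  · have := hbig l; have := h2N l; push_cast; omega
  · have := hh (l + 3); have := h0 (l + 3); positivity
  · have a1 := h0 (l + 3)
    have a2 := hh (l + 3)
    have a3 := hNle (l + 3)
    have a4 : (N (l + 1 + 3) : ℝ) ^ (-(1 / 2 - d)) ≤ (N (l + 3) : ℝ) ^ (-(1 / 2 - d)) :=
      Real.rpow_le_rpow_of_nonpos a1 (by rw [show l + 1 + 3 = l + 3 + 1 by ring]; exact a3)
        (by linarith)
    rw [show l + 1 + 3 = l + 3 + 1 by ring] at a4 ⊢
    gcongr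
  · have a1 := h0 (l + 3)
    have a2 : (N (l + 3) : ℝ) ≤ (N (l + 3) : ℝ) ^ 2 * ((N (l + 3) : ℝ) ^ (-(1 / 2 - d))) ^ 2 := by
      have a3 : (1 : ℝ) ≤ (N (l + 3) : ℝ) ^ (2 * d) := Real.one_le_rpow (h1 _) (by linarith)
      rw [← hsq] at a3
      nlinarith
    have a4 := hx.two_pow_le (l + 3)
    calc 16 / ((N (l + 3) : ℝ) ^ 2 * ((N (l + 3) : ℝ) ^ (-(1 / 2 - d))) ^ 2)
        ≤ 16 / 2 ^ (l + 3 + 16) := by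
          gcongr
          exact a4.trans a2
      _ = (2 ^ 11)⁻¹ * (2 ^ (l + 4))⁻¹ := by
          rw [show l + 3 + 16 = (l + 4) + 11 + 4 by ring, pow_add, pow_add]
          field_simp
          norm_num
      _ = (2 ^ 11)⁻¹ * (1 / 2) ^ (l + 4) := by rw [one_div, inv_pow]
      _ ≤ _ := mul_le_of_le_one_left (by positivity) (by norm_num)
  · exact Real.rpow_pos_of_pos (h0 l) _
  · exact Real.rpow_le_one_of_one_le_of_nonpos (h1 l) (by linarith)
  · have := hh (l + 3); have := h0 (l + 3); positivity
  · exact hbits (N l) (hN0 l) _ (h1 _) (by exact_mod_cast hQ l)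
  · have a1 := h0 (l + 3)
    have a2 : (N (l + 3) : ℝ) ^ (-(1 / 2 - d)) / (N (l + 3) : ℝ) ^ (-(1 / 2 - 3 * d)) =
        ((N (l + 3) : ℝ) ^ (2 * d))⁻¹ := by
      rw [← Real.rpow_sub a1, ← Real.rpow_neg a1.le]
      congr 1
      ring
    have a3 := h2d (l + 2)
    have a4 := h1 (l + 2)
    have a5 := hx.two_pow_le (l + 2)
    have a6 := h0 (l + 2)
    push_cast
    calc 7680 * (N (l + 3) : ℝ) ^ (-(1 / 2 - d)) * ((N (l + 2) : ℝ) + 1) /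
          (N (l + 3) : ℝ) ^ (-(1 / 2 - 3 * d))
        = 7680 * ((N (l + 2) : ℝ) + 1) * ((N (l + 3) : ℝ) ^ (2 * d))⁻¹ := by rw [← a2]; ring
      _ ≤ 7680 * ((N (l + 2) : ℝ) + N (l + 2)) * ((N (l + 2) : ℝ) ^ 2)⁻¹ := by
          gcongr
      _ = 15360 * (N (l + 2) : ℝ)⁻¹ := by field_simp; norm_num
      _ ≤ 15360 * (2 ^ (l + 2 + 16))⁻¹ := by gcongr
      _ = 15360 / 2 ^ 18 * (1 / 2) ^ l := by
          rw [show l + 2 + 16 = l + 18 by ring, pow_add, one_div, inv_pow, mul_inv]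
          ring
      _ ≤ _ := mul_le_of_le_one_left (by positivity) (by norm_num)
  · have a1 := h0 (l + 3)
    calc ∑ i ∈ Finset.range n, (N (l + 4 + i) : ℝ) ^ (-(1 / 2 - 3 * d))
        ≤ ∑ i ∈ Finset.range n, (N (l + 3) : ℝ)⁻¹ * (1 / 2) ^ (i + 1) := by
          refine Finset.sum_le_sum fun i _ => le_trans ?_ (hx.rpow_neg_eighth_le (l + 3) i)
          exact Real.rpow_le_rpow_of_exponent_le (h1 _) (by linarith)
      _ = (N (l + 3) : ℝ)⁻¹ * (1 - (1 / 2) ^ n) := by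
          rw [← Finset.mul_sum]
          congr 1
          induction n with
          | zero => simp
          | succ n ih => rw [Finset.sum_range_succ, ih]; ring
      _ ≤ (N (l + 3) : ℝ)⁻¹ := by
          refine mul_le_of_le_one_right (by positivity) ?_
          have : (0 : ℝ) ≤ (1 / 2) ^ n := by positivity
          linarith
      _ ≤ _ := by
          rw [← Real.rpow_neg_one]
          exact Real.rpow_le_rpow_of_exponent_le (h1 _) (by linarith)
  · have a1 := h0 (l + 3)
    have a2 := hsq (l + 3)
    have a3 := h2d (l + 2)
    have a4 : (65536 : ℝ) ≤ N (l + 2) := by exact_mod_cast hbig (l + 2)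
    have a5 : (65536 : ℝ) ≤ N (l + 3) := by exact_mod_cast hbig (l + 3)
    push_cast
    have a6 : (0 : ℝ) < ((N (l + 3) : ℝ) ^ (-(1 / 2 - d))) ^ 2 := by have := hh (l + 3); positivity
    rw [show l + 2 + 1 = l + 3 by ring] at a3
    nlinarith

lemma exists_params {α : ℝ} (hdio : ∃ C : ℝ, 0 < C ∧ ∃ τ : ℝ, 0 < τ ∧
      ∀ p : ℤ, ∀ q : ℕ, 0 < q → C * (q : ℝ) ^ (-τ) ≤ |α - (p : ℝ) / (q : ℝ)|) {d K ε : ℝ}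
    (hd : 0 < d) (hd1 : d < 1 / 8) (hK : 0 ≤ K) (hε : 0 < ε) :
    ∃ (N : ℕ → ℕ) (h β η : ℕ → ℝ), (∀ l, WellSeparated α (N l)) ∧ (∀ l, 1 ≤ N l) ∧
      Params (fun l => (N l : ℤ)) (fun l => N l / 4) (fun l => (N l : ℝ) ^ (-(1 / 2 - 3 * d)))
        h β η K ∧ ∃ u : ℝ, 0 < u ∧ u < ε ∧ ∀ l, (N l : ℝ) ^ (-d) ≤ (1 / 2) ^ l * u := by
  obtain ⟨A₀, X₀, hX⟩ := exists_wellSeparated hdio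
  obtain ⟨A, hA⟩ := exists_nat_ge (max 16 (2 / d))
  have hA16 : (16 : ℝ) ≤ A := (le_max_left _ _).trans hA
  have hA16' : 16 ≤ A := by exact_mod_cast hA16
  have hAd : 2 ≤ A * d := by
    have := (le_max_right _ _).trans hA
    rwa [div_le_iff₀ hd] at this
  set Q := (A * A₀) ^ 3 with hQ
  obtain ⟨B₁, hB₁⟩ := Filter.eventually_atTop.1 (eventually_bits hK hd hd1 Q)
  have hsmall : ∀ᶠ n : ℕ in Filter.atTop, (n : ℝ) ^ (-d) < ε :=
    ((tendsto_rpow_neg_atTop hd).comp tendsto_natCast_atTop_atTop).eventually_lt_const hε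
  obtain ⟨B₂, hB₂⟩ := Filter.eventually_atTop.1 hsmall
  obtain ⟨N, hN0, hN⟩ := exists_scale_seq hX (show A ≠ 0 by omega) (max (2 ^ 16) (max B₁ B₂))
  have hN1 : ∀ l, 1 ≤ N l := by
    intro l
    induction l with
    | zero => exact le_trans (by norm_num) ((le_max_left _ _).trans hN0)
    | succ l ih => exact (Nat.one_le_pow _ _ ih).trans (hN l).1
  have hN1' : ∀ l, (1 : ℝ) ≤ N l := fun l => by exact_mod_cast hN1 l
  have hgrow : ∀ l, (N l : ℝ) ^ A ≤ N (l + 1) := fun l => by exact_mod_cast (hN l).1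
  have hx : Growth (fun l => (N l : ℝ)) d := by
    refine ⟨?_, fun l => ?_, fun l => ?_⟩
    · exact_mod_cast (le_max_left _ _).trans hN0
    · have h0 : (0 : ℝ) ≤ N l := by positivity
      calc (N l : ℝ) ^ 2 = (N l : ℝ) ^ (2 : ℝ) := by norm_cast
        _ ≤ (N l : ℝ) ^ (A * d) := Real.rpow_le_rpow_of_exponent_le (hN1' l) hAd
        _ = ((N l : ℝ) ^ A) ^ d := by rw [Real.rpow_mul h0, Real.rpow_natCast]
        _ ≤ _ := Real.rpow_le_rpow (by positivity) (hgrow l) hd.le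
    · exact (pow_le_pow_right₀ (hN1' l) hA16').trans (hgrow l)
  have hP := hx.params (K := K) (Q := Q) hd hd1 (fun l => ?_) fun n hn => hB₁ n
    (((le_max_left _ _).trans (le_max_right _ _)).trans (hN0.trans hn))
  · refine ⟨N, _, _, _, fun l => (hN l).2.2, hN1, hP, (N 0 : ℝ) ^ (-d), ?_, ?_,
      hx.rpow_neg_le (by linarith)⟩
    · exact Real.rpow_pos_of_pos (by linarith [hN1' 0]) _
    · exact hB₂ _ (((le_max_right _ _).trans (le_max_right _ _)).trans hN0)
  · rw [hQ]
    calc N (l + 3) ≤ N (l + 2) ^ (A * A₀) := (hN (l + 2)).2.1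
      _ ≤ (N (l + 1) ^ (A * A₀)) ^ (A * A₀) := Nat.pow_le_pow_left (hN (l + 1)).2.1 _
      _ ≤ ((N l ^ (A * A₀)) ^ (A * A₀)) ^ (A * A₀) :=
        Nat.pow_le_pow_left (Nat.pow_le_pow_left (hN l).2.1 _) _
      _ = _ := by rw [← pow_mul, ← pow_mul]; congr 1; ring

lemma Params.exists_perturbation {N : ℕ → ℕ} {k : ℕ → ℕ} {lam h β η : ℕ → ℝ} {K : ℝ}
    (P : Params (fun l => (N l : ℤ)) k lam h β η K) (hK : 0 ≤ K) {α ω : ℝ} {m : ℕ}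
    (hsep : WellSeparated α (N m)) (hN : 1 ≤ N m) (S : ℕ → (ℤ → ℝ) → Finset ℝ) (V : ℤ → ℝ)
    {γ : ℝ} (hγ0 : 0 < γ) (hγ1 : γ ≤ 1) :
    ∃ (F : AddCircle (1 : ℝ) → ℝ) (s : ℤ → ℝ),
      Stage V s K (lam m) (h (m - 3)) (η m) (β m) (N m - 2 * k m + 1) (N m)
        (targets (fun l => (N l : ℤ)) S V m) ∧ (∀ y, |F y| ≤ lam m) ∧
      (∀ y z, |F y - F z| ≤ lam m * (8 * N m : ℝ) ^ γ * dist y z ^ γ) ∧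
      ∀ n : ℤ, |n| ≤ N m → F ((ω + n * α : ℝ) : AddCircle (1 : ℝ)) = lam m * s n := by
  obtain ⟨s, hs⟩ := P.exists_stage hK S V m
  have hN0 : (0 : ℝ) < 8 * N m := by
    have : (1 : ℝ) ≤ N m := by exact_mod_cast hN
    linarith
  have hlam := P.lam_pos m
  obtain ⟨F, hF0, hF1, hFl, hFx⟩ := exists_bump (Finset.Icc (-(N m : ℤ)) (N m))
    (fun n : ℤ => ((ω + n * α : ℝ) : AddCircle (1 : ℝ))) (w := 1 / (8 * N m)) (by positivity)
    (fun i hi j hj hij => by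
      rw [Finset.mem_Icc] at hi hj
      have := hsep (i - j) (sub_ne_zero.2 hij) (by rw [abs_le]; omega)
      rwa [dist_eq_norm, ← AddCircle.coe_sub,
        show ω + i * α - (ω + j * α) = ((i - j : ℤ) : ℝ) * α by push_cast; ring])
    s hs.nonneg hs.le_one
  refine ⟨fun y => lam m * F y, s, hs, fun y => ?_, fun y z => ?_, fun n hn => ?_⟩
  · rw [abs_mul, abs_of_pos hlam, abs_of_nonneg (hF0 y)]
    exact mul_le_of_le_one_right hlam.le (hF1 y)
  · rw [← mul_sub, abs_mul, abs_of_pos hlam, mul_assoc, ← Real.mul_rpow hN0.le dist_nonneg]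
    refine mul_le_mul_of_nonneg_left (le_trans ?_ (min_one_le_rpow (by positivity) hγ0 hγ1)) hlam.le
    refine le_min ?_ ((hFl y z).trans_eq ?_)
    · rw [abs_le]
      constructor <;> linarith [hF0 y, hF0 z, hF1 y, hF1 z]
    · rw [one_div, div_inv_eq_mul, mul_comm]
  · exact congrArg (lam m * ·) (hFx n (Finset.mem_Icc.2 (abs_le.1 hn)))

/-- If each perturbation `F m` is bounded by `(1 / 2) ^ m * u` in the Hölder norm whatever
function it perturbs, then the iterated perturbations of `f` converge in the Hölder norm. -/
lemma exists_limit_of_perturbation {X : Type*} [PseudoMetricSpace X]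
    (F : ℕ → (X → ℝ) → X → ℝ) (f : X → ℝ) {u v γ : ℝ}
    (hF : ∀ m g y, |F m g y| ≤ (1 / 2) ^ m * u)
    (hFγ : ∀ m g y z, |F m g y - F m g z| ≤ (1 / 2) ^ m * (v * dist y z ^ γ)) :
    ∃ (G : ℕ → X → ℝ) (g : X → ℝ), (∀ m y, G (m + 1) y = G m y + F m (G m) y) ∧
      (∀ y, Filter.Tendsto (fun m => G m y) Filter.atTop (nhds (g y))) ∧
      (∀ y, |f y - g y| ≤ 2 * u) ∧
      ∀ y z, |(f y - g y) - (f z - g z)| ≤ 2 * v * dist y z ^ γ := by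
  let G : ℕ → X → ℝ := fun m => Nat.rec f (fun m g y => g y + F m g y) m
  have hG : ∀ m y, G (m + 1) y = G m y + F m (G m) y := fun _ _ => rfl
  have hgeo : ∀ c : ℝ, HasSum (fun m : ℕ => (1 / 2) ^ m * c) (2 * c) := fun c =>
    hasSum_geometric_two.mul_right c
  have hsum : ∀ y, Summable fun m => F m (G m) y := fun y =>
    .of_norm_bounded (hgeo u).summable fun m => hF m _ y
  have hGs : ∀ m y, G m y = f y + ∑ i ∈ Finset.range m, F i (G i) y := by
    intro m y
    induction m with
    | zero => simp [G]
    | succ m ih => rw [hG, ih, Finset.sum_range_succ, add_assoc]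
  refine ⟨G, fun y => f y + ∑' m, F m (G m) y, hG, fun y => ?_, fun y => ?_, fun y z => ?_⟩
  · simp only [hGs]
    exact (hsum y).hasSum.tendsto_sum_nat.const_add _
  · rw [sub_add_cancel_left, abs_neg, ← Real.norm_eq_abs]
    exact tsum_of_norm_bounded (hgeo u) fun m => hF m _ y
  · rw [sub_add_cancel_left, sub_add_cancel_left, neg_sub_neg, ← (hsum z).tsum_sub (hsum y),
      mul_assoc, dist_comm, ← Real.norm_eq_abs]
    exact tsum_of_norm_bounded (hgeo _) fun m => hFγ m _ z y

lemma IsHolder.exists_bound {γ : ℝ} (hγ : 0 < γ) {f : AddCircle (1 : ℝ) → ℝ} (hf : IsHolder γ f) :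
    ∃ M, 0 ≤ M ∧ ∀ x, |f x| ≤ M := by
  obtain ⟨C, hC, hf⟩ := hf
  refine ⟨|f 0| + C, by positivity, fun x => ?_⟩
  have h1 : dist x 0 ≤ 1 := by
    rw [dist_zero_right]
    have := AddCircle.norm_le_half_period (1 : ℝ) (x := x) one_ne_zero
    rw [abs_one] at this
    linarith
  have h2 : dist x 0 ^ γ ≤ 1 := Real.rpow_le_one dist_nonneg h1 hγ.le
  have h3 := hf x 0
  have h4 := abs_add_le (f 0) (f x - f 0)
  rw [add_sub_cancel] at h4
  nlinarith

/-- Suppose `α` is Diophantine: there are `C > 0` and `τ > 0` with `|α - p/q| ≥ C q^{-τ}`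
for all integers `p` and all positive integers `q`. Then for every phase `ω` and every
`γ ∈ (0, 1/2)`, the set of `γ`-Hölder functions `f` for which the Schrödinger operator with
potential `V(n) = f(ω + nα)` has pure point spectrum is dense in `C^γ(𝕋,ℝ)` with respect to
the Hölder norm `‖f‖_γ = ‖f‖_∞ + sup_{x≠y} |f(x)-f(y)|/dist(x,y)^γ`; density is expressed by
approximating an arbitrary `γ`-Hölder `f` to precision `ε` in the `‖·‖_γ` norm. -/
theorem dense_purePoint_holder (α : ℝ) (hirr : Irrational α)
    (hdio : ∃ C : ℝ, 0 < C ∧ ∃ τ : ℝ, 0 < τ ∧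
      ∀ p : ℤ, ∀ q : ℕ, 0 < q → C * (q : ℝ) ^ (-τ) ≤ |α - (p : ℝ) / (q : ℝ)|)
    (ω : ℝ) (γ : ℝ) (hγ0 : 0 < γ) (hγ : γ < 1/2)
    (f : AddCircle (1:ℝ) → ℝ) (hf : IsHolder γ f) (ε : ℝ) (hε : 0 < ε) :
    ∃ g : AddCircle (1:ℝ) → ℝ, IsHolder γ g ∧
      (∃ C₁ C₂ : ℝ, 0 ≤ C₁ ∧ 0 ≤ C₂ ∧ C₁ + C₂ < ε ∧
        (∀ x, |f x - g x| ≤ C₁) ∧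
        (∀ x y, |(f x - g x) - (f y - g y)| ≤ C₂ * dist x y ^ γ)) ∧
      HasPurePointSpectrum (fun n : ℤ => g ((ω + n * α : ℝ) : AddCircle (1:ℝ))) := by
  obtain ⟨M, hM0, hM⟩ := hf.exists_bound hγ0
  obtain ⟨d, hd⟩ : ∃ d, d = (1 / 2 - γ) / 4 := ⟨_, rfl⟩
  obtain ⟨N, h, β, η, hsep, hN1, P, u, hu0, huε, hu⟩ := exists_params hdio
    (d := d) (K := 2 + (M + ε)) (ε := ε / 18) (by linarith) (by linarith) (by linarith)
    (by positivity)
  obtain ⟨S, hS⟩ := P.scales.exists_isResonanceSet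
  choose F s hst hF hFγ hFs using fun m (g : AddCircle (1 : ℝ) → ℝ) =>
    P.exists_perturbation (by linarith) (ω := ω) (hsep m) (hN1 m) S
      (fun n => g ((ω + n * α : ℝ) : AddCircle (1 : ℝ))) hγ0 (by linarith)
  have hN1' : ∀ l, (1 : ℝ) ≤ N l := fun l => by exact_mod_cast hN1 l
  obtain ⟨G, g, hG, hlim, hfg, hfgγ⟩ := exists_limit_of_perturbation F f (u := u) (v := 8 * u)
    (γ := γ) (fun m g y => (hF m g y).trans (le_trans
      (Real.rpow_le_rpow_of_exponent_le (hN1' m) (by linarith)) (hu m))) fun m g y z => by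
      refine (hFγ m g y z).trans ?_
      have hN0 : (0 : ℝ) < N m := by linarith [hN1' m]
      have h1 : (8 : ℝ) ^ γ ≤ 8 := by
        conv_rhs => rw [← Real.rpow_one 8]
        exact Real.rpow_le_rpow_of_exponent_le (by norm_num) (by linarith)
      have h2 : (N m : ℝ) ^ (-(1 / 2 - 3 * d)) * (N m : ℝ) ^ γ = (N m : ℝ) ^ (-d) := by
        rw [← Real.rpow_add hN0]
        congr 1
        linarith
      rw [← mul_assoc]
      refine mul_le_mul_of_nonneg_right ?_ (by positivity)
      calc _ = (8 : ℝ) ^ γ * (N m : ℝ) ^ (-d) := by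
            rw [← h2, Real.mul_rpow (by norm_num) hN0.le]; ring
        _ ≤ 8 * ((1 / 2) ^ m * u) := mul_le_mul h1 (hu m) (by positivity) (by norm_num)
        _ = _ := by ring
  have hgf : ∀ y z, |g y - g z| ≤ |f y - f z| + |(f y - g y) - (f z - g z)| := fun y z => by
    have := abs_sub (f y - f z) ((f y - g y) - (f z - g z))
    rwa [show f y - f z - (f y - g y - (f z - g z)) = g y - g z by ring] at this
  refine ⟨g, ?_, ⟨2 * u, 2 * (8 * u), by positivity, by positivity, by linarith, hfg, hfgγ⟩, ?_⟩
  · obtain ⟨C, hC, hf⟩ := hf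
    refine ⟨C + 2 * (8 * u), by positivity, fun y z => (hgf y z).trans ?_⟩
    rw [add_mul]
    exact add_le_add (hf y z) (hfgγ y z)
  · refine P.hasPurePointSpectrum hS
      (V := fun m n => G m ((ω + n * α : ℝ) : AddCircle (1 : ℝ))) (s := fun m => s m (G m))
      (fun n => ?_) (fun m n hn => ?_) (fun n => hlim _) (fun m => hst m (G m))
    · have h1 := hfg ((ω + n * α : ℝ) : AddCircle (1 : ℝ))
      have h2 := hM ((ω + n * α : ℝ) : AddCircle (1 : ℝ))
      rw [abs_le] at h1 h2 ⊢
      constructor <;> linarith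
    · rw [hG, hFs m (G m) n hn]
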